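/- arXiv:0908.3274 — 2 statements merged into one kernel-verified Lean document; each statement's English description precedes it below -/
import Mathlib

section
/- (Solution of the Björling problem: uniqueness.) Let J ⊆ ℝ be an open interval, f₀ : J → su(2) a regular real analytic curve, v : J → su(2) a nonvanishing real analytic vector field with ⟨v, f₀′⟩ = 0, and H ≠ 0 real. Suppose f : Σ → su(2) and f̃ : Σ̃ → su(2) are two smooth conformal immersions of constant mean curvature H, defined on open sets Σ, Σ̃ ⊆ ℂ containing J × {0}, such that f(x,0) = f̃(x,0) = f₀(x) for all x ∈ J and both ∂_y f(x,0) and ∂_y f̃(x,0) are positive scalar multiples of v(x) for each x ∈ J. Then for every x₀ ∈ J there exist ε, δ > 0 such that f = f̃ on the neighbourhood (x₀-ε, x₀+ε) × (-δ, δ) of (x₀,0). -/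
open Matrix Complex

noncomputable section

attribute [local instance] Matrix.linftyOpNormedAddCommGroup Matrix.linftyOpNormedSpace
  Matrix.linftyOpNormedRing Matrix.linftyOpNormedAlgebra

/-- The space of 2×2 complex matrices. -/
abbrev M2 : Type := Matrix (Fin 2) (Fin 2) ℂ

/-- Basis vector `e₁` of su(2). -/
def e1 : M2 := !![0, -Complex.I; -Complex.I, 0]

/-- Basis vector `e₂` of su(2). -/
def e2 : M2 := !![0, 1; -1, 0]

/-- Basis vector `e₃` of su(2). -/
def e3 : M2 := !![Complex.I, 0; 0, -Complex.I]

/-- The inner product `⟨X,Y⟩ = -(1/2) tr (XY)` identifying su(2) with E³. -/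
def ip (X Y : M2) : ℂ := -(1/2 : ℂ) * (X * Y).trace

/-- Partial derivative in the `x`-direction. -/
def px (f : ℂ → M2) (z : ℂ) : M2 := fderiv ℝ f z 1

/-- Partial derivative in the `y`-direction. -/
def py (f : ℂ → M2) (z : ℂ) : M2 := fderiv ℝ f z Complex.I

/-- Wirtinger derivative `∂_z = (1/2)(∂_x - i ∂_y)`. -/
def dz (f : ℂ → M2) (z : ℂ) : M2 := (2:ℂ)⁻¹ • (px f z - Complex.I • py f z)

/-- Wirtinger derivative `∂_z̄ = (1/2)(∂_x + i ∂_y)`. -/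
def dzb (f : ℂ → M2) (z : ℂ) : M2 := (2:ℂ)⁻¹ • (px f z + Complex.I • py f z)

/-- `x`-derivative of a real-valued function on ℂ. -/
def pxR (u : ℂ → ℝ) (z : ℂ) : ℝ := fderiv ℝ u z 1

/-- `y`-derivative of a real-valued function on ℂ. -/
def pyR (u : ℂ → ℝ) (z : ℂ) : ℝ := fderiv ℝ u z Complex.I

/-- Wirtinger derivative `u_z` of a real-valued function. -/
def dzR (u : ℂ → ℝ) (z : ℂ) : ℂ := (2:ℂ)⁻¹ * ((pxR u z : ℂ) - Complex.I * (pyR u z : ℂ))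

/-- Wirtinger derivative `u_z̄` of a real-valued function. -/
def dzbR (u : ℂ → ℝ) (z : ℂ) : ℂ := (2:ℂ)⁻¹ * ((pxR u z : ℂ) + Complex.I * (pyR u z : ℂ))

/-- `x`-derivative of a complex-valued function on ℂ. -/
def pxC (q : ℂ → ℂ) (z : ℂ) : ℂ := fderiv ℝ q z 1

/-- `y`-derivative of a complex-valued function on ℂ. -/
def pyC (q : ℂ → ℂ) (z : ℂ) : ℂ := fderiv ℝ q z Complex.I

/-- Wirtinger derivative `∂_z` of a complex-valued function. -/
def dzC (q : ℂ → ℂ) (z : ℂ) : ℂ := (2:ℂ)⁻¹ * (pxC q z - Complex.I * pyC q z)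

/-- Wirtinger derivative `∂_z̄` of a complex-valued function. -/
def dzbC (q : ℂ → ℂ) (z : ℂ) : ℂ := (2:ℂ)⁻¹ * (pxC q z + Complex.I * pyC q z)

/-- `IsCMCImmersion S H f` says that `f` is a smooth su(2)-valued conformal immersion on
`S` which has constant mean curvature `H`: there are a smooth conformal factor `u` and a
smooth `SU(2)` coordinate frame `F` (so that `N = F e₃ F⁻¹` is the unit normal) with
`(1/8) e^{-2u} ⟨f_xx + f_yy, N⟩ = H`. -/
def IsCMCImmersion (S : Set ℂ) (H : ℝ) (f : ℂ → M2) : Prop :=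
  ContDiffOn ℝ (⊤ : ℕ∞) f S ∧
  (∀ z ∈ S, (f z)ᴴ = -(f z) ∧ (f z).trace = 0) ∧
  ∃ u : ℂ → ℝ, ContDiffOn ℝ (⊤ : ℕ∞) u S ∧
    (∀ z ∈ S,
      ip (px f z) (px f z) = ((4 * Real.exp (2 * u z) : ℝ) : ℂ) ∧
      ip (py f z) (py f z) = ((4 * Real.exp (2 * u z) : ℝ) : ℂ) ∧
      ip (px f z) (py f z) = 0) ∧
    ∃ F : ℂ → M2, ContDiffOn ℝ (⊤ : ℕ∞) F S ∧
      ∀ z ∈ S, (F z)ᴴ * F z = 1 ∧ (F z).det = 1 ∧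
        F z * e1 * (F z)⁻¹ = (((2 * Real.exp (u z))⁻¹ : ℝ) : ℂ) • px f z ∧
        F z * e2 * (F z)⁻¹ = (((2 * Real.exp (u z))⁻¹ : ℝ) : ℂ) • py f z ∧
        ip (px (px f) z + py (py f) z) (F z * e3 * (F z)⁻¹)
          = ((8 * Real.exp (2 * u z) * H : ℝ) : ℂ)


def psi (z : ℝ × ℝ) : ℝ := -z.2 + 2 * z.2 ^ 2 - z.1 ^ 2

theorem line1 {g : ℝ × ℝ → ℝ} {z : ℝ × ℝ} (h : DifferentiableAt ℝ g z) :
    HasDerivAt (fun t => g (t, z.2)) (fderiv ℝ g z (1, 0)) z.1 := by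
  have h2 : HasDerivAt (fun t : ℝ => (t, z.2)) ((1 : ℝ), (0 : ℝ)) z.1 :=
    (hasDerivAt_id z.1).prodMk (hasDerivAt_const z.1 z.2)
  exact HasFDerivAt.comp_hasDerivAt (f := fun t : ℝ => (t, z.2)) z.1 (h.hasFDerivAt) h2

theorem line2 {g : ℝ × ℝ → ℝ} {z : ℝ × ℝ} (h : DifferentiableAt ℝ g z) :
    HasDerivAt (fun t => g (z.1, t)) (fderiv ℝ g z (0, 1)) z.2 := by
  have h2 : HasDerivAt (fun t : ℝ => (z.1, t)) ((0 : ℝ), (1 : ℝ)) z.2 :=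
    (hasDerivAt_const z.2 z.1).prodMk (hasDerivAt_id z.2)
  exact HasFDerivAt.comp_hasDerivAt (f := fun t : ℝ => (z.1, t)) z.2 (h.hasFDerivAt) h2

def G1 (τ : ℝ) (p q : ℝ × ℝ → ℝ) (z : ℝ × ℝ) : ℝ :=
  Real.exp (2 * τ * psi z) * (2 * p z * (fderiv ℝ q z (0, 1) + τ * (-1 + 4 * z.2) * q z)
    - τ * (-2 * z.1) * (p z ^ 2 + q z ^ 2))

def G2 (τ : ℝ) (p q : ℝ × ℝ → ℝ) (z : ℝ × ℝ) : ℝ :=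
  Real.exp (2 * τ * psi z) * (-2 * p z * (fderiv ℝ q z (1, 0) + τ * (-2 * z.1) * q z)
    - τ * (-1 + 4 * z.2) * (p z ^ 2 + q z ^ 2))

theorem contDiff_psi {n : WithTop ℕ∞} : ContDiff ℝ n psi := by
  unfold psi; fun_prop

theorem cd_part {q : ℝ × ℝ → ℝ} {U : Set (ℝ × ℝ)} (hU : IsOpen U) (hq : ContDiffOn ℝ 2 q U)
    (e : ℝ × ℝ) : ContDiffOn ℝ 1 (fun z => fderiv ℝ q z e) U := by
  have := hq.fderiv_of_isOpen (m := 1) hU (by norm_num)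
  exact this.clm_apply contDiffOn_const

theorem cd_G1 {p q : ℝ × ℝ → ℝ} {U : Set (ℝ × ℝ)} (hU : IsOpen U) (τ : ℝ)
    (hp : ContDiffOn ℝ 2 p U) (hq : ContDiffOn ℝ 2 q U) : ContDiffOn ℝ 1 (G1 τ p q) U := by
  have h1 := cd_part hU hq (0, 1)
  have hp' : ContDiffOn ℝ 1 p U := hp.of_le (by norm_num)
  have hq' : ContDiffOn ℝ 1 q U := hq.of_le (by norm_num)
  have hs : ContDiffOn ℝ 1 psi U := contDiff_psi.contDiffOn
  unfold G1
  fun_prop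

theorem cd_G2 {p q : ℝ × ℝ → ℝ} {U : Set (ℝ × ℝ)} (hU : IsOpen U) (τ : ℝ)
    (hp : ContDiffOn ℝ 2 p U) (hq : ContDiffOn ℝ 2 q U) : ContDiffOn ℝ 1 (G2 τ p q) U := by
  have h1 := cd_part hU hq (1, 0)
  have hp' : ContDiffOn ℝ 1 p U := hp.of_le (by norm_num)
  have hq' : ContDiffOn ℝ 1 q U := hq.of_le (by norm_num)
  have hs : ContDiffOn ℝ 1 psi U := contDiff_psi.contDiffOn
  unfold G2
  fun_prop

theorem symm2 {q : ℝ × ℝ → ℝ} {U : Set (ℝ × ℝ)} (hU : IsOpen U) (hq : ContDiffOn ℝ 2 q U)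
    {z : ℝ × ℝ} (hz : z ∈ U) : fderiv ℝ (fun z => fderiv ℝ q z (0, 1)) z (1, 0)
      = fderiv ℝ (fun z => fderiv ℝ q z (1, 0)) z (0, 1) := by
  have hc : ContDiffAt ℝ 2 q z := hq.contDiffAt (hU.mem_nhds hz)
  have hs : IsSymmSndFDerivAt ℝ q z := hc.isSymmSndFDerivAt (by simp)
  have hd : DifferentiableAt ℝ (fderiv ℝ q) z :=
    (hc.fderiv_right (m := 1) (by norm_num)).differentiableAt (by norm_num)
  rw [fderiv_clm_apply hd (by fun_prop), fderiv_clm_apply hd (by fun_prop)]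
  simpa using hs (1, 0) (0, 1)

theorem pointwise {p q : ℝ × ℝ → ℝ} {U : Set (ℝ × ℝ)} (hU : IsOpen U) (τ : ℝ)
    (hp : ContDiffOn ℝ 2 p U) (hq : ContDiffOn ℝ 2 q U) {z : ℝ × ℝ} (hz : z ∈ U)
    (hc : fderiv ℝ p z (0, 1) = fderiv ℝ q z (1, 0)) :
    fderiv ℝ (G1 τ p q) z (1, 0) + fderiv ℝ (G2 τ p q) z (0, 1)
      + 2 * τ * (Real.exp (2 * τ * psi z) * (p z ^ 2 + q z ^ 2))
      ≤ Real.exp (2 * τ * psi z) * (fderiv ℝ p z (1, 0) + fderiv ℝ q z (0, 1)) ^ 2 := by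
  have hn := hU.mem_nhds hz
  have dp : DifferentiableAt ℝ p z := (hp.contDiffAt hn).differentiableAt (by norm_num)
  have dq : DifferentiableAt ℝ q z := (hq.contDiffAt hn).differentiableAt (by norm_num)
  have dx : DifferentiableAt ℝ (fun z => fderiv ℝ q z (1, 0)) z :=
    ((cd_part hU hq (1, 0)).contDiffAt hn).differentiableAt (by norm_num)
  have dy : DifferentiableAt ℝ (fun z => fderiv ℝ q z (0, 1)) z :=
    ((cd_part hU hq (0, 1)).contDiffAt hn).differentiableAt (by norm_num)
  have d1 := line1 (((cd_G1 hU τ hp hq).contDiffAt hn).differentiableAt (by norm_num))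
  have d2 := line2 (((cd_G2 hU τ hp hq).contDiffAt hn).differentiableAt (by norm_num))
  have hsy := symm2 hU hq hz
  have lx := line1 dp
  have ly := line2 dp
  have mx := line1 dq
  have my := line2 dq
  have nx := line1 dy
  have ny := line2 dx
  obtain ⟨x, y⟩ := z
  simp only at *
  have ex : HasDerivAt (fun t => Real.exp (2 * τ * psi (t, y)))
      (Real.exp (2 * τ * psi (x, y)) * (2 * τ * (-2 * x))) x := by
    apply HasDerivAt.exp
    apply HasDerivAt.const_mul
    unfold psi
    have := ((hasDerivAt_id x).pow 2).const_sub (-y + 2 * y ^ 2)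
    exact this.congr_deriv (by norm_num)
  have ey : HasDerivAt (fun t => Real.exp (2 * τ * psi (x, t)))
      (Real.exp (2 * τ * psi (x, y)) * (2 * τ * (-1 + 4 * y))) y := by
    apply HasDerivAt.exp
    apply HasDerivAt.const_mul
    unfold psi
    have := (((hasDerivAt_id y).neg).add (((hasDerivAt_id y).pow 2).const_mul 2)).sub_const (x ^ 2)
    exact this.congr_deriv (by norm_num; ring)
  have g1 := ex.mul (((lx.const_mul 2).mul (nx.add (mx.const_mul (τ * (-1 + 4 * y))))).sub
    ((((hasDerivAt_id x).const_mul (-2)).const_mul τ).mul ((lx.pow 2).add (mx.pow 2))))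
  have g2 := ey.mul (((ly.const_mul (-2)).mul (ny.add (my.const_mul (τ * (-2 * x))))).sub
    (((((hasDerivAt_id y).const_mul 4).const_add (-1)).const_mul τ).mul ((ly.pow 2).add (my.pow 2))))
  have e1' := d1.unique g1
  have e2' := d2.unique g2
  rw [e1', e2']
  simp only [Pi.mul_apply, Pi.add_apply, Pi.sub_apply, Pi.pow_apply, id] 
  rw [hsy, hc]
  set E := Real.exp (2 * τ * psi (x, y)) with hE
  have hEp : 0 < E := Real.exp_pos _
  generalize fderiv ℝ (fun z => fderiv ℝ q z (1, 0)) (x, y) (0, 1) = qxy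
  generalize fderiv ℝ q (x, y) (0, 1) = qy
  generalize fderiv ℝ q (x, y) (1, 0) = qx
  generalize fderiv ℝ p (x, y) (1, 0) = px
  generalize p (x, y) = p
  generalize q (x, y) = q
  have k1 := mul_nonneg hEp.le (sq_nonneg (px + τ * (-2 * x) * p - τ * (-1 + 4 * y) * q))
  have k2 := mul_nonneg hEp.le (sq_nonneg (qy + τ * (-1 + 4 * y) * q - τ * (-2 * x) * p))
  have k3 := mul_nonneg hEp.le (sq_nonneg (qx + τ * (-1 + 4 * y) * p + τ * (-2 * x) * q))
  norm_num
  linarith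

theorem G_bound {A B : ℝ × ℝ → ℝ} {R : Set (ℝ × ℝ)} (hR : IsCompact R)
    (hA : ContinuousOn A R) (hB : ContinuousOn B R) :
    ∃ K : ℝ, 0 ≤ K ∧ ∀ τ : ℝ, 0 ≤ τ → ∀ z ∈ R, ∀ c : ℝ, psi z ≤ -c →
      ‖Real.exp (2 * τ * psi z) * (A z + τ * B z)‖ ≤ K * (1 + τ) * Real.exp (-(2 * τ * c)) := by
  obtain ⟨a, ha⟩ := hR.exists_bound_of_continuousOn hA
  obtain ⟨b, hb⟩ := hR.exists_bound_of_continuousOn hB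
  refine ⟨max a 0 + max b 0, by positivity, fun τ hτ z hz c hc => ?_⟩
  rw [norm_mul, mul_comm, Real.norm_eq_abs (Real.exp _), Real.abs_exp]
  have h1 : Real.exp (2 * τ * psi z) ≤ Real.exp (-(2 * τ * c)) := by
    apply Real.exp_le_exp.mpr
    nlinarith
  have h2 : ‖A z + τ * B z‖ ≤ (max a 0 + max b 0) * (1 + τ) := by
    calc ‖A z + τ * B z‖ ≤ ‖A z‖ + ‖τ * B z‖ := norm_add_le _ _
      _ = ‖A z‖ + τ * ‖B z‖ := by rw [norm_mul, Real.norm_of_nonneg hτ]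
      _ ≤ max a 0 + τ * max b 0 := by
        gcongr
        · exact (ha z hz).trans (le_max_left _ _)
        · exact (hb z hz).trans (le_max_left _ _)
      _ ≤ _ := by nlinarith [le_max_right a 0, le_max_right b 0, mul_nonneg hτ (le_max_right a 0)]
  gcongr

theorem carleman {p q : ℝ × ℝ → ℝ} {U : Set (ℝ × ℝ)} (hU : IsOpen U) {r : ℝ} (hr : 0 < r)
    (hr4 : r ≤ 1 / 4) (hRU : Set.Icc ((-r, 0) : ℝ × ℝ) (r, r) ⊆ U)
    (hp : ContDiffOn ℝ 2 p U) (hq : ContDiffOn ℝ 2 q U)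
    (hc : ∀ z ∈ U, fderiv ℝ p z (0, 1) = fderiv ℝ q z (1, 0))
    (hp0 : ∀ x ∈ Set.Icc (-r) r, p (x, 0) = 0) (hq0 : ∀ x ∈ Set.Icc (-r) r, q (x, 0) = 0) :
    ∃ K : ℝ, 0 ≤ K ∧ ∀ τ : ℝ, 0 ≤ τ →
      2 * τ * ∫ z in Set.Icc ((-r, 0) : ℝ × ℝ) (r, r),
          Real.exp (2 * τ * psi z) * (p z ^ 2 + q z ^ 2)
        ≤ (∫ z in Set.Icc ((-r, 0) : ℝ × ℝ) (r, r),
          Real.exp (2 * τ * psi z) * (fderiv ℝ p z (1, 0) + fderiv ℝ q z (0, 1)) ^ 2)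
          + K * (1 + τ) * Real.exp (-(2 * τ * r ^ 2)) := by
  set R := Set.Icc ((-r, 0) : ℝ × ℝ) (r, r) with hRdef
  have hRc : IsCompact R := isCompact_Icc
  have cpx : ContinuousOn (fun z => fderiv ℝ p z (1, 0)) R :=
    ((cd_part hU hp (1, 0)).continuousOn).mono hRU
  have cqx : ContinuousOn (fun z => fderiv ℝ q z (1, 0)) R :=
    ((cd_part hU hq (1, 0)).continuousOn).mono hRU
  have cqy : ContinuousOn (fun z => fderiv ℝ q z (0, 1)) R :=
    ((cd_part hU hq (0, 1)).continuousOn).mono hRU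
  have cp : ContinuousOn p R := hp.continuousOn.mono hRU
  have cq : ContinuousOn q R := hq.continuousOn.mono hRU
  have cpsi : ContinuousOn psi R := (contDiff_psi (n := 0)).continuous.continuousOn
  obtain ⟨K1, hK1, hG1⟩ := G_bound (A := fun z => 2 * p z * fderiv ℝ q z (0, 1))
    (B := fun z => 2 * p z * ((-1 + 4 * z.2) * q z) - (-2 * z.1) * (p z ^ 2 + q z ^ 2)) hRc
    (by fun_prop) (by fun_prop)
  obtain ⟨K2, hK2, hG2⟩ := G_bound (A := fun z => -2 * p z * fderiv ℝ q z (1, 0))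
    (B := fun z => -2 * p z * ((-2 * z.1) * q z) - (-1 + 4 * z.2) * (p z ^ 2 + q z ^ 2)) hRc
    (by fun_prop) (by fun_prop)
  refine ⟨K1 + K2, by positivity, fun τ hτ => ?_⟩
  have b1 : ∀ z ∈ R, psi z ≤ -r ^ 2 → ‖G1 τ p q z‖ ≤ K1 * (1 + τ) * Real.exp (-(2 * τ * r ^ 2)) := by
    intro z hz hzz
    have := hG1 τ hτ z hz _ hzz
    convert this using 3
    simp only [G1]
    ring
  have b2 : ∀ z ∈ R, psi z ≤ -r ^ 2 → ‖G2 τ p q z‖ ≤ K2 * (1 + τ) * Real.exp (-(2 * τ * r ^ 2)) := by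
    intro z hz hzz
    have := hG2 τ hτ z hz _ hzz
    convert this using 3
    simp only [G2]
    ring
  have c1 := cd_G1 hU τ hp hq
  have c2 := cd_G2 hU τ hp hq
  have f1 : ContinuousOn (fun z => fderiv ℝ (G1 τ p q) z (1, 0)) R :=
    ((c1.continuousOn_fderiv_of_isOpen hU le_rfl).clm_apply continuousOn_const).mono hRU
  have f2 : ContinuousOn (fun z => fderiv ℝ (G2 τ p q) z (0, 1)) R :=
    ((c2.continuousOn_fderiv_of_isOpen hU le_rfl).clm_apply continuousOn_const).mono hRU
  have hdiv := MeasureTheory.integral_divergence_prod_Icc_of_hasFDerivAt_of_le (G1 τ p q) (G2 τ p q)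
    (fderiv ℝ (G1 τ p q)) (fderiv ℝ (G2 τ p q)) ((-r, 0) : ℝ × ℝ) (r, r)
    (by constructor <;> simp <;> linarith) (c1.continuousOn.mono hRU) (c2.continuousOn.mono hRU)
    (fun z hz => ((c1.contDiffAt (hU.mem_nhds (hRU ⟨⟨hz.1.1.le, hz.2.1.le⟩,
      ⟨hz.1.2.le, hz.2.2.le⟩⟩))).differentiableAt (by norm_num)).hasFDerivAt)
    (fun z hz => ((c2.contDiffAt (hU.mem_nhds (hRU ⟨⟨hz.1.1.le, hz.2.1.le⟩,
      ⟨hz.1.2.le, hz.2.2.le⟩⟩))).differentiableAt (by norm_num)).hasFDerivAt)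
    ((f1.add f2).integrableOn_compact hRc)
  simp only at hdiv
  have i0 : ∫ x in (-r)..r, G2 τ p q (x, 0) = 0 := by
    rw [intervalIntegral.integral_congr (g := fun _ => (0 : ℝ))]
    · simp
    · intro x hx
      rw [Set.uIcc_of_le (by linarith)] at hx
      simp [G2, hp0 x hx, hq0 x hx]
  have i1 : ‖∫ x in (-r)..r, G2 τ p q (x, r)‖ ≤
      (K2 * (1 + τ) * Real.exp (-(2 * τ * r ^ 2))) * |r - -r| := by
    apply intervalIntegral.norm_integral_le_of_norm_le_const
    intro x hx
    rw [Set.uIoc_of_le (by linarith)] at hx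
    apply b2 (x, r) ⟨⟨hx.1.le, hr.le⟩, ⟨hx.2, le_rfl⟩⟩
    simp only [psi]
    nlinarith [sq_nonneg x]
  have i2 : ‖∫ y in (0 : ℝ)..r, G1 τ p q (r, y)‖ ≤
      (K1 * (1 + τ) * Real.exp (-(2 * τ * r ^ 2))) * |r - 0| := by
    apply intervalIntegral.norm_integral_le_of_norm_le_const
    intro y hy
    rw [Set.uIoc_of_le (by linarith)] at hy
    apply b1 (r, y) ⟨⟨by simp; linarith, hy.1.le⟩, ⟨le_rfl, hy.2⟩⟩
    simp only [psi]
    nlinarith [hy.1, hy.2]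
  have i3 : ‖∫ y in (0 : ℝ)..r, G1 τ p q (-r, y)‖ ≤
      (K1 * (1 + τ) * Real.exp (-(2 * τ * r ^ 2))) * |r - 0| := by
    apply intervalIntegral.norm_integral_le_of_norm_le_const
    intro y hy
    rw [Set.uIoc_of_le (by linarith)] at hy
    apply b1 (-r, y) ⟨⟨le_rfl, hy.1.le⟩, ⟨by simp; linarith, hy.2⟩⟩
    simp only [psi]
    nlinarith [hy.1, hy.2]
  rw [Real.norm_eq_abs, abs_le] at i1 i2 i3
  rw [abs_of_pos (by linarith)] at i1 i2 i3
  have E0 : 0 ≤ (1 + τ) * Real.exp (-(2 * τ * r ^ 2)) := by positivity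
  have cE : ContinuousOn (fun z => Real.exp (2 * τ * psi z)) R := by fun_prop
  have I1 : MeasureTheory.IntegrableOn (fun z => Real.exp (2 * τ * psi z) * (p z ^ 2 + q z ^ 2)) R :=
    ContinuousOn.integrableOn_compact hRc (by fun_prop)
  have I2 : MeasureTheory.IntegrableOn (fun z => Real.exp (2 * τ * psi z) *
      (fderiv ℝ p z (1, 0) + fderiv ℝ q z (0, 1)) ^ 2) R :=
    ContinuousOn.integrableOn_compact hRc (by fun_prop)
  have I3 := (f1.add f2).integrableOn_compact (μ := MeasureTheory.volume) hRc
  have key := MeasureTheory.setIntegral_mono_on (I3.add (I1.const_mul (2 * τ))) I2 measurableSet_Icc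
    (fun z hz => pointwise hU τ hp hq (hRU hz) (hc z (hRU hz)))
  have key2 := MeasureTheory.integral_add I3 (I1.const_mul (2 * τ))
  rw [MeasureTheory.integral_const_mul] at key2
  simp only [Pi.add_apply] at key key2
  rw [key2] at key
  rw [hdiv, i0] at key
  have e1 : K1 * ((1 + τ) * Real.exp (-(2 * τ * r ^ 2))) * (2 * r) ≤
      K1 * ((1 + τ) * Real.exp (-(2 * τ * r ^ 2))) * 1 := by gcongr; linarith
  have e2 : K2 * ((1 + τ) * Real.exp (-(2 * τ * r ^ 2))) * (2 * r) ≤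
      K2 * ((1 + τ) * Real.exp (-(2 * τ * r ^ 2))) * 1 := by gcongr; linarith
  linarith [i1.1, i2.1, i3.2]

set_option maxHeartbeats 1000000 in
theorem uniq {ι : Type} [Fintype ι] {p q : ι → ℝ × ℝ → ℝ} {U : Set (ℝ × ℝ)} (hU : IsOpen U)
    {r : ℝ} (hr : 0 < r)
    (hr4 : r ≤ 1 / 4) (hRU : Set.Icc ((-r, 0) : ℝ × ℝ) (r, r) ⊆ U)
    (hp : ∀ k, ContDiffOn ℝ 2 (p k) U) (hq : ∀ k, ContDiffOn ℝ 2 (q k) U)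
    (hc : ∀ k, ∀ z ∈ U, fderiv ℝ (p k) z (0, 1) = fderiv ℝ (q k) z (1, 0))
    (hp0 : ∀ k, ∀ x ∈ Set.Icc (-r) r, p k (x, 0) = 0)
    (hq0 : ∀ k, ∀ x ∈ Set.Icc (-r) r, q k (x, 0) = 0)
    {C : ℝ} (hC : 0 ≤ C)
    (hineq : ∀ k, ∀ z ∈ Set.Icc ((-r, 0) : ℝ × ℝ) (r, r),
      (fderiv ℝ (p k) z (1, 0) + fderiv ℝ (q k) z (0, 1)) ^ 2 ≤ C * ∑ j, (p j z ^ 2 + q j z ^ 2)) :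
    ∀ z : ℝ × ℝ, |z.1| < r / 2 → 0 < z.2 → z.2 < r ^ 2 / 2 → ∀ k, p k z = 0 ∧ q k z = 0 := by
  intro z0 hz1 hz2 hz3
  set R := Set.Icc ((-r, 0) : ℝ × ℝ) (r, r) with hRdef
  have hRc : IsCompact R := isCompact_Icc
  set W : ℝ × ℝ → ℝ := fun z => ∑ j, (p j z ^ 2 + q j z ^ 2) with hW
  have hWn : ∀ z, 0 ≤ W z := fun z => Finset.sum_nonneg fun j _ => by positivity
  suffices hW0 : W z0 = 0 by
    intro k
    have := (Finset.sum_eq_zero_iff_of_nonneg (fun j _ => by positivity)).1 hW0 k (Finset.mem_univ k)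
    constructor <;> nlinarith [sq_nonneg (p k z0), sq_nonneg (q k z0)]
  by_contra hne
  have hpos : 0 < W z0 := lt_of_le_of_ne (hWn z0) (Ne.symm hne)
  rw [abs_lt] at hz1
  have hrr : r ^ 2 / 2 < r := by nlinarith
  have hint : Set.Ioo (-r) r ×ˢ Set.Ioo 0 r ∈ nhds z0 := by
    apply (isOpen_Ioo.prod isOpen_Ioo).mem_nhds
    exact ⟨⟨by linarith, by linarith⟩, ⟨by linarith, by linarith⟩⟩
  have hsub : Set.Ioo (-r) r ×ˢ Set.Ioo 0 r ⊆ R :=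
    fun z hz => ⟨⟨hz.1.1.le, hz.2.1.le⟩, ⟨hz.1.2.le, hz.2.2.le⟩⟩
  have hz0R : R ∈ nhds z0 := Filter.mem_of_superset hint hsub
  have cp : ∀ k, ContinuousOn (p k) R := fun k => (hp k).continuousOn.mono hRU
  have cq : ∀ k, ContinuousOn (q k) R := fun k => (hq k).continuousOn.mono hRU
  have cW : ContinuousOn W R := by fun_prop
  have cpsi : Continuous psi := (contDiff_psi (n := 0)).continuous
  have hpsi0 : -r ^ 2 < psi z0 := by
    simp only [psi]
    nlinarith
  obtain ⟨η, hη, hη2⟩ : ∃ η > 0, -r ^ 2 + η < psi z0 :=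
    ⟨(psi z0 + r ^ 2) / 2, by linarith, by linarith⟩
  have hev : ∀ᶠ z in nhds z0, z ∈ R ∧ W z0 / 2 < W z ∧ -r ^ 2 + η < psi z := by
    refine (Filter.eventually_mem_set.2 hz0R).and (Filter.Eventually.and ?_ ?_)
    · exact (cW.continuousAt hz0R).eventually (lt_mem_nhds (by linarith))
    · exact cpsi.continuousAt.eventually (lt_mem_nhds hη2)
  obtain ⟨ρ, hρ, hball⟩ := Metric.nhds_basis_closedBall.eventually_iff.1 hev
  set B := Metric.closedBall z0 ρ with hB
  have hBR : B ⊆ R := fun z hz => (hball hz).1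
  have hBc : IsCompact B := isCompact_closedBall _ _
  set V := (MeasureTheory.volume B).toReal with hV
  have hVpos : 0 < V := ENNReal.toReal_pos (Metric.measure_closedBall_pos _ _ hρ).ne'
    hBc.measure_lt_top.ne
  choose K hK hcar using fun k => carleman hU hr hr4 hRU (hp k) (hq k) (hc k) (hp0 k) (hq0 k)
  set KK := ∑ k, K k with hKK
  have hKK0 : 0 ≤ KK := Finset.sum_nonneg fun k _ => hK k
  obtain ⟨n, hn⟩ : ∃ n : ℝ, n = ((Fintype.card ι : ℕ) : ℝ) := ⟨_, rfl⟩
  have hn0 : 0 ≤ n := by rw [hn]; positivity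
  -- main estimate
  have main : ∀ τ : ℝ, 0 ≤ τ → n * C + 1 ≤ 2 * τ →
      V * (Real.exp (2 * τ * (-r ^ 2 + η)) * (W z0 / 2)) ≤
        KK * (1 + τ) * Real.exp (-(2 * τ * r ^ 2)) := by
    intro τ hτ hτ2
    have cE : ContinuousOn (fun z => Real.exp (2 * τ * psi z)) R := by
      have := cpsi.continuousOn (s := R)
      fun_prop
    have IW : MeasureTheory.IntegrableOn (fun z => Real.exp (2 * τ * psi z) * W z) R :=
      ContinuousOn.integrableOn_compact hRc (cE.mul cW)
    have I1 : ∀ k, MeasureTheory.IntegrableOn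
        (fun z => Real.exp (2 * τ * psi z) * (p k z ^ 2 + q k z ^ 2)) R := fun k => by
      have h1 := cp k
      have h2 := cq k
      exact ContinuousOn.integrableOn_compact hRc (by fun_prop)
    have I2 : ∀ k, MeasureTheory.IntegrableOn (fun z => Real.exp (2 * τ * psi z) *
        (fderiv ℝ (p k) z (1, 0) + fderiv ℝ (q k) z (0, 1)) ^ 2) R := fun k => by
      have h1 := ((cd_part hU (hp k) (1, 0)).continuousOn).mono hRU
      have h2 := ((cd_part hU (hq k) (0, 1)).continuousOn).mono hRU
      exact ContinuousOn.integrableOn_compact hRc (by fun_prop)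
    have sumI : ∑ k, ∫ z in R, Real.exp (2 * τ * psi z) * (p k z ^ 2 + q k z ^ 2) =
        ∫ z in R, Real.exp (2 * τ * psi z) * W z := by
      rw [← MeasureTheory.integral_finsetSum _ (fun k _ => I1 k)]
      simp only [hW, Finset.mul_sum]
    have each : ∀ k, ∫ z in R, Real.exp (2 * τ * psi z) *
        (fderiv ℝ (p k) z (1, 0) + fderiv ℝ (q k) z (0, 1)) ^ 2 ≤
        C * ∫ z in R, Real.exp (2 * τ * psi z) * W z := by
      intro k
      rw [← MeasureTheory.integral_const_mul]
      apply MeasureTheory.setIntegral_mono_on (I2 k) (IW.const_mul C) measurableSet_Icc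
      intro z hz
      have := mul_le_mul_of_nonneg_left (hineq k z hz) (Real.exp_pos (2 * τ * psi z)).le
      calc _ ≤ _ := this
        _ = _ := by simp only [hW]; ring
    set I := ∫ z in R, Real.exp (2 * τ * psi z) * W z with hI
    have total : 2 * τ * I ≤ n * (C * I) + KK * (1 + τ) * Real.exp (-(2 * τ * r ^ 2)) := by
      rw [← sumI, Finset.mul_sum, sumI]
      calc _ ≤ ∑ k, (C * I + K k * (1 + τ) * Real.exp (-(2 * τ * r ^ 2))) :=
            Finset.sum_le_sum fun k _ => (hcar k τ hτ).trans (by gcongr; exact each k)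
        _ = _ := by
          simp only [Finset.sum_add_distrib, Finset.sum_const, Finset.card_univ, nsmul_eq_mul, hKK,
            Finset.sum_mul, hn]
    have hI0 : 0 ≤ I := MeasureTheory.setIntegral_nonneg measurableSet_Icc
      fun z _ => mul_nonneg (Real.exp_pos _).le (hWn z)
    have hIle : I ≤ KK * (1 + τ) * Real.exp (-(2 * τ * r ^ 2)) := by nlinarith
    refine le_trans ?_ hIle
    have lower : ∫ z in B, Real.exp (2 * τ * (-r ^ 2 + η)) * (W z0 / 2) ≤
        ∫ z in B, Real.exp (2 * τ * psi z) * W z := by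
      apply MeasureTheory.setIntegral_mono_on
        (MeasureTheory.integrableOn_const hBc.measure_lt_top.ne) (IW.mono_set hBR)
        Metric.isClosed_closedBall.measurableSet
      intro z hz
      have h := hball hz
      have h1 : Real.exp (2 * τ * (-r ^ 2 + η)) ≤ Real.exp (2 * τ * psi z) := by
        apply Real.exp_le_exp.2
        have := h.2.2.le
        gcongr
      exact mul_le_mul h1 h.2.1.le (by linarith) (Real.exp_pos _).le
    rw [MeasureTheory.setIntegral_const, smul_eq_mul] at lower
    refine le_trans lower ?_
    apply MeasureTheory.setIntegral_mono_set IW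
    · exact Filter.Eventually.of_forall fun z => mul_nonneg (Real.exp_pos _).le (hWn z)
    · exact Filter.Eventually.of_forall hBR
  set A := V * (W z0 / 2) with hA
  have hApos : 0 < A := by positivity
  have hnC : 0 ≤ n * C := by positivity
  set τ := 1 + (n * C + 1) + KK / (A * η ^ 2) with hτdef
  have hq1 : 0 ≤ KK / (A * η ^ 2) := by positivity
  have hτ1 : 1 ≤ τ := by linarith
  have hm := main τ (by linarith) (by linarith)
  have hexp : Real.exp (2 * τ * (-r ^ 2 + η)) =
      Real.exp (2 * τ * η) * Real.exp (-(2 * τ * r ^ 2)) := by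
    rw [← Real.exp_add]; ring_nf
  rw [hexp] at hm
  have hm2 : A * Real.exp (2 * τ * η) ≤ KK * (1 + τ) := by
    have e0 := Real.exp_pos (-(2 * τ * r ^ 2))
    apply le_of_mul_le_mul_right _ e0
    calc _ = _ := by rw [hA]; ring
      _ ≤ _ := hm
  have hqe := Real.quadratic_le_exp_of_nonneg (x := 2 * τ * η) (by positivity)
  have h3 : A * (2 * τ ^ 2 * η ^ 2) ≤ KK * (2 * τ) := by
    calc A * (2 * τ ^ 2 * η ^ 2) ≤ A * Real.exp (2 * τ * η) := by
          gcongr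
          have : 0 ≤ 2 * τ * η := by positivity
          nlinarith
      _ ≤ KK * (1 + τ) := hm2
      _ ≤ _ := by gcongr; linarith
  have h4 : A * η ^ 2 * τ ≤ KK := by
    apply le_of_mul_le_mul_right _ (show 0 < 2 * τ by linarith)
    calc _ = _ := by ring
      _ ≤ _ := h3
  have h5 : A * η ^ 2 * (KK / (A * η ^ 2)) = KK := by field_simp
  have h6 : 0 < A * η ^ 2 := by positivity
  have : A * η ^ 2 * τ = A * η ^ 2 * (1 + (n * C + 1)) + KK := by rw [hτdef, mul_add, h5]
  nlinarith

theorem e1_mul_e2 : e1 * e2 = e3 := by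
  ext i j
  fin_cases i <;> fin_cases j <;> simp [e1, e2, e3, Matrix.mul_apply, Fin.sum_univ_two]

theorem alg1 (Y : M2) (c : ℂ) (h0 : Y.trace = 0) (h1 : ip Y e1 = 0) (h2 : ip Y e2 = 0)
    (h3 : ip Y e3 = c) : Y = c • e3 := by
  simp only [ip, e1, e2, e3, Matrix.trace_fin_two, Matrix.mul_apply, Fin.sum_univ_two] at h0 h1 h2 h3
  simp at h0 h1 h2 h3
  have hI : Complex.I * Complex.I = -1 := Complex.I_mul_I
  have a1 : Y 0 1 = 0 := by
    linear_combination (1 / 2) * (Complex.I) * h1 - (1 / 2) * h2 + (1 / 2) * (Y 0 1 + Y 1 0) * hI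
  have a2 : Y 1 0 = 0 := by
    linear_combination (1 / 2) * (Complex.I) * h1 + (1 / 2) * h2 + (1 / 2) * (Y 0 1 + Y 1 0) * hI
  have a3 : Y 0 0 = c * Complex.I := by
    linear_combination (Complex.I) * h3 + (1 / 2) * h0 + (1 / 2) * (Y 0 0 - Y 1 1) * hI
  have a4 : Y 1 1 = -(c * Complex.I) := by linear_combination h0 - a3
  ext i j
  fin_cases i <;> fin_cases j <;> simp [e3, a1, a2, a3, a4]

theorem ip_conj (X F G E : M2) : ip (G * X * F) E = ip X (F * E * G) := by
  unfold ip
  congr 1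
  rw [show G * X * F * E = G * (X * F * E) by simp only [Matrix.mul_assoc], Matrix.trace_mul_comm]
  simp only [Matrix.mul_assoc]

theorem alg2 (X F G : M2) (c : ℂ) (hFG : F * G = 1) (hGF : G * F = 1) (h0 : X.trace = 0)
    (h1 : ip X (F * e1 * G) = 0) (h2 : ip X (F * e2 * G) = 0) (h3 : ip X (F * e3 * G) = c) :
    X = c • ((F * e1 * G) * (F * e2 * G)) := by
  have hY := alg1 (G * X * F) c (by
    rw [Matrix.mul_assoc, Matrix.trace_mul_comm, Matrix.mul_assoc, hFG, Matrix.mul_one, h0])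
    (by rw [ip_conj, h1]) (by rw [ip_conj, h2]) (by rw [ip_conj, h3])
  have e : (F * e1 * G) * (F * e2 * G) = F * e3 * G := by
    rw [← e1_mul_e2]
    calc _ = F * e1 * (G * F) * e2 * G := by simp only [Matrix.mul_assoc]
      _ = _ := by rw [hGF]; simp only [Matrix.mul_assoc, Matrix.one_mul]
  rw [e]
  calc X = (F * G) * X * (F * G) := by rw [hFG, Matrix.one_mul, Matrix.mul_one]
    _ = F * (G * X * F) * G := by simp only [Matrix.mul_assoc]
    _ = _ := by rw [hY]; simp

theorem ip_smul_right (X Y : M2) (c : ℂ) : ip X (c • Y) = c * ip X Y := by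
  simp [ip]; ring

theorem ip_add_left (X X' Y : M2) : ip (X + X') Y = ip X Y + ip X' Y := by
  simp [ip, Matrix.add_mul]; ring

theorem ip_comm (X Y : M2) : ip X Y = ip Y X := by
  simp [ip, Matrix.trace_mul_comm X Y]

def trL : M2 →L[ℝ] ℂ := LinearMap.toContinuousLinearMap (Matrix.traceLinearMap (Fin 2) ℝ ℂ)

theorem trL_apply (X : M2) : trL X = X.trace := rfl

theorem fderiv_ip {g h : ℂ → M2} {z : ℂ} (hg : DifferentiableAt ℝ g z)
    (hh : DifferentiableAt ℝ h z) (v : ℂ) :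
    fderiv ℝ (fun z => ip (g z) (h z)) z v
      = ip (fderiv ℝ g z v) (h z) + ip (g z) (fderiv ℝ h z v) := by
  have h1 := (trL.hasFDerivAt.comp z (hg.hasFDerivAt.mul' hh.hasFDerivAt)).const_mul (-(1/2 : ℂ))
  have h2 : HasFDerivAt (fun z => ip (g z) (h z)) _ z := h1
  rw [h2.fderiv]
  change -(1/2 : ℂ) * (g z * fderiv ℝ h z v + fderiv ℝ g z v * h z).trace = _
  simp [ip, Matrix.trace_add]
  ring

theorem fderiv_congr {E : Type*} [NormedAddCommGroup E] [NormedSpace ℝ E]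
    {S : Set ℂ} (hS : IsOpen S) {a b : ℂ → E} (h : ∀ z ∈ S, a z = b z) {z : ℂ} (hz : z ∈ S) :
    fderiv ℝ a z = fderiv ℝ b z :=
  Filter.EventuallyEq.fderiv_eq (Filter.eventuallyEq_of_mem (hS.mem_nhds hz) h)

theorem smooth_D {f : ℂ → M2} {S : Set ℂ} (hS : IsOpen S) (hf : ContDiffOn ℝ (⊤ : ℕ∞) f S) (v : ℂ) :
    ContDiffOn ℝ (⊤ : ℕ∞) (fun z => fderiv ℝ f z v) S :=
  (hf.fderiv_of_isOpen (m := ((⊤ : ℕ∞) : WithTop ℕ∞)) hS (by simp)).clm_apply contDiffOn_const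

theorem smooth_diff {f : ℂ → M2} {S : Set ℂ} (hS : IsOpen S) (hf : ContDiffOn ℝ (⊤ : ℕ∞) f S)
    {z : ℂ} (hz : z ∈ S) : DifferentiableAt ℝ f z :=
  (hf.contDiffAt (hS.mem_nhds hz)).differentiableAt (by simp)

theorem D_symm {f : ℂ → M2} {S : Set ℂ} (hS : IsOpen S) (hf : ContDiffOn ℝ (⊤ : ℕ∞) f S)
    {z : ℂ} (hz : z ∈ S) : px (py f) z = py (px f) z := by
  have hc : ContDiffAt ℝ 2 f z := (hf.contDiffAt (hS.mem_nhds hz)).of_le 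
    (WithTop.coe_le_coe.2 (le_top : (2 : ℕ∞) ≤ ⊤))
  have hs : IsSymmSndFDerivAt ℝ f z := hc.isSymmSndFDerivAt (by simp)
  have hd : DifferentiableAt ℝ (fderiv ℝ f) z :=
    (hc.fderiv_right (m := 1) (by norm_num)).differentiableAt (by norm_num)
  change fderiv ℝ (fun z => fderiv ℝ f z Complex.I) z 1 = fderiv ℝ (fun z => fderiv ℝ f z 1) z Complex.I
  have k : ∀ v, HasFDerivAt (fun z => fderiv ℝ f z v) _ z := fun v =>
    (ContinuousLinearMap.apply ℝ M2 v).hasFDerivAt.comp z hd.hasFDerivAt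
  rw [(k Complex.I).fderiv, (k 1).fderiv]
  exact hs 1 Complex.I

theorem D_trace {f : ℂ → M2} {S : Set ℂ} (hS : IsOpen S) (hf : ContDiffOn ℝ (⊤ : ℕ∞) f S)
    (h : ∀ z ∈ S, (f z).trace = 0) (v : ℂ) : ∀ z ∈ S, (fderiv ℝ f z v).trace = 0 := by
  intro z hz
  have h1 := (trL.hasFDerivAt.comp z (smooth_diff hS hf hz).hasFDerivAt).fderiv
  have h2 : fderiv ℝ (trL ∘ f) z = fderiv ℝ (fun _ => (0 : ℂ)) z :=
    fderiv_congr hS (fun z hz => h z hz) hz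
  have h3 : fderiv ℝ (fun _ : ℂ => (0 : ℂ)) z = 0 := by simp
  rw [h1, h3] at h2
  exact congrArg (fun L : ℂ →L[ℝ] ℂ => L v) h2

theorem cmc_eq {S : Set ℂ} (hS : IsOpen S) {H : ℝ} {f : ℂ → M2} (hf : IsCMCImmersion S H f)
    {z : ℂ} (hz : z ∈ S) :
    px (px f) z + py (py f) z = (2 * H : ℂ) • (px f z * py f z) := by
  obtain ⟨hfs, hsu, u, hu, hconf, F, hF, hfr⟩ := hf
  have hX := smooth_D hS hfs 1
  have hY := smooth_D hS hfs Complex.I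
  have dX : DifferentiableAt ℝ (px f) z := smooth_diff hS hX hz
  have dY : DifferentiableAt ℝ (py f) z := smooth_diff hS hY hz
  have hsym := D_symm hS hfs hz
  have q1 : ∀ v : ℂ, fderiv ℝ (fun z => ip (px f z) (px f z)) z v =
      fderiv ℝ (fun z => ip (py f z) (py f z)) z v := fun v => by
    rw [fderiv_congr hS (fun z hz => (hconf z hz).1.trans (hconf z hz).2.1.symm) hz]
  have q2 : ∀ v : ℂ, fderiv ℝ (fun z => ip (px f z) (py f z)) z v = 0 := fun v => by
    rw [fderiv_congr hS (b := fun _ => 0) (fun z hz => (hconf z hz).2.2) hz]; simp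
  have q1x := q1 1
  have q1y := q1 Complex.I
  have q2x := q2 1
  have q2y := q2 Complex.I
  rw [fderiv_ip dX dX, fderiv_ip dY dY] at q1x q1y
  rw [fderiv_ip dX dY] at q2x q2y
  change ip (px (px f) z) _ + ip _ (px (px f) z) = ip (px (py f) z) _ + ip _ (px (py f) z) at q1x
  change ip (py (px f) z) _ + ip _ (py (px f) z) = ip (py (py f) z) _ + ip _ (py (py f) z) at q1y
  change ip (px (px f) z) _ + ip _ (px (py f) z) = 0 at q2x
  change ip (py (px f) z) _ + ip _ (py (py f) z) = 0 at q2y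
  rw [hsym] at q1x q2x
  simp only [ip_comm (px f z)] at q1x q1y q2x q2y
  simp only [ip_comm (py f z)] at q1x q1y q2x q2y
  set X := px (px f) z + py (py f) z with hXd
  have x1 : ip X (px f z) = 0 := by
    rw [hXd, ip_add_left]; linear_combination (1 / 2) * q1x + q2y
  have x2 : ip X (py f z) = 0 := by
    rw [hXd, ip_add_left]; linear_combination (-1 / 2) * q1y + q2x
  have x0 : X.trace = 0 := by
    rw [hXd, Matrix.trace_add]
    have t1 := D_trace hS hX (D_trace hS hfs (fun z hz => (hsu z hz).2) 1) 1 z hz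
    have t2 := D_trace hS hY (D_trace hS hfs (fun z hz => (hsu z hz).2) Complex.I) Complex.I z hz
    change (px (px f) z).trace = 0 at t1
    change (py (py f) z).trace = 0 at t2
    rw [t1, t2, add_zero]
  obtain ⟨hun, hdet, hf1, hf2, hf3⟩ := hfr z hz
  have hu1 : IsUnit (F z).det := by rw [hdet]; exact isUnit_one
  have := alg2 X (F z) (F z)⁻¹ _ (Matrix.mul_nonsing_inv _ hu1) (Matrix.nonsing_inv_mul _ hu1) x0
    (by rw [hf1, ip_smul_right, x1, mul_zero]) (by rw [hf2, ip_smul_right, x2, mul_zero]) hf3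
  rw [this, hf1, hf2, Matrix.smul_mul, Matrix.mul_smul, smul_smul, smul_smul]
  congr 1
  rw [show (2 * u z) = u z + u z by ring, Real.exp_add]
  have he : (Real.exp (u z) : ℂ) ≠ 0 := by exact_mod_cast (Real.exp_pos _).ne'
  push_cast
  push_cast at he
  field_simp
  ring

def mA (s : ℝ) : ℝ × ℝ →L[ℝ] ℂ :=
  (ContinuousLinearMap.fst ℝ ℝ ℝ).smulRight (1 : ℂ) +
    (ContinuousLinearMap.snd ℝ ℝ ℝ).smulRight ((s : ℂ) * Complex.I)

theorem mA_apply (s : ℝ) (z : ℝ × ℝ) : mA s z = (z.1 : ℂ) + (z.2 : ℂ) * ((s : ℂ) * Complex.I) := by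
  simp [mA]

theorem two_le_top : (2 : WithTop ℕ∞) ≤ ((⊤ : ℕ∞) : WithTop ℕ∞) :=
  WithTop.coe_le_coe.2 (le_top : (2 : ℕ∞) ≤ ⊤)

theorem comp_fderiv {E : Type*} [NormedAddCommGroup E] [NormedSpace ℝ E]
    {g : ℂ → E} {c : ℂ} {A : ℝ × ℝ →L[ℝ] ℂ} (L : E →L[ℝ] ℝ) {z : ℝ × ℝ}
    (hg : DifferentiableAt ℝ g (c + A z)) (v : ℝ × ℝ) :
    fderiv ℝ (fun z => L (g (c + A z))) z v = L (fderiv ℝ g (c + A z) (A v)) := by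
  have h1 : HasFDerivAt (fun z => c + A z) A z := A.hasFDerivAt.const_add c
  have h2 : HasFDerivAt (fun z => L (g (c + A z))) _ z :=
    L.hasFDerivAt.comp z (HasFDerivAt.comp z hg.hasFDerivAt h1)
  rw [h2.fderiv]
  rfl

theorem coords {E : Type*} [NormedAddCommGroup E] [NormedSpace ℝ E] [FiniteDimensional ℝ E] :
    ∃ n : ℕ, ∃ L : Fin n → E →L[ℝ] ℝ, ∃ N1 N2 : ℝ, 0 ≤ N1 ∧ 0 ≤ N2 ∧
      (∀ k X, |L k X| ≤ N1 * ‖X‖) ∧ (∀ X, ‖X‖ ^ 2 ≤ N2 ^ 2 * ∑ k, (L k X) ^ 2) := by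
  let φ := (Module.finBasis ℝ E).equivFunL
  let ι := Fin (Module.finrank ℝ E)
  let L : ι → E →L[ℝ] ℝ := fun k => (ContinuousLinearMap.proj k).comp (φ : E →L[ℝ] (ι → ℝ))
  let N1 := ‖(φ : E →L[ℝ] (ι → ℝ))‖
  let N2 := ‖(φ.symm : (ι → ℝ) →L[ℝ] E)‖
  refine ⟨_, L, N1, N2, norm_nonneg _, norm_nonneg _, ?_, ?_⟩
  · intro k X
    calc |L k X| = ‖φ X k‖ := rfl
      _ ≤ ‖φ X‖ := norm_le_pi_norm _ _
      _ ≤ _ := (φ : E →L[ℝ] (ι → ℝ)).le_opNorm X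
  · intro X
    have h1 : ‖X‖ ≤ N2 * ‖φ X‖ := by
      have := (φ.symm : (ι → ℝ) →L[ℝ] E).le_opNorm (φ X)
      simpa using this
    have hsn : 0 ≤ ∑ k, (L k X) ^ 2 := Finset.sum_nonneg fun k _ => sq_nonneg _
    have h2 : ‖φ X‖ ≤ Real.sqrt (∑ k, (L k X) ^ 2) := by
      rw [pi_norm_le_iff_of_nonneg (Real.sqrt_nonneg _)]
      intro k
      apply Real.le_sqrt_of_sq_le
      rw [Real.norm_eq_abs, sq_abs]
      exact Finset.single_le_sum (f := fun k => (L k X) ^ 2) (fun k _ => sq_nonneg _) (Finset.mem_univ k)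
    calc ‖X‖ ^ 2 ≤ (N2 * Real.sqrt (∑ k, (L k X) ^ 2)) ^ 2 := by
          gcongr
          exact h1.trans (by gcongr)
      _ = _ := by rw [mul_pow, Real.sq_sqrt hsn]

theorem coords_zero {E : Type*} [NormedAddCommGroup E] [NormedSpace ℝ E] {n : ℕ}
    {L : Fin n → E →L[ℝ] ℝ} {N2 : ℝ} (h : ∀ X, ‖X‖ ^ 2 ≤ N2 ^ 2 * ∑ k, (L k X) ^ 2) {X : E}
    (hX : ∀ k, L k X = 0) : X = 0 := by
  have := h X
  simp only [hX] at this
  have h2 : ‖X‖ ^ 2 ≤ 0 := by simpa using this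
  have h3 : ‖X‖ = 0 := by nlinarith [norm_nonneg X]
  exact norm_eq_zero.1 h3

theorem comp_smooth {E : Type*} [NormedAddCommGroup E] [NormedSpace ℝ E]
    {g : ℂ → E} {T : Set ℂ} (L : E →L[ℝ] ℝ) (c : ℂ) (A : ℝ × ℝ →L[ℝ] ℂ)
    (hg : ContDiffOn ℝ (⊤ : ℕ∞) g T) :
    ContDiffOn ℝ 2 (fun z => L (g (c + A z))) ((fun z => c + A z) ⁻¹' T) := by
  apply L.contDiff.comp_contDiffOn
  exact (hg.of_le two_le_top).comp (by fun_prop) (fun z hz => hz)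

theorem half (x₀ s : ℝ) (hs : s * s = 1) {T : Set ℂ} (hT : IsOpen T) {w : ℂ → M2}
    (hw : ContDiffOn ℝ (⊤ : ℕ∞) w T) {r : ℝ} (hr : 0 < r) (hr4 : r ≤ 1 / 4)
    (hbox : ∀ z : ℂ, |z.re - x₀| ≤ r → |z.im| ≤ r → z ∈ T) {M : ℝ} (hM : 0 ≤ M)
    (hP : ∀ z : ℂ, |z.re - x₀| ≤ r → |z.im| ≤ r →
      ‖px (px w) z + py (py w) z‖ ≤ M * (‖px w z‖ + ‖py w z‖))
    (h0 : ∀ x : ℝ, |x - x₀| ≤ r → px w x = 0 ∧ py w x = 0) :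
    ∀ x y : ℝ, |x| < r / 2 → 0 < y → y < r ^ 2 / 2 →
      px w (x₀ + mA s (x, y)) = 0 ∧ py w (x₀ + mA s (x, y)) = 0 := by
  obtain ⟨n, L, N1, N2, hN1, hN2, nb1, nb2⟩ := coords (E := M2)
  have hX := smooth_D hT hw 1
  have hY := smooth_D hT hw Complex.I
  have hs1 : |s| = 1 := by
    have : |s| * |s| = 1 := by rw [← abs_mul, hs, abs_one]
    nlinarith [abs_nonneg s]
  let p : Fin n → ℝ × ℝ → ℝ := fun k z => L k (px w (x₀ + mA s z))
  let q : Fin n → ℝ × ℝ → ℝ := fun k z => (s • L k) (py w (x₀ + mA s z))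
  let U : Set (ℝ × ℝ) := (fun z => (x₀ : ℂ) + mA s z) ⁻¹' T
  have hcont : Continuous (fun z => (x₀ : ℂ) + mA s z) := by fun_prop
  have hU : IsOpen U := hT.preimage hcont
  have hre : ∀ z : ℝ × ℝ, ((x₀ : ℂ) + mA s z).re = x₀ + z.1 := fun z => by simp [mA_apply]
  have him : ∀ z : ℝ × ℝ, ((x₀ : ℂ) + mA s z).im = z.2 * s := fun z => by simp [mA_apply]
  have hb : ∀ z ∈ Set.Icc ((-r, 0) : ℝ × ℝ) (r, r), |((x₀ : ℂ) + mA s z).re - x₀| ≤ r ∧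
      |((x₀ : ℂ) + mA s z).im| ≤ r := by
    intro z hz
    rw [hre, him, abs_mul, hs1, mul_one, abs_le, abs_le]
    have a1 : -r ≤ z.1 := hz.1.1
    have a2 : 0 ≤ z.2 := hz.1.2
    have a3 : z.1 ≤ r := hz.2.1
    have a4 : z.2 ≤ r := hz.2.2
    refine ⟨⟨?_, ?_⟩, ?_, ?_⟩ <;> linarith
  have hRU : Set.Icc ((-r, 0) : ℝ × ℝ) (r, r) ⊆ U := fun z hz => hbox _ (hb z hz).1 (hb z hz).2
  have A1 : mA s (1, 0) = 1 := by simp [mA_apply]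
  have A2 : mA s (0, 1) = s • Complex.I := by simp [mA_apply]
  have dpx : ∀ z ∈ U, DifferentiableAt ℝ (px w) (x₀ + mA s z) := fun z hz => smooth_diff hT hX hz
  have dpy : ∀ z ∈ U, DifferentiableAt ℝ (py w) (x₀ + mA s z) := fun z hz => smooth_diff hT hY hz
  have p1 : ∀ k, ∀ z ∈ U, fderiv ℝ (p k) z (1, 0) = L k (px (px w) (x₀ + mA s z)) := by
    intro k z hz
    refine (comp_fderiv (L k) (dpx z hz) _).trans ?_
    rw [A1]; rfl
  have p2 : ∀ k, ∀ z ∈ U, fderiv ℝ (p k) z (0, 1) = s * L k (py (px w) (x₀ + mA s z)) := by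
    intro k z hz
    refine (comp_fderiv (L k) (dpx z hz) _).trans ?_
    rw [A2, map_smul, map_smul]; rfl
  have q1 : ∀ k, ∀ z ∈ U, fderiv ℝ (q k) z (1, 0) = s * L k (px (py w) (x₀ + mA s z)) := by
    intro k z hz
    refine (comp_fderiv (s • L k) (dpy z hz) _).trans ?_
    rw [A1]; rfl
  have q2 : ∀ k, ∀ z ∈ U, fderiv ℝ (q k) z (0, 1) = L k (py (py w) (x₀ + mA s z)) := by
    intro k z hz
    refine (comp_fderiv (s • L k) (dpy z hz) _).trans ?_
    rw [A2, map_smul, map_smul]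
    change s * (s * L k (py (py w) (x₀ + mA s z))) = _
    rw [← mul_assoc, hs, one_mul]
  have key := uniq (p := p) (q := q) hU hr hr4 hRU (fun k => comp_smooth (L k) _ _ hX) (fun k => comp_smooth (s • L k) _ _ hY)
    (fun k z hz => by rw [p2 k z hz, q1 k z hz, D_symm hT hw hz])
    (fun k x hx => by
      have := (h0 (x₀ + x) (by rw [add_sub_cancel_left]; exact abs_le.2 hx)).1
      simp only [p, mA_apply]
      push_cast at this
      simp [this])
    (fun k x hx => by
      have := (h0 (x₀ + x) (by rw [add_sub_cancel_left]; exact abs_le.2 hx)).2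
      simp only [q, mA_apply]
      push_cast at this
      simp [this])
    (C := N1 ^ 2 * (2 * M ^ 2) * N2 ^ 2) (by positivity)
    (fun k z hz => by
      rw [p1 k z (hRU hz), q2 k z (hRU hz), ← map_add]
      have hPz := hP _ (hb z hz).1 (hb z hz).2
      set ζ := (x₀ : ℂ) + mA s z with hζ
      have e1 : ∑ j, (p j z ^ 2 + q j z ^ 2) =
          ∑ j, (L j (px w ζ)) ^ 2 + ∑ j, (L j (py w ζ)) ^ 2 := by
        rw [← Finset.sum_add_distrib]
        refine Finset.sum_congr rfl fun j _ => ?_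
        change (L j (px w ζ)) ^ 2 + (s * L j (py w ζ)) ^ 2 = _
        rw [mul_pow, sq s, hs, one_mul]
      rw [e1]
      have b1 := nb2 (px w ζ)
      have b2 := nb2 (py w ζ)
      calc (L k (px (px w) ζ + py (py w) ζ)) ^ 2 = |L k (px (px w) ζ + py (py w) ζ)| ^ 2 :=
            (sq_abs _).symm
        _ ≤ (N1 * (M * (‖px w ζ‖ + ‖py w ζ‖))) ^ 2 := by
          gcongr
          exact (nb1 k _).trans (by gcongr)
        _ = N1 ^ 2 * M ^ 2 * (‖px w ζ‖ + ‖py w ζ‖) ^ 2 := by ring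
        _ ≤ N1 ^ 2 * M ^ 2 * (2 * (‖px w ζ‖ ^ 2 + ‖py w ζ‖ ^ 2)) := by
          gcongr
          nlinarith [sq_nonneg (‖px w ζ‖ - ‖py w ζ‖)]
        _ ≤ N1 ^ 2 * M ^ 2 * (2 * (N2 ^ 2 * ∑ j, (L j (px w ζ)) ^ 2 +
              N2 ^ 2 * ∑ j, (L j (py w ζ)) ^ 2)) := by gcongr
        _ = _ := by ring)
  intro x y hx hy hy2
  have k1 := key (x, y) hx hy hy2
  constructor
  · exact coords_zero nb2 fun k => (k1 k).1
  · refine coords_zero nb2 fun k => ?_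
    have : s * L k (py w (x₀ + mA s (x, y))) = 0 := (k1 k).2
    rcases mul_eq_zero.1 this with h | h
    · rw [h] at hs; norm_num at hs
    · exact h

theorem curve_D {E : Type*} [NormedAddCommGroup E] [NormedSpace ℝ E] {J : Set ℝ} (hJ : IsOpen J)
    {f : ℂ → E} {g : ℝ → E} (h : ∀ x ∈ J, f (x : ℂ) = g x) {x : ℝ} (hx : x ∈ J)
    (hf : DifferentiableAt ℝ f (x : ℂ)) : fderiv ℝ f (x : ℂ) 1 = deriv g x := by
  have h1 : HasDerivAt (fun t : ℝ => (t : ℂ)) 1 x := Complex.ofRealCLM.hasDerivAt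
  have h2 := hf.hasFDerivAt.comp_hasDerivAt x h1
  have h3 : g =ᶠ[nhds x] (f ∘ fun t : ℝ => (t : ℂ)) := by
    filter_upwards [hJ.mem_nhds hx] with t ht
    exact (h t ht).symm
  rw [h3.deriv_eq]
  exact h2.deriv.symm

theorem const_box {E : Type*} [NormedAddCommGroup E] [NormedSpace ℝ E] {w : ℂ → E} {x₀ a b : ℝ}
    (ha : 0 < a) (hb : 0 < b)
    (hd : ∀ z : ℂ, |z.re - x₀| < a → |z.im| < b → DifferentiableAt ℝ w z ∧
      fderiv ℝ w z 1 = 0 ∧ fderiv ℝ w z Complex.I = 0) :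
    ∀ z : ℂ, |z.re - x₀| < a → |z.im| < b → w z = w x₀ := by
  let Q : Set ℂ := {z : ℂ | |z.re - x₀| < a} ∩ {z : ℂ | |z.im| < b}
  have hQo : IsOpen Q := by
    apply IsOpen.inter
    · exact isOpen_lt (by fun_prop) (by fun_prop)
    · exact isOpen_lt (by fun_prop) (by fun_prop)
  have hQc : Convex ℝ Q := by
    have e : Q = Set.Ioo (x₀ - a) (x₀ + a) ×ℂ Set.Ioo (-b) b := by
      ext z
      simp only [Q, Set.mem_inter_iff, Set.mem_setOf_eq, Complex.mem_reProdIm, Set.mem_Ioo, abs_lt]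
      constructor <;> rintro ⟨⟨h1, h2⟩, h3, h4⟩ <;> refine ⟨⟨?_, ?_⟩, ?_, ?_⟩ <;> linarith
    rw [e]
    exact ((convex_Ioo _ _).linear_preimage Complex.reLm).inter ((convex_Ioo _ _).linear_preimage Complex.imLm)
  intro z hz1 hz2
  have hx0 : (x₀ : ℂ) ∈ Q := by simp [Q, ha, hb]
  refine hQc.is_const_of_fderivWithin_eq_zero (𝕜 := ℝ)
    (fun y hy => (hd y hy.1 hy.2).1.differentiableWithinAt) ?_ ⟨hz1, hz2⟩ hx0
  intro y hy
  rw [fderivWithin_of_isOpen hQo hy]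
  ext u
  have hu : u = u.re • (1 : ℂ) + u.im • Complex.I := by simp
  rw [hu, map_add, map_smul, map_smul, (hd y hy.1 hy.2).2.1, (hd y hy.1 hy.2).2.2]
  simp

theorem gen_sub {E : Type*} [NormedAddCommGroup E] [NormedSpace ℝ E] {f g : ℂ → E} {z : ℂ}
    (hf : DifferentiableAt ℝ f z) (hg : DifferentiableAt ℝ g z) (v : ℂ) :
    fderiv ℝ (fun z => f z - g z) z v = fderiv ℝ f z v - fderiv ℝ g z v := by
  rw [fderiv_fun_sub hf hg]
  rfl

theorem diff_eq {S S' : Set ℂ} (hS : IsOpen S) (hS' : IsOpen S') {f f' : ℂ → M2}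
    (hf : ContDiffOn ℝ (⊤ : ℕ∞) f S) (hf' : ContDiffOn ℝ (⊤ : ℕ∞) f' S') {z : ℂ}
    (hz : z ∈ S ∩ S') (v : ℂ) :
    fderiv ℝ (fun z => f z - f' z) z v = fderiv ℝ f z v - fderiv ℝ f' z v := by
  exact gen_sub (smooth_diff hS hf hz.1) (smooth_diff hS' hf' hz.2) v

theorem diff_eq2 {S S' : Set ℂ} (hS : IsOpen S) (hS' : IsOpen S') {f f' : ℂ → M2}
    (hf : ContDiffOn ℝ (⊤ : ℕ∞) f S) (hf' : ContDiffOn ℝ (⊤ : ℕ∞) f' S') {z : ℂ}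
    (hz : z ∈ S ∩ S') (v u : ℂ) :
    fderiv ℝ (fun z => fderiv ℝ (fun z => f z - f' z) z v) z u =
      fderiv ℝ (fun z => fderiv ℝ f z v) z u - fderiv ℝ (fun z => fderiv ℝ f' z v) z u := by
  refine (congrArg (fun A => A u)
    (fderiv_congr (hS.inter hS') (fun z hz => diff_eq hS hS' hf hf' hz v) hz)).trans ?_
  exact diff_eq hS hS' (smooth_D hS hf v) (smooth_D hS' hf' v) hz u

theorem py_agree {v a b : M2} {c c' k : ℝ} (hc : 0 < c) (hc' : 0 < c') (hk : 0 < k)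
    (ha : a = (c : ℂ) • v) (hb : b = (c' : ℂ) • v)
    (h1 : ip a a = (k : ℂ)) (h2 : ip b b = (k : ℂ)) : a = b := by
  have e : ∀ t : ℂ, ip (t • v) (t • v) = t ^ 2 * ip v v := by
    intro t
    simp only [ip, Matrix.smul_mul, Matrix.mul_smul, Matrix.trace_smul, smul_eq_mul]
    ring
  rw [ha, e] at h1
  rw [hb, e] at h2
  have hk' : (k : ℂ) ≠ 0 := by exact_mod_cast hk.ne'
  have hv : ip v v ≠ 0 := by
    intro h
    rw [h, mul_zero] at h1
    exact hk' h1.symm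
  have h3 : (c : ℂ) ^ 2 = (c' : ℂ) ^ 2 := mul_right_cancel₀ hv (h1.trans h2.symm)
  have h4 : c ^ 2 = c' ^ 2 := by exact_mod_cast h3
  have h5 : c = c' := by
    nlinarith [mul_pos hc hc']
  rw [ha, hb, h5]

theorem lap_bound {S S' : Set ℂ} (hS : IsOpen S) (hS' : IsOpen S') {f f' : ℂ → M2} {H : ℝ}
    (hf : IsCMCImmersion S H f) (hf' : IsCMCImmersion S' H f') {z : ℂ}
    (hz : z ∈ S ∩ S') {K : ℝ} (h1 : ‖px f z‖ ≤ K) (h2 : ‖py f' z‖ ≤ K) :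
    ‖px (px (fun z => f z - f' z)) z + py (py (fun z => f z - f' z)) z‖ ≤
      2 * |H| * K * (‖px (fun z => f z - f' z) z‖ + ‖py (fun z => f z - f' z) z‖) := by
  have a1 : px (fun z => f z - f' z) z = px f z - px f' z := diff_eq hS hS' hf.1 hf'.1 hz 1
  have a2 : py (fun z => f z - f' z) z = py f z - py f' z := diff_eq hS hS' hf.1 hf'.1 hz I
  have b1 : px (px (fun z => f z - f' z)) z = px (px f) z - px (px f') z :=
    diff_eq2 hS hS' hf.1 hf'.1 hz 1 1
  have b2 : py (py (fun z => f z - f' z)) z = py (py f) z - py (py f') z :=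
    diff_eq2 hS hS' hf.1 hf'.1 hz I I
  have e : px (px (fun z => f z - f' z)) z + py (py (fun z => f z - f' z)) z =
      (2 * H : ℂ) • (px f z * py (fun z => f z - f' z) z + px (fun z => f z - f' z) z * py f' z) := by
    have c1 := cmc_eq hS hf hz.1
    have c2 := cmc_eq hS' hf' hz.2
    rw [b1, b2, a1, a2, sub_add_sub_comm, c1, c2, ← smul_sub]
    congr 1
    noncomm_ring
  rw [e]
  generalize px (fun z => f z - f' z) z = X
  generalize py (fun z => f z - f' z) z = Y
  have n1 : ‖(2 * H : ℂ)‖ = 2 * |H| := by simp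
  calc ‖(2 * H : ℂ) • (px f z * Y + X * py f' z)‖ = 2 * |H| * ‖px f z * Y + X * py f' z‖ := by
        rw [norm_smul, n1]
    _ ≤ 2 * |H| * (K * ‖Y‖ + ‖X‖ * K) := by
        gcongr
        refine (norm_add_le _ _).trans (add_le_add ?_ ?_)
        · exact (norm_mul_le _ _).trans (by gcongr)
        · exact (norm_mul_le _ _).trans (by gcongr)
    _ = _ := by ring

/-- solution of the Björling problem (uniqueness): two conformal CMC `H`
immersions with the same Björling data `(f₀, v)` along `J` agree on a rectangular
neighbourhood of every point `(x₀, 0)` of the curve. -/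
theorem bjorling_uniqueness
    (J : Set ℝ) (hJo : IsOpen J) (hJc : J.OrdConnected)
    (f₀ v : ℝ → M2)
    (hf₀ : AnalyticOnNhd ℝ f₀ J) (hv : AnalyticOnNhd ℝ v J)
    (hf₀su : ∀ x ∈ J, (f₀ x)ᴴ = -(f₀ x) ∧ (f₀ x).trace = 0)
    (hvsu : ∀ x ∈ J, (v x)ᴴ = -(v x) ∧ (v x).trace = 0)
    (hreg : ∀ x ∈ J, deriv f₀ x ≠ 0)
    (hvnz : ∀ x ∈ J, v x ≠ 0)
    (horth : ∀ x ∈ J, ip (v x) (deriv f₀ x) = 0)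
    (H : ℝ) (hH : H ≠ 0)
    (S S' : Set ℂ) (hS : IsOpen S) (hS' : IsOpen S')
    (hJS : ∀ x ∈ J, (x : ℂ) ∈ S) (hJS' : ∀ x ∈ J, (x : ℂ) ∈ S')
    (f f' : ℂ → M2)
    (hf : IsCMCImmersion S H f) (hf' : IsCMCImmersion S' H f')
    (hfc : ∀ x ∈ J, f (x : ℂ) = f₀ x) (hfc' : ∀ x ∈ J, f' (x : ℂ) = f₀ x)
    (hfv : ∀ x ∈ J, ∃ c : ℝ, 0 < c ∧ py f (x : ℂ) = (c : ℂ) • v x)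
    (hfv' : ∀ x ∈ J, ∃ c : ℝ, 0 < c ∧ py f' (x : ℂ) = (c : ℂ) • v x) :
    ∀ x₀ ∈ J, ∃ ε : ℝ, 0 < ε ∧ ∃ δ : ℝ, 0 < δ ∧
      ∀ z : ℂ, |z.re - x₀| < ε → |z.im| < δ → z ∈ S ∧ z ∈ S' ∧ f z = f' z := by
  intro x₀ hx₀
  have hT : IsOpen (S ∩ S') := hS.inter hS'
  have hw : ContDiffOn ℝ (⊤ : ℕ∞) (fun z => f z - f' z) (S ∩ S') :=
    (hf.1.mono Set.inter_subset_left).sub (hf'.1.mono Set.inter_subset_right)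
  have hxT : (x₀ : ℂ) ∈ S ∩ S' := ⟨hJS x₀ hx₀, hJS' x₀ hx₀⟩
  have data : ∀ x ∈ J, px (fun z => f z - f' z) (x : ℂ) = 0 ∧ py (fun z => f z - f' z) (x : ℂ) = 0 := by
    intro x hx
    have hxz : (x : ℂ) ∈ S ∩ S' := ⟨hJS x hx, hJS' x hx⟩
    have a1 : px (fun z => f z - f' z) (x : ℂ) = px f x - px f' x := diff_eq hS hS' hf.1 hf'.1 hxz 1
    have a2 : py (fun z => f z - f' z) (x : ℂ) = py f x - py f' x := diff_eq hS hS' hf.1 hf'.1 hxz I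
    have d1 : px f (x : ℂ) = deriv f₀ x := curve_D hJo hfc hx (smooth_diff hS hf.1 hxz.1)
    have d2 : px f' (x : ℂ) = deriv f₀ x := curve_D hJo hfc' hx (smooth_diff hS' hf'.1 hxz.2)
    rw [a1, a2, d1, d2, sub_self]
    refine ⟨rfl, ?_⟩
    rw [sub_eq_zero]
    obtain ⟨c, hc, hcv⟩ := hfv x hx
    obtain ⟨c', hc', hcv'⟩ := hfv' x hx
    obtain ⟨-, -, u, -, hu, -⟩ := hf
    obtain ⟨-, -, u', -, hu', -⟩ := hf'
    obtain ⟨i1, i2, -⟩ := hu x hxz.1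
    obtain ⟨j1, j2, -⟩ := hu' x hxz.2
    have hk : (0 : ℝ) < 4 * Real.exp (2 * u x) := by positivity
    refine py_agree hc hc' hk hcv hcv' i2 ?_
    rw [j2, ← j1, d2, ← d1, i1]
  have c1 : ContinuousAt (px f) (x₀ : ℂ) := (smooth_diff hS (smooth_D hS hf.1 1) hxT.1).continuousAt
  have c2 : ContinuousAt (py f') (x₀ : ℂ) :=
    (smooth_diff hS' (smooth_D hS' hf'.1 I) hxT.2).continuousAt
  set K : ℝ := max (‖px f x₀‖ + 1) (‖py f' x₀‖ + 1) with hK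
  have hK0 : 0 ≤ K := le_trans (by positivity) (le_max_left _ _)
  have n1 : ∀ᶠ z in nhds (x₀ : ℂ), ‖px f z‖ ≤ K := by
    have : ‖px f x₀‖ < K := lt_of_lt_of_le (by linarith) (le_max_left _ _)
    filter_upwards [c1.norm.eventually_lt_const this] with z hz using hz.le
  have n2 : ∀ᶠ z in nhds (x₀ : ℂ), ‖py f' z‖ ≤ K := by
    have : ‖py f' x₀‖ < K := lt_of_lt_of_le (by linarith) (le_max_right _ _)
    filter_upwards [c2.norm.eventually_lt_const this] with z hz using hz.le
  have n3 : ∀ᶠ z in nhds (x₀ : ℂ), z ∈ S ∩ S' := hT.mem_nhds hxT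
  obtain ⟨ρ, hρ, hball⟩ := Metric.eventually_nhds_iff.1 (n1.and (n2.and n3))
  obtain ⟨ρ', hρ', hballJ⟩ := Metric.isOpen_iff.1 hJo x₀ hx₀
  obtain ⟨r, hr, hr1, hr2, hr3⟩ : ∃ r : ℝ, 0 < r ∧ r ≤ 1 / 4 ∧ r ≤ ρ / 4 ∧ r ≤ ρ' / 2 :=
    ⟨min (1 / 4) (min (ρ / 4) (ρ' / 2)), by positivity, min_le_left _ _,
      (min_le_right _ _).trans (min_le_left _ _), (min_le_right _ _).trans (min_le_right _ _)⟩
  have hin : ∀ z : ℂ, |z.re - x₀| ≤ r → |z.im| ≤ r → dist z x₀ < ρ := by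
    intro z h1 h2
    have h3 := Complex.norm_le_abs_re_add_abs_im (z - x₀)
    rw [dist_eq_norm]
    simp only [Complex.sub_re, Complex.sub_im, Complex.ofReal_re, Complex.ofReal_im, sub_zero] at h3
    linarith
  have hJr : ∀ x : ℝ, |x - x₀| ≤ r → x ∈ J := by
    intro x hx
    apply hballJ
    rw [Metric.mem_ball, Real.dist_eq]
    linarith
  have hh := fun s hs => half x₀ s hs hT hw hr hr1 (fun z h1 h2 => (hball (hin z h1 h2)).2.2)
    (M := 2 * |H| * K) (by positivity)
    (fun z h1 h2 => lap_bound hS hS' hf hf' (hball (hin z h1 h2)).2.2 (hball (hin z h1 h2)).1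
      (hball (hin z h1 h2)).2.1)
    (fun x hx => data x (hJr x hx))
  have hrr : r ^ 2 / 2 ≤ r := by nlinarith
  have hzero : ∀ z : ℂ, |z.re - x₀| < r / 2 → |z.im| < r ^ 2 / 2 →
      px (fun z => f z - f' z) z = 0 ∧ py (fun z => f z - f' z) z = 0 := by
    intro z h1 h2
    rcases lt_trichotomy z.im 0 with h | h | h
    · have := hh (-1) (by norm_num) (z.re - x₀) (-z.im) h1 (by linarith)
        (by rw [abs_of_neg h] at h2; exact h2)
      have e : (x₀ : ℂ) + mA (-1) (z.re - x₀, -z.im) = z := by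
        rw [mA_apply]
        apply Complex.ext <;> simp
      rwa [e] at this
    · have e : ((z.re : ℝ) : ℂ) = z := by
        apply Complex.ext <;> simp [h]
      have := data z.re (hJr _ (by linarith))
      rwa [e] at this
    · have := hh 1 (by norm_num) (z.re - x₀) z.im h1 h
        (by rw [abs_of_pos h] at h2; exact h2)
      have e : (x₀ : ℂ) + mA 1 (z.re - x₀, z.im) = z := by
        rw [mA_apply]
        apply Complex.ext <;> simp
      rwa [e] at this
  have hmem : ∀ z : ℂ, |z.re - x₀| < r / 2 → |z.im| < r ^ 2 / 2 → z ∈ S ∩ S' := fun z h1 h2 =>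
    (hball (hin z (by linarith) (by linarith))).2.2
  have hcst := const_box (w := fun z => f z - f' z) (x₀ := x₀) (a := r / 2) (b := r ^ 2 / 2)
    (by positivity) (by positivity)
    (fun z h1 h2 => ⟨smooth_diff hT hw (hmem z h1 h2), hzero z h1 h2⟩)
  refine ⟨r / 2, by positivity, r ^ 2 / 2, by positivity, fun z h1 h2 => ?_⟩
  refine ⟨(hmem z h1 h2).1, (hmem z h1 h2).2, ?_⟩
  have := hcst z h1 h2
  simp only [hfc x₀ hx₀, hfc' x₀ hx₀, sub_self] at this
  exact sub_eq_zero.1 this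
end
end

section
/- (CMC surfaces containing a line segment: existence.) Let J = (α,β) ⊆ ℝ be an open interval (possibly unbounded), θ₀ : J → ℝ a real analytic function with θ₀(x₀) = 0 for some x₀ ∈ J, and H ≠ 0 a real number. Then there exist an open set Σ ⊆ ℂ containing J × {0}, to which θ₀′ extends holomorphically with extension θ̌_x, and a smooth conformal immersion f : Σ → su(2) with constant mean curvature H such that: f(x,0) = 2x·e₁ for all x ∈ J (so f maps J × {0} onto the line segment {(2x,0,0) : x ∈ J} by (x,0) ↦ (2x,0,0)); ∂_y f(x,0)/|∂_y f(x,0)| = cos θ₀(x)·e₂ + sin θ₀(x)·e₃ for all x ∈ J; and the Hopf differential coefficient of f is Q = -i θ̌_x - 2H on Σ. -/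
open Matrix Complex

noncomputable section

attribute [local instance] Matrix.linftyOpNormedAddCommGroup Matrix.linftyOpNormedSpace
  Matrix.linftyOpNormedRing Matrix.linftyOpNormedAlgebra

section SepHolSection
open Set Filter Topology Metric

/-- Cauchy: a continuous family of holomorphic functions is holomorphic into `C(K,ℂ)`. -/
lemma exists_hol_curry {K : Type*} [TopologicalSpace K] [CompactSpace K] {D : Set ℂ}
    (hD : IsOpen D) (h : ℂ → K → ℂ)
    (hc : ContinuousOn (fun p : ℂ × K => h p.1 p.2) (D ×ˢ univ))
    (hd : ∀ k, DifferentiableOn ℂ (fun z => h z k) D) :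
    ∃ G : ℂ → C(K, ℂ), DifferentiableOn ℂ G D ∧ ∀ z ∈ D, ∀ k, G z k = h z k := by
  classical
  have hcz : ∀ z ∈ D, Continuous (h z) := by
    intro z hz
    have : ContinuousOn (fun k : K => h z k) univ :=
      hc.comp (f := fun k : K => (z, k)) (by fun_prop) (fun k _ => ⟨hz, mem_univ _⟩)
    exact continuousOn_univ.1 this
  let G : ℂ → C(K, ℂ) := fun z => if hz : z ∈ D then ⟨h z, hcz z hz⟩ else 0
  have hG : ∀ z ∈ D, ∀ k, G z k = h z k := by
    intro z hz k
    simp [G, hz]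
  have hGc : ContinuousOn G D := by
    rw [continuousOn_iff_continuous_domRestrict]
    have hc1 : Continuous (fun p : D × K => h p.1 p.2) := by
      refine hc.comp_continuous (f := fun p : D × K => ((p.1 : ℂ), p.2)) (by fun_prop) ?_
      intro p
      exact ⟨p.1.2, mem_univ _⟩
    have := (ContinuousMap.curry ⟨_, hc1⟩).continuous
    convert this using 1
    ext z k
    simp [G]
  refine ⟨G, ?_, hG⟩
  intro z0 hz0
  obtain ⟨R, hR, hRD⟩ := Metric.nhds_basis_closedBall.mem_iff.1 (hD.mem_nhds hz0)
  lift R to NNReal using hR.le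
  have hR' : 0 < R := by exact_mod_cast hR
  have hGs : ContinuousOn G (sphere z0 R) := hGc.mono (sphere_subset_closedBall.trans hRD)
  have hci : CircleIntegrable G z0 R := hGs.circleIntegrable R.2
  have hps := hasFPowerSeriesOn_cauchy_integral hci hR'
  have hdiff : DifferentiableAt ℂ (fun z => (2 * Real.pi * Complex.I : ℂ)⁻¹ •
      ∮ ζ in C(z0, R), (ζ - z)⁻¹ • G ζ) z0 := by
    simpa using hps.analyticAt.differentiableAt
  refine DifferentiableAt.differentiableWithinAt ?_
  refine hdiff.congr_of_eventuallyEq ?_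
  filter_upwards [Metric.ball_mem_nhds z0 hR] with z hz
  ext k
  have hzD : z ∈ D := hRD (ball_subset_closedBall hz)
  have h1 : (∮ ζ in C(z0, R), (ζ - z)⁻¹ • G ζ) k = ∮ ζ in C(z0, R), (ζ - z)⁻¹ • h ζ k := by
    have hint : CircleIntegrable (fun ζ => (ζ - z)⁻¹ • G ζ) z0 R := by
      refine ContinuousOn.circleIntegrable R.2 ?_
      have hi : ContinuousOn (fun ζ : ℂ => (ζ - z)⁻¹) (sphere z0 R) := ?_
      · exact ContinuousOn.smul hi hGs
      refine ContinuousOn.inv₀ (by fun_prop) ?_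
      intro ζ hζ h0
      have : ζ = z := sub_eq_zero.1 h0
      subst this
      simp only [mem_ball, mem_sphere] at hz hζ
      linarith
    have h2 := (ContinuousMap.evalCLM ℂ k).intervalIntegral_comp_comm
      (CircleIntegrable.out hint)
    unfold circleIntegral
    rw [ContinuousMap.evalCLM_apply] at h2
    rw [← h2]
    refine intervalIntegral.integral_congr ?_
    intro t _
    have : circleMap z0 R t ∈ D := hRD (circleMap_mem_closedBall z0 R.2 t)
    simp [ContinuousMap.evalCLM_apply, hG _ this]
  have h3 := two_pi_I_inv_smul_circleIntegral_sub_inv_smul_of_differentiable_on_off_countable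
    (R := R) (c := z0) (w := z) (f := fun ζ => h ζ k) countable_empty hz
    ((hd k).continuousOn.mono hRD) (fun x hx => (hd k).differentiableAt
      (hD.mem_nhds (hRD (ball_subset_closedBall hx.1))))
  rw [ContinuousMap.smul_apply, h1, h3, hG z hzD]

/-- Continuous and separately holomorphic on `D × D`. -/
def SepHol (D : Set ℂ) (u : ℂ → ℂ → ℂ) : Prop :=
  ContinuousOn (fun p : ℂ × ℂ => u p.1 p.2) (D ×ˢ D) ∧
  (∀ w ∈ D, DifferentiableOn ℂ (fun z => u z w) D) ∧
  (∀ z ∈ D, DifferentiableOn ℂ (fun w => u z w) D)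

lemma SepHol.swap {D : Set ℂ} {u : ℂ → ℂ → ℂ} (h : SepHol D u) :
    SepHol D (fun z w => u w z) := by
  refine ⟨?_, h.2.2, h.2.1⟩
  exact h.1.comp (f := fun p : ℂ × ℂ => (p.2, p.1)) (by fun_prop) (fun p hp => ⟨hp.2, hp.1⟩)

/-- partial derivatives -/
def d1 (u : ℂ → ℂ → ℂ) (z w : ℂ) : ℂ := deriv (fun s => u s w) z
def d2 (u : ℂ → ℂ → ℂ) (z w : ℂ) : ℂ := deriv (fun s => u z s) w

lemma SepHol.d1 {D : Set ℂ} (hD : IsOpen D) {u : ℂ → ℂ → ℂ} (h : SepHol D u) :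
    SepHol D (d1 u) := by
  have key : ∀ w0 ∈ D, ∃ R > 0, closedBall w0 R ⊆ D ∧ ∃ G : ℂ → C(closedBall w0 R, ℂ),
      DifferentiableOn ℂ G D ∧ ∀ z ∈ D, ∀ k, G z k = u z k := by
    intro w0 hw0
    obtain ⟨R, hR, hRD⟩ := Metric.nhds_basis_closedBall.mem_iff.1 (hD.mem_nhds hw0)
    have : CompactSpace (closedBall w0 R) :=
      isCompact_iff_compactSpace.1 (isCompact_closedBall w0 R)
    obtain ⟨G, hG⟩ := exists_hol_curry (K := closedBall w0 R) hD (fun z k => u z k)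
      (h.1.comp (f := fun p : ℂ × closedBall w0 R => (p.1, (p.2 : ℂ))) (by fun_prop)
        (fun p hp => ⟨hp.1, hRD p.2.2⟩)) (fun k => h.2.1 k (hRD k.2))
    exact ⟨R, hR, hRD, G, hG⟩
  have key2 : ∀ (w0 : ℂ) (R : ℝ), ∀ G : ℂ → C(closedBall w0 R, ℂ),
      DifferentiableOn ℂ G D → (∀ z ∈ D, ∀ k, G z k = u z k) → ∀ z ∈ D, ∀ k : closedBall w0 R,
      deriv G z k = _root_.d1 u z (k : ℂ) := by
    intro w0 R G hG1 hG2 z hz k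
    have : CompactSpace (closedBall w0 R) :=
      isCompact_iff_compactSpace.1 (isCompact_closedBall w0 R)
    have h1 : HasDerivAt G (deriv G z) z := (hG1.differentiableAt (hD.mem_nhds hz)).hasDerivAt
    have h2 := (ContinuousMap.evalCLM ℂ k).hasFDerivAt.comp_hasDerivAt z h1
    have h3 : HasDerivAt (fun s => u s k) (deriv G z k) z := by
      refine h2.congr_of_eventuallyEq ?_
      filter_upwards [hD.mem_nhds hz] with s hs
      simp [hG2 s hs]
    exact h3.deriv.symm
  refine ⟨?_, ?_, ?_⟩
  · rintro ⟨z0, w0⟩ ⟨hz0, hw0⟩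
    obtain ⟨R, hR, hRD, G, hG1, hG2⟩ := key w0 hw0
    have : CompactSpace (closedBall w0 R) :=
      isCompact_iff_compactSpace.1 (isCompact_closedBall w0 R)
    have hc : ContinuousOn (deriv G) D := (hG1.deriv hD).continuousOn
    have : ContinuousOn (fun p : ℂ × ℂ => _root_.d1 u p.1 p.2) (D ×ˢ closedBall w0 R) := by
      rw [continuousOn_iff_continuous_domRestrict]
      have h4 : Continuous (fun p : (D ×ˢ closedBall w0 R : Set (ℂ × ℂ)) => deriv G p.1.1) :=
        hc.comp_continuous (by fun_prop) (fun p => p.2.1)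
      have h5 : Continuous (fun p : (D ×ˢ closedBall w0 R : Set (ℂ × ℂ)) =>
        deriv G p.1.1 (⟨p.1.2, p.2.2⟩ : closedBall w0 R)) := by
        refine Continuous.eval h4 ?_
        fun_prop
      convert h5 using 1
      ext p
      exact (key2 w0 R G hG1 hG2 p.1.1 p.2.1 ⟨p.1.2, p.2.2⟩).symm
    refine (this.continuousAt ?_).continuousWithinAt
    exact prod_mem_nhds (hD.mem_nhds hz0) (closedBall_mem_nhds w0 hR)
  · intro w hw
    exact (h.2.1 w hw).deriv hD
  · intro z0 hz0 w0 hw0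
    obtain ⟨R, hR, hRD, G, hG1, hG2⟩ := key w0 hw0
    have : CompactSpace (closedBall w0 R) :=
      isCompact_iff_compactSpace.1 (isCompact_closedBall w0 R)
    have h1 : HasDerivAt G (deriv G z0) z0 := (hG1.differentiableAt (hD.mem_nhds hz0)).hasDerivAt
    have h2 := h1.tendsto_slope
    rw [ContinuousMap.tendsto_iff_tendstoUniformly] at h2
    have h3 : TendstoUniformlyOn (fun t w => slope (fun s => u s w) z0 t)
        (fun w => _root_.d1 u z0 w) (𝓝[≠] z0) (ball w0 R) := by
      rw [Metric.tendstoUniformlyOn_iff]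
      rw [Metric.tendstoUniformly_iff] at h2
      intro ε hε
      filter_upwards [h2 ε hε, mem_nhdsWithin_of_mem_nhds (hD.mem_nhds hz0)] with t ht htD w hw
      have := ht ⟨w, ball_subset_closedBall hw⟩
      rw [key2 w0 R G hG1 hG2 z0 hz0] at this
      simpa [slope, hG2 t htD, hG2 z0 hz0] using this
    have h4 : DifferentiableOn ℂ (fun w => _root_.d1 u z0 w) (ball w0 R) := by
      refine h3.tendstoLocallyUniformlyOn.differentiableOn ?_ isOpen_ball
      filter_upwards [mem_nhdsWithin_of_mem_nhds (hD.mem_nhds hz0)] with t ht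
      simp only [slope, vsub_eq_sub, smul_eq_mul]
      have ha := (h.2.2 t ht).mono (ball_subset_closedBall.trans hRD)
      have hb := (h.2.2 z0 hz0).mono (ball_subset_closedBall.trans hRD)
      exact (ha.sub hb).const_smul ((t - z0)⁻¹)
    exact (h4.differentiableAt (isOpen_ball.mem_nhds (mem_ball_self hR))).differentiableWithinAt

lemma SepHol.d2 {D : Set ℂ} (hD : IsOpen D) {u : ℂ → ℂ → ℂ} (h : SepHol D u) :
    SepHol D (d2 u) := (h.swap.d1 hD).swap

lemma SepHol.hasStrictFDerivAt {D : Set ℂ} (hD : IsOpen D) {u : ℂ → ℂ → ℂ} (h : SepHol D u)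
    {p : ℂ × ℂ} (hp : p ∈ D ×ˢ D) :
    HasStrictFDerivAt (fun p : ℂ × ℂ => u p.1 p.2)
      (_root_.d1 u p.1 p.2 • ContinuousLinearMap.fst ℂ ℂ ℂ +
       _root_.d2 u p.1 p.2 • ContinuousLinearMap.snd ℂ ℂ ℂ) p := by
  have hn : D ×ˢ D ∈ 𝓝 p := (hD.prod hD).mem_nhds hp
  have := hasStrictFDerivAt_uncurry_coprod (𝕜 := ℂ) (u := p) (f := u)
    (f₁ := fun z w => ContinuousLinearMap.toSpanSingleton ℂ (_root_.d1 u z w))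
    (f₂ := fun z w => ContinuousLinearMap.toSpanSingleton ℂ (_root_.d2 u z w)) ?_ ?_ ?_ ?_
  · have e : _root_.d1 u p.1 p.2 • ContinuousLinearMap.fst ℂ ℂ ℂ +
       _root_.d2 u p.1 p.2 • ContinuousLinearMap.snd ℂ ℂ ℂ =
       (ContinuousLinearMap.toSpanSingleton ℂ (_root_.d1 u p.1 p.2)).coprod
       (ContinuousLinearMap.toSpanSingleton ℂ (_root_.d2 u p.1 p.2)) := by
      ext <;> simp
    rw [e]
    exact this
  · filter_upwards [hn] with v hv
    exact ((h.2.1 v.2 hv.2).differentiableAt (hD.mem_nhds hv.1)).hasDerivAt.hasFDerivAt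
  · filter_upwards [hn] with v hv
    exact ((h.2.2 v.1 hv.1).differentiableAt (hD.mem_nhds hv.2)).hasDerivAt.hasFDerivAt
  · have h1 := (h.d1 hD).1.continuousAt hn
    exact (ContinuousLinearMap.toSpanSingletonCLE (𝕜 := ℂ) (E := ℂ)).continuous.continuousAt.comp h1
  · have h1 := (h.d2 hD).1.continuousAt hn
    exact (ContinuousLinearMap.toSpanSingletonCLE (𝕜 := ℂ) (E := ℂ)).continuous.continuousAt.comp h1

lemma SepHol.contDiffOn_nat {D : Set ℂ} (hD : IsOpen D) (n : ℕ) : ∀ {u : ℂ → ℂ → ℂ},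
    SepHol D u → ContDiffOn ℂ n (fun p : ℂ × ℂ => u p.1 p.2) (D ×ˢ D) := by
  induction n with
  | zero => intro u h; simpa [contDiffOn_zero] using h.1
  | succ n ih =>
    intro u h
    have := (contDiffOn_succ_iff_fderiv_of_isOpen (𝕜 := ℂ) (n := (n : WithTop ℕ∞))
      (f := fun p : ℂ × ℂ => u p.1 p.2) (hD.prod hD)).2 ⟨?_, ?_, ?_⟩
    · exact_mod_cast this
    · intro p hp
      exact (h.hasStrictFDerivAt hD hp).hasFDerivAt.differentiableAt.differentiableWithinAt
    · intro h0; exact absurd h0 (by simp)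
    · have h1 := ih (h.d1 hD)
      have h2 := ih (h.d2 hD)
      have h3 : ContDiffOn ℂ n (fun p : ℂ × ℂ =>
          _root_.d1 u p.1 p.2 • ContinuousLinearMap.fst ℂ ℂ ℂ +
          _root_.d2 u p.1 p.2 • ContinuousLinearMap.snd ℂ ℂ ℂ) (D ×ˢ D) :=
        (h1.smul contDiffOn_const).add (h2.smul contDiffOn_const)
      refine ContDiffOn.congr h3 ?_
      intro p hp
      exact (h.hasStrictFDerivAt hD hp).hasFDerivAt.fderiv

lemma SepHol.contDiffOn {D : Set ℂ} (hD : IsOpen D) {u : ℂ → ℂ → ℂ}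
    (h : SepHol D u) : ContDiffOn ℂ (⊤ : ℕ∞) (fun p : ℂ × ℂ => u p.1 p.2) (D ×ˢ D) :=
  contDiffOn_infty.2 fun n => h.contDiffOn_nat hD n

end SepHolSection

section SepHolSection2
open Set Filter Topology Metric ComplexConjugate

/-- `u*(z,w) = conj (u (conj w) (conj z))`. -/
def sst (u : ℂ → ℂ → ℂ) (z w : ℂ) : ℂ := conj (u (conj w) (conj z))

lemma SepHol.congr {D : Set ℂ} {u v : ℂ → ℂ → ℂ} (hu : SepHol D u)
    (h : ∀ z ∈ D, ∀ w ∈ D, v z w = u z w) : SepHol D v := by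
  refine ⟨hu.1.congr (fun p hp => h _ hp.1 _ hp.2), fun w hw => ?_, fun z hz => ?_⟩
  · exact (hu.2.1 w hw).congr (fun z hz => h z hz w hw)
  · exact (hu.2.2 z hz).congr (fun w hw => h z hz w hw)

lemma SepHol.mul {D : Set ℂ} {u v : ℂ → ℂ → ℂ} (hu : SepHol D u) (hv : SepHol D v) :
    SepHol D (fun z w => u z w * v z w) :=
  ⟨hu.1.mul hv.1, fun w hw => (hu.2.1 w hw).mul (hv.2.1 w hw),
    fun w hw => (hu.2.2 w hw).mul (hv.2.2 w hw)⟩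

lemma SepHol.add {D : Set ℂ} {u v : ℂ → ℂ → ℂ} (hu : SepHol D u) (hv : SepHol D v) :
    SepHol D (fun z w => u z w + v z w) :=
  ⟨hu.1.add hv.1, fun w hw => (hu.2.1 w hw).add (hv.2.1 w hw),
    fun w hw => (hu.2.2 w hw).add (hv.2.2 w hw)⟩

lemma SepHol.of_fst {D : Set ℂ} {φ : ℂ → ℂ} (hφ : DifferentiableOn ℂ φ D) :
    SepHol D (fun z _ => φ z) :=
  ⟨hφ.continuousOn.comp (f := fun p : ℂ × ℂ => p.1) (by fun_prop) (fun p hp => hp.1),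
    fun _ _ => hφ, fun _ _ => differentiableOn_const _⟩

lemma SepHol.const {D : Set ℂ} (c : ℂ) : SepHol D (fun _ _ => c) :=
  SepHol.of_fst (differentiableOn_const c)

lemma SepHol.sst {D : Set ℂ} (hD : IsOpen D) (hDc : ∀ z ∈ D, conj z ∈ D) {u : ℂ → ℂ → ℂ}
    (hu : SepHol D u) : SepHol D (sst u) := by
  refine ⟨?_, ?_, ?_⟩
  · have h1 : ContinuousOn (fun p : ℂ × ℂ => u (conj p.2) (conj p.1)) (D ×ˢ D) :=
      hu.1.comp (f := fun p : ℂ × ℂ => (conj p.2, conj p.1)) (by fun_prop)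
        (fun p hp => ⟨hDc _ hp.2, hDc _ hp.1⟩)
    exact Complex.continuous_conj.comp_continuousOn h1
  · intro w hw z hz
    have h1 : DifferentiableAt ℂ (fun s => u (conj w) s) (conj z) :=
      (hu.2.2 _ (hDc w hw)).differentiableAt (hD.mem_nhds (hDc z hz))
    have h2 := h1.conj_conj
    rw [Complex.conj_conj] at h2
    exact h2.differentiableWithinAt
  · intro z hz w hw
    have h1 : DifferentiableAt ℂ (fun s => u s (conj z)) (conj w) :=
      (hu.2.1 _ (hDc z hz)).differentiableAt (hD.mem_nhds (hDc w hw))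
    have h2 := h1.conj_conj
    rw [Complex.conj_conj] at h2
    exact h2.differentiableWithinAt

lemma sst_sst (u : ℂ → ℂ → ℂ) : sst (sst u) = u := by
  ext z w; simp [sst]

lemma SepHol.hasDerivAt1 {D : Set ℂ} (hD : IsOpen D) {u : ℂ → ℂ → ℂ} (hu : SepHol D u)
    {z w : ℂ} (hz : z ∈ D) (hw : w ∈ D) : HasDerivAt (fun s => u s w) (_root_.d1 u z w) z :=
  ((hu.2.1 w hw).differentiableAt (hD.mem_nhds hz)).hasDerivAt

lemma SepHol.hasDerivAt2 {D : Set ℂ} (hD : IsOpen D) {u : ℂ → ℂ → ℂ} (hu : SepHol D u)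
    {z w : ℂ} (hz : z ∈ D) (hw : w ∈ D) : HasDerivAt (fun s => u z s) (_root_.d2 u z w) w :=
  ((hu.2.2 z hz).differentiableAt (hD.mem_nhds hw)).hasDerivAt

lemma d1_sst {D : Set ℂ} (hD : IsOpen D) (hDc : ∀ z ∈ D, conj z ∈ D) {u : ℂ → ℂ → ℂ}
    (hu : SepHol D u) {z w : ℂ} (hz : z ∈ D) (hw : w ∈ D) :
    d1 (sst u) z w = sst (d2 u) z w := by
  have h1 := (hu.hasDerivAt2 hD (hDc w hw) (hDc z hz)).conj_conj
  rw [Complex.conj_conj] at h1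
  exact h1.deriv

/-- `∫_z^w u(z,s) ds` along the segment. -/
def Iop (u : ℂ → ℂ → ℂ) (z w : ℂ) : ℂ := (w - z) • ∫ t in (0:ℝ)..1, u z (z + t • (w - z))

lemma Iop_self (u : ℂ → ℂ → ℂ) (z : ℂ) : Iop u z z = 0 := by simp [Iop]

lemma seg_mem {D : Set ℂ} (hD : Convex ℝ D) {z w : ℂ} (hz : z ∈ D) (hw : w ∈ D) {t : ℝ}
    (ht : t ∈ Icc (0:ℝ) 1) : z + t • (w - z) ∈ D := hD.add_smul_sub_mem hz hw ht

lemma Iop_hasDerivAt {c : ℂ} {r : ℝ} {u : ℂ → ℂ → ℂ} (hu : SepHol (ball c r) u)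
    {z w : ℂ} (hz : z ∈ ball c r) (hw : w ∈ ball c r) :
    HasDerivAt (fun s => Iop u z s) (u z w) w := by
  obtain ⟨g, hg⟩ := (hu.2.2 z hz).isExactOn_ball
  have key : ∀ s ∈ ball c r, Iop u z s = g s - g z := by
    intro s hs
    have h := intervalIntegral.integral_unitInterval_deriv_eq_sub (𝕜 := ℂ) (f := g)
      (f' := u z) (z₀ := z) (z₁ := s - z) ?_ ?_
    · unfold Iop
      rw [h]; simp
    · refine (hu.2.2 z hz).continuousOn.comp (by fun_prop) ?_
      intro t ht
      exact seg_mem (convex_ball c r) hz hs ht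
    · intro t ht
      exact hg _ (seg_mem (convex_ball c r) hz hs ht)
  refine ((hg w hw).sub_const (g z)).congr_of_eventuallyEq ?_
  filter_upwards [isOpen_ball.mem_nhds hw] with s hs using key s hs

/-- integration over the unit interval as a continuous linear functional -/
def intCLM : C(unitInterval, ℂ) →L[ℂ] ℂ :=
  LinearMap.mkContinuous
    { toFun := fun g => ∫ t in (0:ℝ)..1, g (Set.projIcc 0 1 zero_le_one t)
      map_add' := by
        intro f g
        have hc : ∀ f : C(unitInterval, ℂ), Continuous
            (fun t : ℝ => f (Set.projIcc 0 1 zero_le_one t)) :=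
          fun f => f.continuous.comp continuous_projIcc
        exact intervalIntegral.integral_add ((hc f).intervalIntegrable _ _)
          ((hc g).intervalIntegrable _ _)
      map_smul' := by
        intro a g
        exact intervalIntegral.integral_smul a _ } 1 (by
    intro g
    have := intervalIntegral.norm_integral_le_of_norm_le_const (a := 0) (b := 1) (C := ‖g‖)
      (f := fun t : ℝ => g (Set.projIcc 0 1 zero_le_one t)) (fun t _ => g.norm_coe_le_norm _)
    simpa using this)

lemma intCLM_eq (h : ℝ → ℂ) (g : C(unitInterval, ℂ)) (hg : ∀ t : unitInterval, g t = h t) :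
    intCLM g = ∫ t in (0:ℝ)..1, h t := by
  change ∫ t in (0:ℝ)..1, g (Set.projIcc 0 1 zero_le_one t) = _
  refine intervalIntegral.integral_congr ?_
  intro t ht
  rw [uIcc_of_le zero_le_one] at ht
  simp only [hg]
  rw [projIcc_of_mem _ ht]

lemma SepHol.Iop {c : ℂ} {r : ℝ} {u : ℂ → ℂ → ℂ} (hu : SepHol (ball c r) u) :
    SepHol (ball c r) (Iop u) := by
  have hseg : ∀ z ∈ ball c r, ∀ w ∈ ball c r, ∀ t : unitInterval,
      z + (t : ℝ) • (w - z) ∈ ball c r := fun z hz w hw t => seg_mem (convex_ball c r) hz hw t.2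
  refine ⟨?_, ?_, ?_⟩
  · have hc1 : Continuous (fun p : (ball c r ×ˢ ball c r : Set (ℂ × ℂ)) × unitInterval =>
        u p.1.1.1 (p.1.1.1 + (p.2 : ℝ) • (p.1.1.2 - p.1.1.1))) := by
      refine hu.1.comp_continuous
        (f := fun p : (ball c r ×ˢ ball c r : Set (ℂ × ℂ)) × unitInterval =>
        (p.1.1.1, (p.1.1.1 + (p.2 : ℝ) • (p.1.1.2 - p.1.1.1)))) (by fun_prop) ?_
      intro p
      exact ⟨p.1.2.1, hseg _ p.1.2.1 _ p.1.2.2 _⟩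
    have h2 := (ContinuousMap.curry ⟨_, hc1⟩).continuous
    have h3 := intCLM.continuous.comp h2
    have h4 : ContinuousOn (fun p : ℂ × ℂ => ∫ t in (0:ℝ)..1, u p.1 (p.1 + t • (p.2 - p.1)))
        (ball c r ×ˢ ball c r) := by
      rw [continuousOn_iff_continuous_domRestrict]
      convert h3 using 1
      ext p
      symm
      exact intCLM_eq (fun t => u p.1.1 (p.1.1 + t • (p.1.2 - p.1.1))) _ (fun t => rfl)
    unfold _root_.Iop
    have h5 : ContinuousOn (fun p : ℂ × ℂ => p.2 - p.1) (ball c r ×ˢ ball c r) := by fun_prop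
    exact ContinuousOn.smul h5 h4
  · intro w hw
    have hA : ContinuousOn (fun p : ℂ × unitInterval => u p.1 (p.1 + (p.2 : ℝ) • (w - p.1)))
        (ball c r ×ˢ univ) :=
      hu.1.comp (f := fun p : ℂ × unitInterval =>
        (p.1, (p.1 + (p.2 : ℝ) • (w - p.1)))) (by fun_prop)
        (fun p hp => ⟨hp.1, hseg _ hp.1 _ hw _⟩)
    have hB : ∀ t : unitInterval,
        DifferentiableOn ℂ (fun z => u z (z + (t : ℝ) • (w - z))) (ball c r) := by
      intro t z hz
      have h1 := (hu.hasStrictFDerivAt isOpen_ball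
        (p := (z, z + (t : ℝ) • (w - z))) ⟨hz, hseg z hz w hw t⟩).hasFDerivAt.differentiableAt
      have h2 : DifferentiableAt ℂ (fun z : ℂ => (z, z + (t : ℝ) • (w - z))) z := by
        simp only [Complex.real_smul]
        fun_prop
      exact (h1.comp z h2).differentiableWithinAt
    obtain ⟨G, hG1, hG2⟩ := exists_hol_curry (K := unitInterval) (isOpen_ball (x := c) (ε := r))
      (fun z t => u z (z + (t : ℝ) • (w - z))) hA hB
    have h3 := intCLM.differentiable.comp_differentiableOn hG1
    unfold _root_.Iop
    have h5 : DifferentiableOn ℂ (fun z : ℂ => w - z) (ball c r) := by fun_prop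
    refine DifferentiableOn.smul h5 (h3.congr ?_)
    intro z hz
    exact (intCLM_eq (fun t => u z (z + t • (w - z))) _ (fun t => hG2 z hz t)).symm
  · intro z hz w hw
    exact (Iop_hasDerivAt hu hz hw).differentiableAt.differentiableWithinAt

lemma Iop_bound {c : ℂ} {r : ℝ} {u : ℂ → ℂ → ℂ} {M : ℝ}
    (hM : ∀ z ∈ ball c r, ∀ w ∈ ball c r, ‖u z w‖ ≤ M)
    {z w : ℂ} (hz : z ∈ ball c r) (hw : w ∈ ball c r) : ‖Iop u z w‖ ≤ 2 * r * M := by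
  have h0 : 0 ≤ M := (norm_nonneg _).trans (hM z hz w hw)
  have h1 : ‖w - z‖ ≤ 2 * r := by
    rw [← dist_eq_norm]
    have := dist_triangle_right w z c
    simp only [mem_ball] at hz hw
    linarith
  have h2 : ‖∫ t in (0:ℝ)..1, u z (z + t • (w - z))‖ ≤ M := by
    have := intervalIntegral.norm_integral_le_of_norm_le_const (a := 0) (b := 1) (C := M)
      (f := fun t : ℝ => u z (z + t • (w - z))) ?_
    · simpa using this
    · intro t ht
      rw [uIoc_of_le zero_le_one] at ht
      exact hM z hz _ (seg_mem (convex_ball c r) hz hw ⟨ht.1.le, ht.2⟩)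
  unfold Iop
  rw [norm_smul]
  exact mul_le_mul h1 h2 (norm_nonneg _) ((norm_nonneg _).trans h1)

lemma Iop_sub {c : ℂ} {r : ℝ} {u v : ℂ → ℂ → ℂ} (hu : SepHol (ball c r) u)
    (hv : SepHol (ball c r) v)
    {z w : ℂ} (hz : z ∈ ball c r) (hw : w ∈ ball c r) :
    Iop u z w - Iop v z w = Iop (fun z w => u z w - v z w) z w := by
  have hi : ∀ u : ℂ → ℂ → ℂ, SepHol (ball c r) u →
      IntervalIntegrable (fun t : ℝ => u z (z + t • (w - z))) MeasureTheory.volume 0 1 := by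
    intro u hu
    refine ContinuousOn.intervalIntegrable ?_
    refine (hu.2.2 z hz).continuousOn.comp (by fun_prop) ?_
    intro t ht
    rw [uIcc_of_le zero_le_one] at ht
    exact seg_mem (convex_ball c r) hz hw ht
  unfold Iop
  rw [intervalIntegral.integral_sub (hi u hu) (hi v hv), smul_sub]

lemma SepHol.of_tendsto {D : Set ℂ} (hD : IsOpen D) {U : ℕ → ℂ → ℂ → ℂ} {u : ℂ → ℂ → ℂ}
    (hU : ∀ n, SepHol D (U n))
    (h : TendstoUniformlyOn (fun n (p : ℂ × ℂ) => U n p.1 p.2) (fun p => u p.1 p.2) atTop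
      (D ×ˢ D)) : SepHol D u ∧ ∀ z ∈ D, ∀ w ∈ D,
      Tendsto (fun n => _root_.d2 (U n) z w) atTop (𝓝 (_root_.d2 u z w)) := by
  have h1 : ∀ z ∈ D, TendstoLocallyUniformlyOn (fun n => U n z) (u z) atTop D := by
    intro z hz
    refine TendstoUniformlyOn.tendstoLocallyUniformlyOn ?_
    rw [Metric.tendstoUniformlyOn_iff] at h ⊢
    intro ε hε
    filter_upwards [h ε hε] with n hn w hw using hn (z, w) ⟨hz, hw⟩
  have h2 : ∀ w ∈ D, TendstoLocallyUniformlyOn (fun n z => U n z w) (fun z => u z w) atTop D := by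
    intro w hw
    refine TendstoUniformlyOn.tendstoLocallyUniformlyOn ?_
    rw [Metric.tendstoUniformlyOn_iff] at h ⊢
    intro ε hε
    filter_upwards [h ε hε] with n hn z hz using hn (z, w) ⟨hz, hw⟩
  refine ⟨⟨h.continuousOn (Eventually.of_forall fun n => (hU n).1).frequently, ?_, ?_⟩, ?_⟩
  · intro w hw
    exact (h2 w hw).differentiableOn (Eventually.of_forall fun n => (hU n).2.1 w hw) hD
  · intro z hz
    exact (h1 z hz).differentiableOn (Eventually.of_forall fun n => (hU n).2.2 z hz) hD
  · intro z hz w hw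
    exact ((h1 z hz).deriv (Eventually.of_forall fun n => (hU n).2.2 z hz) hD).tendsto_at hw

/-- mixed partials commute -/
lemma SepHol.d1_d2 {D : Set ℂ} (hD : IsOpen D) {u : ℂ → ℂ → ℂ} (hu : SepHol D u)
    {z w : ℂ} (hz : z ∈ D) (hw : w ∈ D) :
    _root_.d1 (_root_.d2 u) z w = _root_.d2 (_root_.d1 u) z w := by
  have hn : D ×ˢ D ∈ 𝓝 (z, w) := (hD.prod hD).mem_nhds ⟨hz, hw⟩
  have hcd : ContDiffAt ℂ (⊤ : ℕ∞) (fun p : ℂ × ℂ => u p.1 p.2) (z, w) :=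
    (hu.contDiffOn hD).contDiffAt hn
  have hsym := hcd.isSymmSndFDerivAt (by
    simp only [minSmoothness_of_isRCLikeNormedField]; exact WithTop.coe_le_coe.2 (le_top (a := (2 : ℕ∞))))
  have e : fderiv ℂ (fun p : ℂ × ℂ => u p.1 p.2) =ᶠ[𝓝 (z, w)] fun p =>
      (_root_.d1 u p.1 p.2 • ContinuousLinearMap.fst ℂ ℂ ℂ +
       _root_.d2 u p.1 p.2 • ContinuousLinearMap.snd ℂ ℂ ℂ) := by
    filter_upwards [hn] with p hp
    exact (hu.hasStrictFDerivAt hD hp).hasFDerivAt.fderiv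
  have h1 := ((hu.d1 hD).hasStrictFDerivAt hD (p := (z, w)) ⟨hz, hw⟩).hasFDerivAt
  have h2 := ((hu.d2 hD).hasStrictFDerivAt hD (p := (z, w)) ⟨hz, hw⟩).hasFDerivAt
  have h3 := ((h1.smul_const (ContinuousLinearMap.fst ℂ ℂ ℂ)).add
    (h2.smul_const (ContinuousLinearMap.snd ℂ ℂ ℂ))).congr_of_eventuallyEq e
  have h4 := hsym (1, 0) (0, 1)
  rw [h3.fderiv] at h4
  simpa using h4

/-- zero derivative in `w` on a ball -/
lemma eq_of_d2_zero {c : ℂ} {r : ℝ} {g : ℂ → ℂ}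
    (hg : ∀ w ∈ ball c r, HasDerivAt g 0 w)
    {z w : ℂ} (hz : z ∈ ball c r) (hw : w ∈ ball c r) : g w = g z := by
  refine (convex_ball c r).is_const_of_fderivWithin_eq_zero (𝕜 := ℂ) (f := g) ?_ ?_ hw hz
  · intro x hx; exact (hg x hx).differentiableAt.differentiableWithinAt
  · intro x hx
    rw [fderivWithin_of_isOpen isOpen_ball hx]
    have := (hg x hx).hasFDerivAt.fderiv
    rw [this]; ext; simp

end SepHolSection2

section PicardSection
open Set Filter Topology Metric ComplexConjugate

def gA (a b : ℂ → ℂ → ℂ) (z w : ℂ) : ℂ :=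
  a z w * sst a z w * sst b z w + b z w * sst b z w * sst b z w
def gB (a b : ℂ → ℂ → ℂ) (z w : ℂ) : ℂ :=
  a z w * sst a z w * sst a z w + b z w * sst b z w * sst a z w

/-- Picard iterates. -/
def pic (h : ℂ) (φ ψ : ℂ → ℂ) : ℕ → (ℂ → ℂ → ℂ) × (ℂ → ℂ → ℂ)
  | 0 => (fun z _ => φ z, fun z _ => ψ z)
  | n + 1 => (fun z w => φ z + (-h) * Iop (gA (pic h φ ψ n).1 (pic h φ ψ n).2) z w,
              fun z w => ψ z + h * Iop (gB (pic h φ ψ n).1 (pic h φ ψ n).2) z w)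

def solA (h : ℂ) (φ ψ : ℂ → ℂ) (z w : ℂ) : ℂ := limUnder atTop (fun n => (pic h φ ψ n).1 z w)
def solB (h : ℂ) (φ ψ : ℂ → ℂ) (z w : ℂ) : ℂ := limUnder atTop (fun n => (pic h φ ψ n).2 z w)

lemma tri_bound {x y z : ℂ} (hx : ‖x‖ ≤ 3) (hy : ‖y‖ ≤ 3) (hz : ‖z‖ ≤ 3) : ‖x * y * z‖ ≤ 27 := by
  rw [norm_mul, norm_mul]
  have h1 := mul_le_mul hx hy (norm_nonneg _) (by norm_num)
  have h2 := mul_le_mul h1 hz (norm_nonneg _) (by norm_num)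
  linarith

lemma tri_lip {x y z x' y' z' : ℂ} {d : ℝ} (hy : ‖y‖ ≤ 3) (hz : ‖z‖ ≤ 3)
    (hx' : ‖x'‖ ≤ 3) (hy' : ‖y'‖ ≤ 3)
    (h1 : ‖x - x'‖ ≤ d) (h2 : ‖y - y'‖ ≤ d) (h3 : ‖z - z'‖ ≤ d) :
    ‖x * y * z - x' * y' * z'‖ ≤ 27 * d := by
  have hd : 0 ≤ d := (norm_nonneg _).trans h1
  have e : x * y * z - x' * y' * z' = (x - x') * y * z + x' * (y - y') * z
      + x' * y' * (z - z') := by ring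
  rw [e]
  have a1 : ‖(x - x') * y * z‖ ≤ d * 3 * 3 := by
    rw [norm_mul, norm_mul]; gcongr
  have a2 : ‖x' * (y - y') * z‖ ≤ 3 * d * 3 := by
    rw [norm_mul, norm_mul]; gcongr
  have a3 : ‖x' * y' * (z - z')‖ ≤ 3 * 3 * d := by
    rw [norm_mul, norm_mul]; gcongr
  have := norm_add₃_le (a := (x - x') * y * z) (b := x' * (y - y') * z) (c := x' * y' * (z - z'))
  linarith

lemma conj_ball {x r : ℝ} : ∀ z ∈ ball (x : ℂ) r, conj z ∈ ball (x : ℂ) r := by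
  intro z hz
  rw [mem_ball] at hz ⊢
  have : dist (conj z) (conj (x : ℂ)) = dist z x := Complex.dist_conj_conj _ _
  rw [Complex.conj_ofReal] at this
  rw [this]; exact hz

lemma SepHol.gA {D : Set ℂ} (hD : IsOpen D) (hDc : ∀ z ∈ D, conj z ∈ D) {a b : ℂ → ℂ → ℂ}
    (ha : SepHol D a) (hb : SepHol D b) : SepHol D (gA a b) :=
  ((ha.mul (ha.sst hD hDc)).mul (hb.sst hD hDc)).add ((hb.mul (hb.sst hD hDc)).mul (hb.sst hD hDc))

lemma SepHol.gB {D : Set ℂ} (hD : IsOpen D) (hDc : ∀ z ∈ D, conj z ∈ D) {a b : ℂ → ℂ → ℂ}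
    (ha : SepHol D a) (hb : SepHol D b) : SepHol D (gB a b) :=
  ((ha.mul (ha.sst hD hDc)).mul (ha.sst hD hDc)).add ((hb.mul (hb.sst hD hDc)).mul (ha.sst hD hDc))

section
variable {x r : ℝ} {h : ℂ} {φ ψ : ℂ → ℂ}

lemma pic_hol (hφ : DifferentiableOn ℂ φ (ball (x : ℂ) r))
    (hψ : DifferentiableOn ℂ ψ (ball (x : ℂ) r)) (n : ℕ) :
    SepHol (ball (x : ℂ) r) (pic h φ ψ n).1 ∧ SepHol (ball (x : ℂ) r) (pic h φ ψ n).2 := by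
  induction n with
  | zero => exact ⟨SepHol.of_fst hφ, SepHol.of_fst hψ⟩
  | succ n ih =>
    exact ⟨(SepHol.of_fst hφ).add ((SepHol.const (-h)).mul
      (SepHol.gA isOpen_ball conj_ball ih.1 ih.2).Iop),
      (SepHol.of_fst hψ).add ((SepHol.const h).mul
      (SepHol.gB isOpen_ball conj_ball ih.1 ih.2).Iop)⟩

lemma sst_bound {D : Set ℂ} (hDc : ∀ z ∈ D, conj z ∈ D) {u v : ℂ → ℂ → ℂ} {M : ℝ}
    (hu : ∀ z ∈ D, ∀ w ∈ D, ‖u z w - v z w‖ ≤ M) :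
    ∀ z ∈ D, ∀ w ∈ D, ‖sst u z w - sst v z w‖ ≤ M := by
  intro z hz w hw
  unfold sst
  rw [← map_sub, Complex.norm_conj]
  exact hu _ (hDc w hw) _ (hDc z hz)

lemma sst_bound' {D : Set ℂ} (hDc : ∀ z ∈ D, conj z ∈ D) {u : ℂ → ℂ → ℂ} {M : ℝ}
    (hu : ∀ z ∈ D, ∀ w ∈ D, ‖u z w‖ ≤ M) :
    ∀ z ∈ D, ∀ w ∈ D, ‖sst u z w‖ ≤ M := by
  intro z hz w hw
  unfold sst
  rw [Complex.norm_conj]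
  exact hu _ (hDc w hw) _ (hDc z hz)

lemma pic_bound (hr : ‖h‖ * (216 * r) ≤ 1)
    (hφb : ∀ z ∈ ball (x : ℂ) r, ‖φ z‖ ≤ 2) (hψb : ∀ z ∈ ball (x : ℂ) r, ‖ψ z‖ ≤ 2) (n : ℕ) :
    (∀ z ∈ ball (x : ℂ) r, ∀ w ∈ ball (x : ℂ) r, ‖(pic h φ ψ n).1 z w‖ ≤ 3) ∧
    (∀ z ∈ ball (x : ℂ) r, ∀ w ∈ ball (x : ℂ) r, ‖(pic h φ ψ n).2 z w‖ ≤ 3) := by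
  induction n with
  | zero =>
    exact ⟨fun z hz w _ => (hφb z hz).trans (by norm_num),
      fun z hz w _ => (hψb z hz).trans (by norm_num)⟩
  | succ n ih =>
    obtain ⟨ih1, ih2⟩ := ih
    have s1 := sst_bound' conj_ball ih1
    have s2 := sst_bound' conj_ball ih2
    constructor
    · intro z hz w hw
      have hI := Iop_bound (u := gA (pic h φ ψ n).1 (pic h φ ψ n).2) (M := 54) (fun z hz w hw =>
        (norm_add_le _ _).trans ((add_le_add (tri_bound (ih1 z hz w hw) (s1 z hz w hw)
          (s2 z hz w hw)) (tri_bound (ih2 z hz w hw) (s2 z hz w hw)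
          (s2 z hz w hw))).trans (by norm_num))) hz hw
      have h2 : ‖-h * Iop (gA (pic h φ ψ n).1 (pic h φ ψ n).2) z w‖ ≤ ‖h‖ * (2 * r * 54) := by
        rw [norm_mul, norm_neg]; gcongr
      have h3 := norm_add_le (φ z) (-h * Iop (gA (pic h φ ψ n).1 (pic h φ ψ n).2) z w)
      have h4 := hφb z hz
      have h5 : ‖h‖ * (2 * r * 54) = ‖h‖ * (216 * r) / 2 := by ring
      simp only [pic]
      linarith
    · intro z hz w hw
      have hI := Iop_bound (u := gB (pic h φ ψ n).1 (pic h φ ψ n).2) (M := 54) (fun z hz w hw =>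
        (norm_add_le _ _).trans ((add_le_add (tri_bound (ih1 z hz w hw) (s1 z hz w hw)
          (s1 z hz w hw)) (tri_bound (ih2 z hz w hw) (s2 z hz w hw)
          (s1 z hz w hw))).trans (by norm_num))) hz hw
      have h2 : ‖h * Iop (gB (pic h φ ψ n).1 (pic h φ ψ n).2) z w‖ ≤ ‖h‖ * (2 * r * 54) := by
        rw [norm_mul]; gcongr
      have h3 := norm_add_le (ψ z) (h * Iop (gB (pic h φ ψ n).1 (pic h φ ψ n).2) z w)
      have h4 := hψb z hz
      have h5 : ‖h‖ * (2 * r * 54) = ‖h‖ * (216 * r) / 2 := by ring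
      simp only [pic]
      linarith

lemma pic_diff (hφ : DifferentiableOn ℂ φ (ball (x : ℂ) r))
    (hψ : DifferentiableOn ℂ ψ (ball (x : ℂ) r))
    (hr : ‖h‖ * (216 * r) ≤ 1)
    (hφb : ∀ z ∈ ball (x : ℂ) r, ‖φ z‖ ≤ 2) (hψb : ∀ z ∈ ball (x : ℂ) r, ‖ψ z‖ ≤ 2) (n : ℕ) :
    (∀ z ∈ ball (x : ℂ) r, ∀ w ∈ ball (x : ℂ) r,
      ‖(pic h φ ψ n).1 z w - (pic h φ ψ (n+1)).1 z w‖ ≤ 6 * (1/2)^n) ∧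
    (∀ z ∈ ball (x : ℂ) r, ∀ w ∈ ball (x : ℂ) r,
      ‖(pic h φ ψ n).2 z w - (pic h φ ψ (n+1)).2 z w‖ ≤ 6 * (1/2)^n) := by
  induction n with
  | zero =>
    have b0 := pic_bound hr hφb hψb 0
    have b1 := pic_bound hr hφb hψb 1
    constructor
    · intro z hz w hw
      have := norm_sub_le ((pic h φ ψ 0).1 z w) ((pic h φ ψ 1).1 z w)
      have := b0.1 z hz w hw
      have := b1.1 z hz w hw
      simp only [pow_zero, zero_add]; linarith
    · intro z hz w hw
      have := norm_sub_le ((pic h φ ψ 0).2 z w) ((pic h φ ψ 1).2 z w)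
      have := b0.2 z hz w hw
      have := b1.2 z hz w hw
      simp only [pow_zero, zero_add]; linarith
  | succ n ih =>
    obtain ⟨ih1, ih2⟩ := ih
    have hn := pic_hol (h := h) hφ hψ n
    have hn1 := pic_hol (h := h) hφ hψ (n+1)
    obtain ⟨b1, b2⟩ := pic_bound hr hφb hψb n
    obtain ⟨c1, c2⟩ := pic_bound hr hφb hψb (n+1)
    set p := pic h φ ψ n with hp
    set q := pic h φ ψ (n+1) with hq
    have sb1 := sst_bound' conj_ball b1
    have sb2 := sst_bound' conj_ball b2
    have sc1 := sst_bound' conj_ball c1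
    have sc2 := sst_bound' conj_ball c2
    have s1 := sst_bound conj_ball ih1
    have s2 := sst_bound conj_ball ih2
    have h5 : ‖h‖ * (2 * r * (54 * (6 * (1/2)^n))) = ‖h‖ * (216 * r) * (6 * (1/2)^(n+1)) := by
      rw [pow_succ]; ring
    have h6 : ‖h‖ * (216 * r) * (6 * (1/2)^(n+1)) ≤ 6 * (1/2)^(n+1) := by
      have : (0:ℝ) ≤ 6 * (1/2)^(n+1) := by positivity
      nlinarith
    constructor
    · intro z hz w hw
      have e : q.1 z w - (pic h φ ψ (n+1+1)).1 z w =
          -h * (Iop (fun z w => gA p.1 p.2 z w - gA q.1 q.2 z w) z w) := by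
        rw [← Iop_sub (SepHol.gA isOpen_ball conj_ball hn.1 hn.2)
          (SepHol.gA isOpen_ball conj_ball hn1.1 hn1.2) hz hw]
        have e1 : q.1 z w = φ z + (-h) * Iop (gA p.1 p.2) z w := rfl
        have e2 : (pic h φ ψ (n+1+1)).1 z w = φ z + (-h) * Iop (gA q.1 q.2) z w := rfl
        rw [e1, e2]; ring
      rw [e, norm_mul, norm_neg]
      refine le_trans (mul_le_mul_of_nonneg_left (Iop_bound (M := 54 * (6 * (1/2)^n)) ?_ hz hw)
        (norm_nonneg _)) (h5.le.trans h6)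
      intro z hz w hw
      have t1 := tri_lip (sb1 z hz w hw) (sb2 z hz w hw) (c1 z hz w hw) (sc1 z hz w hw)
        (ih1 z hz w hw) (s1 z hz w hw) (s2 z hz w hw)
      have t2 := tri_lip (sb2 z hz w hw) (sb2 z hz w hw) (c2 z hz w hw) (sc2 z hz w hw)
        (ih2 z hz w hw) (s2 z hz w hw) (s2 z hz w hw)
      unfold gA
      rw [add_sub_add_comm]
      exact (norm_add_le _ _).trans (by linarith)
    · intro z hz w hw
      have e : q.2 z w - (pic h φ ψ (n+1+1)).2 z w =
          h * (Iop (fun z w => gB p.1 p.2 z w - gB q.1 q.2 z w) z w) := by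
        rw [← Iop_sub (SepHol.gB isOpen_ball conj_ball hn.1 hn.2)
          (SepHol.gB isOpen_ball conj_ball hn1.1 hn1.2) hz hw]
        have e1 : q.2 z w = ψ z + h * Iop (gB p.1 p.2) z w := rfl
        have e2 : (pic h φ ψ (n+1+1)).2 z w = ψ z + h * Iop (gB q.1 q.2) z w := rfl
        rw [e1, e2]; ring
      rw [e, norm_mul]
      refine le_trans (mul_le_mul_of_nonneg_left (Iop_bound (M := 54 * (6 * (1/2)^n)) ?_ hz hw)
        (norm_nonneg _)) (h5.le.trans h6)
      intro z hz w hw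
      have t1 := tri_lip (sb1 z hz w hw) (sb1 z hz w hw) (c1 z hz w hw) (sc1 z hz w hw)
        (ih1 z hz w hw) (s1 z hz w hw) (s1 z hz w hw)
      have t2 := tri_lip (sb2 z hz w hw) (sb1 z hz w hw) (c2 z hz w hw) (sc2 z hz w hw)
        (ih2 z hz w hw) (s2 z hz w hw) (s1 z hz w hw)
      unfold gB
      rw [add_sub_add_comm]
      exact (norm_add_le _ _).trans (by linarith)

lemma unif_of_geom {D : Set ℂ} {U : ℕ → ℂ → ℂ → ℂ}
    (hU : ∀ n, ∀ z ∈ D, ∀ w ∈ D, ‖U n z w - U (n+1) z w‖ ≤ 6 * (1/2)^n) :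
    TendstoUniformlyOn (fun n (p : ℂ × ℂ) => U n p.1 p.2)
      (fun p => limUnder atTop (fun n => U n p.1 p.2)) atTop (D ×ˢ D) := by
  have h1 : ∀ p ∈ D ×ˢ D, ∀ n, dist (U n p.1 p.2) (limUnder atTop (fun n => U n p.1 p.2))
      ≤ 6 * (1/2)^n / (1 - 1/2) := by
    intro p hp n
    have hd : ∀ n, dist (U n p.1 p.2) (U (n+1) p.1 p.2) ≤ 6 * (1/2)^n := by
      intro n; rw [dist_eq_norm]; exact hU n _ hp.1 _ hp.2
    have hc := cauchySeq_of_le_geometric (1/2 : ℝ) 6 (by norm_num) hd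
    exact dist_le_of_le_geometric_of_tendsto (1/2 : ℝ) 6 (by norm_num) hd hc.tendsto_limUnder n
  rw [Metric.tendstoUniformlyOn_iff]
  intro ε hε
  have h2 : Tendsto (fun n : ℕ => (6:ℝ) * (1/2)^n / (1 - 1/2)) atTop (𝓝 0) := by
    have := tendsto_pow_atTop_nhds_zero_of_lt_one (r := (1/2:ℝ)) (by norm_num) (by norm_num)
    simpa using (this.const_mul 6).div_const (1 - 1/2)
  filter_upwards [h2.eventually (gt_mem_nhds hε)] with n hn p hp
  rw [dist_comm]
  exact (h1 p hp n).trans_lt hn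

theorem picard_local (hφ : DifferentiableOn ℂ φ (ball (x : ℂ) r))
    (hψ : DifferentiableOn ℂ ψ (ball (x : ℂ) r))
    (hr : ‖h‖ * (216 * r) ≤ 1)
    (hφb : ∀ z ∈ ball (x : ℂ) r, ‖φ z‖ ≤ 2) (hψb : ∀ z ∈ ball (x : ℂ) r, ‖ψ z‖ ≤ 2) :
    SepHol (ball (x : ℂ) r) (solA h φ ψ) ∧ SepHol (ball (x : ℂ) r) (solB h φ ψ) ∧
    (∀ z ∈ ball (x : ℂ) r, ∀ w ∈ ball (x : ℂ) r,
      d2 (solA h φ ψ) z w = -h * gA (solA h φ ψ) (solB h φ ψ) z w) ∧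
    (∀ z ∈ ball (x : ℂ) r, ∀ w ∈ ball (x : ℂ) r,
      d2 (solB h φ ψ) z w = h * gB (solA h φ ψ) (solB h φ ψ) z w) := by
  have uA : TendstoUniformlyOn (fun n (p : ℂ × ℂ) => (pic h φ ψ n).1 p.1 p.2)
    (fun p => solA h φ ψ p.1 p.2) atTop (ball (x : ℂ) r ×ˢ ball (x : ℂ) r) :=
    unif_of_geom (U := fun n => (pic h φ ψ n).1) (fun n => (pic_diff hφ hψ hr hφb hψb n).1)
  have uB : TendstoUniformlyOn (fun n (p : ℂ × ℂ) => (pic h φ ψ n).2 p.1 p.2)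
    (fun p => solB h φ ψ p.1 p.2) atTop (ball (x : ℂ) r ×ˢ ball (x : ℂ) r) :=
    unif_of_geom (U := fun n => (pic h φ ψ n).2) (fun n => (pic_diff hφ hψ hr hφb hψb n).2)
  have hh := pic_hol (h := h) hφ hψ
  obtain ⟨hA, dA⟩ := SepHol.of_tendsto isOpen_ball (fun n => (hh n).1) uA
  obtain ⟨hB, dB⟩ := SepHol.of_tendsto isOpen_ball (fun n => (hh n).2) uB
  have tA : ∀ z ∈ ball (x : ℂ) r, ∀ w ∈ ball (x : ℂ) r,
      Tendsto (fun n => (pic h φ ψ n).1 z w) atTop (𝓝 (solA h φ ψ z w)) :=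
    fun z hz w hw => uA.tendsto_at (x := (z, w)) ⟨hz, hw⟩
  have tB : ∀ z ∈ ball (x : ℂ) r, ∀ w ∈ ball (x : ℂ) r,
      Tendsto (fun n => (pic h φ ψ n).2 z w) atTop (𝓝 (solB h φ ψ z w)) :=
    fun z hz w hw => uB.tendsto_at (x := (z, w)) ⟨hz, hw⟩
  have tA' : ∀ z ∈ ball (x : ℂ) r, ∀ w ∈ ball (x : ℂ) r,
      Tendsto (fun n => sst (pic h φ ψ n).1 z w) atTop (𝓝 (sst (solA h φ ψ) z w)) :=
    fun z hz w hw => (Complex.continuous_conj.tendsto _).comp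
      (tA _ (conj_ball w hw) _ (conj_ball z hz))
  have tB' : ∀ z ∈ ball (x : ℂ) r, ∀ w ∈ ball (x : ℂ) r,
      Tendsto (fun n => sst (pic h φ ψ n).2 z w) atTop (𝓝 (sst (solB h φ ψ) z w)) :=
    fun z hz w hw => (Complex.continuous_conj.tendsto _).comp
      (tB _ (conj_ball w hw) _ (conj_ball z hz))
  refine ⟨hA, hB, ?_, ?_⟩
  · intro z hz w hw
    have e : ∀ n, d2 (pic h φ ψ (n+1)).1 z w = -h * gA (pic h φ ψ n).1 (pic h φ ψ n).2 z w := by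
      intro n
      exact (((Iop_hasDerivAt (SepHol.gA isOpen_ball conj_ball (hh n).1 (hh n).2) hz
        hw).const_mul (-h)).const_add (φ z)).deriv
    have t1 := (dA z hz w hw).comp (tendsto_add_atTop_nat 1)
    refine tendsto_nhds_unique t1 ?_
    simp only [Function.comp_def, e]
    exact Tendsto.const_mul _ ((((tA z hz w hw).mul (tA' z hz w hw)).mul (tB' z hz w hw)).add
      (((tB z hz w hw).mul (tB' z hz w hw)).mul (tB' z hz w hw)))
  · intro z hz w hw
    have e : ∀ n, d2 (pic h φ ψ (n+1)).2 z w = h * gB (pic h φ ψ n).1 (pic h φ ψ n).2 z w := by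
      intro n
      exact (((Iop_hasDerivAt (SepHol.gB isOpen_ball conj_ball (hh n).1 (hh n).2) hz
        hw).const_mul h).const_add (ψ z)).deriv
    have t1 := (dB z hz w hw).comp (tendsto_add_atTop_nat 1)
    refine tendsto_nhds_unique t1 ?_
    simp only [Function.comp_def, e]
    exact Tendsto.const_mul _ ((((tA z hz w hw).mul (tA' z hz w hw)).mul (tA' z hz w hw)).add
      (((tB z hz w hw).mul (tB' z hz w hw)).mul (tA' z hz w hw)))

lemma pic_diag (n : ℕ) (z : ℂ) : (pic h φ ψ n).1 z z = φ z ∧ (pic h φ ψ n).2 z z = ψ z := by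
  cases n <;> simp [pic, Iop_self]

lemma sol_diag (z : ℂ) : solA h φ ψ z z = φ z ∧ solB h φ ψ z z = ψ z := by
  constructor
  · unfold solA; simp only [pic_diag]; exact tendsto_const_nhds.limUnder_eq
  · unfold solB; simp only [pic_diag]; exact tendsto_const_nhds.limUnder_eq
end
end PicardSection

section ThetaSection
open Set Filter Topology Metric ComplexConjugate

lemma theta_local {θ₀ : ℝ → ℝ} {x : ℝ} (h : AnalyticAt ℝ θ₀ x) :
    ∃ g : ℂ → ℂ, ∃ r : ℝ, 0 < r ∧ DifferentiableOn ℂ g (ball (x : ℂ) r) ∧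
      ∀ t : ℝ, (t : ℂ) ∈ ball (x : ℂ) r → g t = (θ₀ t : ℂ) := by
  obtain ⟨p, hp⟩ := h
  rw [hasFPowerSeriesAt_iff] at hp
  obtain ⟨ε, hε, hb⟩ := Metric.eventually_nhds_iff.1 hp
  obtain ⟨s, hsε⟩ : ∃ s : NNReal, (s : ℝ) = ε/2 :=
    ⟨Real.toNNReal (ε/2), Real.coe_toNNReal _ (half_pos hε).le⟩
  have hs0 : 0 < s := by rw [← NNReal.coe_pos, hsε]; exact half_pos hε
  let a : ℕ → ℂ := fun n => (p.coeff n : ℂ)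
  let q : FormalMultilinearSeries ℂ ℂ ℂ := FormalMultilinearSeries.ofScalars ℂ a
  have hs : HasSum (fun n => (ε/2)^n • p.coeff n) (θ₀ (x + ε/2)) := hb (by
    rw [dist_zero_right, Real.norm_eq_abs, abs_of_pos (by linarith)]; linarith)
  have ht : Tendsto (fun n => ‖q n‖ * (s : ℝ)^n) atTop (𝓝 0) := by
    have h1 := hs.summable.tendsto_atTop_zero.norm
    rw [norm_zero] at h1
    refine h1.congr fun n => ?_
    simp only [q, FormalMultilinearSeries.ofScalars_norm, a, norm_smul, norm_pow, hsε,
      Complex.norm_real, Real.norm_eq_abs, abs_of_pos (half_pos hε)]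
    ring
  have hrad := q.le_radius_of_tendsto ht
  have hpos : 0 < q.radius := lt_of_lt_of_le (ENNReal.coe_pos.2 hs0) hrad
  have hball := (q.hasFPowerSeriesOnBall hpos).mono (ENNReal.coe_pos.2 hs0) hrad
  have hd := hball.differentiableOn
  rw [Metric.eball_coe] at hd
  refine ⟨fun z => q.sum (z - x), ε/2, half_pos hε, ?_, ?_⟩
  · refine hd.comp (by fun_prop) ?_
    intro z hz
    rw [mem_ball_zero_iff, hsε, ← dist_eq_norm]; exact hz
  · intro t ht
    rw [mem_ball, dist_eq_norm, ← Complex.ofReal_sub, Complex.norm_real] at ht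
    have h1 := hb (y := t - x) (by rw [dist_zero_right]; linarith)
    rw [add_sub_cancel] at h1
    have h2 := Complex.hasSum_ofReal.2 h1
    rw [← h2.tsum_eq]
    change FormalMultilinearSeries.ofScalarsSum a ((t:ℂ) - x) = _
    rw [FormalMultilinearSeries.ofScalars_sum_eq]
    refine tsum_congr fun n => ?_
    simp [a, mul_comm]

lemma hol_unique {U : Set ℂ} (hU : IsOpen U) (hUc : Convex ℝ U) {g g' : ℂ → ℂ}
    (hg : DifferentiableOn ℂ g U) (hg' : DifferentiableOn ℂ g' U)
    (he : ∀ t : ℝ, (t : ℂ) ∈ U → g t = g' t) {t0 : ℝ} (ht0 : (t0 : ℂ) ∈ U) :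
    EqOn g g' U := by
  refine (hg.analyticOnNhd hU).eqOn_of_preconnected_of_frequently_eq (hg'.analyticOnNhd hU)
    hUc.isPreconnected ht0 ?_
  have h1 : Tendsto (fun t : ℝ => (t : ℂ)) (𝓝[≠] t0) (𝓝[≠] (t0 : ℂ)) := by
    refine tendsto_nhdsWithin_iff.2 ⟨(Complex.continuous_ofReal.tendsto t0).mono_left
      nhdsWithin_le_nhds, ?_⟩
    filter_upwards [self_mem_nhdsWithin] with t ht
    simpa using ht
  refine h1.frequently (Eventually.frequently ?_)
  have h2 : ∀ᶠ t : ℝ in 𝓝 t0, (t : ℂ) ∈ U :=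
    Complex.continuous_ofReal.continuousAt.eventually_mem (hU.mem_nhds ht0)
  filter_upwards [nhdsWithin_le_nhds h2] with t ht
  exact he t ht

lemma re_mem_ball {x r : ℝ} {z : ℂ} (hz : z ∈ ball (x : ℂ) r) : ((z.re : ℝ) : ℂ) ∈ ball (x : ℂ) r := by
  rw [mem_ball, dist_eq_norm] at hz ⊢
  rw [← Complex.ofReal_sub, Complex.norm_real, Real.norm_eq_abs]
  have := Complex.abs_re_le_norm (z - x)
  simp only [Complex.sub_re, Complex.ofReal_re] at this
  linarith

theorem theta_ext {J : Set ℝ} (hJ : IsOpen J) {θ₀ : ℝ → ℝ} (hθ : AnalyticOnNhd ℝ θ₀ J) :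
    ∃ θ : ℂ → ℂ, (∀ t ∈ J, θ t = (θ₀ t : ℂ)) ∧ ∀ x ∈ J, ∃ r : ℝ, 0 < r ∧
      DifferentiableOn ℂ θ (ball (x : ℂ) r) ∧
      (∀ t : ℝ, (t : ℂ) ∈ ball (x : ℂ) r → t ∈ J) ∧
      ∀ z ∈ ball (x : ℂ) r, θ (conj z) = conj (θ z) := by
  have loc : ∀ x : J, ∃ g : ℂ → ℂ, ∃ r : ℝ, 0 < r ∧ DifferentiableOn ℂ g (ball (x : ℂ) r) ∧
      (∀ t : ℝ, (t : ℂ) ∈ ball (x : ℂ) r → g t = (θ₀ t : ℂ)) ∧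
      (∀ t : ℝ, (t : ℂ) ∈ ball (x : ℂ) r → t ∈ J) := by
    rintro ⟨x, hx⟩
    obtain ⟨g, r, hr, hg, hgt⟩ := theta_local (hθ x hx)
    obtain ⟨ε, hε, hb⟩ := Metric.isOpen_iff.1 hJ x hx
    have s1 : ball (x : ℂ) (min r ε) ⊆ ball (x : ℂ) r := ball_subset_ball (min_le_left _ _)
    refine ⟨g, min r ε, lt_min hr hε, hg.mono s1, fun t ht => hgt t (s1 ht), fun t ht => hb ?_⟩
    have := (ball_subset_ball (min_le_right r ε)) ht
    rw [mem_ball, dist_eq_norm, ← Complex.ofReal_sub, Complex.norm_real] at this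
    rwa [mem_ball, dist_eq_norm]
  choose g r hr hg hgt hgJ using loc
  classical
  let θ : ℂ → ℂ := fun z => if h : ∃ x : J, z ∈ ball (x : ℂ) (r x) then g h.choose z else 0
  have key : ∀ x : J, EqOn θ (g x) (ball (x : ℂ) (r x)) := by
    intro x z hz
    have h : ∃ x : J, z ∈ ball (x : ℂ) (r x) := ⟨x, hz⟩
    have e : θ z = g h.choose z := by simp only [θ]; rw [dif_pos h]
    rw [e]
    have hy := h.choose_spec
    set y := h.choose
    exact hol_unique (U := ball (y : ℂ) (r y) ∩ ball (x : ℂ) (r x)) (isOpen_ball.inter isOpen_ball)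
      ((convex_ball _ _).inter (convex_ball _ _)) ((hg y).mono inter_subset_left)
      ((hg x).mono inter_subset_right) (fun t ht => by rw [hgt y t ht.1, hgt x t ht.2])
      (t0 := z.re) ⟨re_mem_ball hy, re_mem_ball hz⟩ ⟨hy, hz⟩
  refine ⟨θ, fun t ht => ?_, fun x hx => ⟨r ⟨x, hx⟩, hr _, ?_, hgJ ⟨x, hx⟩, ?_⟩⟩
  · have hm : (t : ℂ) ∈ ball (((⟨t, ht⟩ : J) : ℝ) : ℂ) (r ⟨t, ht⟩) := mem_ball_self (hr _)
    rw [key ⟨t, ht⟩ hm, hgt ⟨t, ht⟩ t hm]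
  · exact (hg ⟨x, hx⟩).congr (key ⟨x, hx⟩)
  · have hd : DifferentiableOn ℂ θ (ball (x : ℂ) (r ⟨x, hx⟩)) := (hg ⟨x, hx⟩).congr (key ⟨x, hx⟩)
    have hd' : DifferentiableOn ℂ (fun z => conj (θ (conj z))) (ball (x : ℂ) (r ⟨x, hx⟩)) := by
      intro z hz
      have := (hd.differentiableAt (isOpen_ball.mem_nhds (conj_ball z hz))).hasDerivAt.conj_conj
      rw [Complex.conj_conj] at this
      exact this.differentiableAt.differentiableWithinAt
    intro z hz
    have := hol_unique isOpen_ball (convex_ball _ _) hd' hd (fun t ht => by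
      simp only [Complex.conj_ofReal]
      rw [key ⟨x, hx⟩ ht, hgt ⟨x, hx⟩ t ht, Complex.conj_ofReal]) (t0 := x)
      (mem_ball_self (hr _)) (conj_ball z hz)
    simp only [Complex.conj_conj] at this
    exact this.symm

lemma theta_shrink {θ : ℂ → ℂ} {x r : ℝ} (hr : 0 < r) (hd : DifferentiableOn ℂ θ (ball (x : ℂ) r))
    (hx : (θ x).im = 0) (h : ℝ) : ∃ s : ℝ, 0 < s ∧ s ≤ r ∧ |h| * (216 * s) ≤ 1 ∧
      ∀ z ∈ ball (x : ℂ) s, ‖Complex.cos (θ z / 2)‖ ≤ 2 ∧ ‖Complex.sin (θ z / 2)‖ ≤ 2 := by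
  have hc : ContinuousAt θ x := (hd.differentiableAt (ball_mem_nhds _ hr)).continuousAt
  have e : θ x = ((θ x).re : ℂ) := Complex.ext (by simp) (by simpa using hx)
  have c1 : ContinuousAt (fun z => ‖Complex.cos (θ z / 2)‖) x := by fun_prop
  have c2 : ContinuousAt (fun z => ‖Complex.sin (θ z / 2)‖) x := by fun_prop
  have b1 : ‖Complex.cos (θ x / 2)‖ < 2 := by
    rw [e]
    have : Complex.cos (((θ x).re : ℂ) / 2) = (Real.cos ((θ x).re / 2) : ℂ) := by push_cast; rfl
    rw [this, Complex.norm_real]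
    exact (Real.abs_cos_le_one _).trans_lt (by norm_num)
  have b2 : ‖Complex.sin (θ x / 2)‖ < 2 := by
    rw [e]
    have : Complex.sin (((θ x).re : ℂ) / 2) = (Real.sin ((θ x).re / 2) : ℂ) := by push_cast; rfl
    rw [this, Complex.norm_real]
    exact (Real.abs_sin_le_one _).trans_lt (by norm_num)
  obtain ⟨s, hs, hb⟩ := Metric.eventually_nhds_iff_ball.1
    ((c1.eventually (gt_mem_nhds b1)).and (c2.eventually (gt_mem_nhds b2)))
  have hp : 0 < 1 / (216 * (|h| + 1)) := by positivity
  refine ⟨min s (min r (1 / (216 * (|h| + 1)))), lt_min hs (lt_min hr hp),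
    (min_le_right _ _).trans (min_le_left _ _), ?_, ?_⟩
  · have := (min_le_right s (min r (1 / (216 * (|h| + 1))))).trans (min_le_right _ _)
    calc |h| * (216 * min s (min r (1 / (216 * (|h| + 1)))))
        ≤ |h| * (216 * (1 / (216 * (|h| + 1)))) := by gcongr
      _ = |h| / (|h| + 1) := by field_simp
      _ ≤ 1 := by rw [div_le_one (by positivity)]; linarith
  · intro z hz
    have := hb z (ball_subset_ball (min_le_left _ _) hz)
    exact ⟨this.1.le, this.2.le⟩
end ThetaSection

section SolSection
open Set Filter Topology Metric ComplexConjugate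

lemma d2_sst {D : Set ℂ} (hD : IsOpen D) (hDc : ∀ z ∈ D, conj z ∈ D) {u : ℂ → ℂ → ℂ}
    (hu : SepHol D u) {z w : ℂ} (hz : z ∈ D) (hw : w ∈ D) :
    d2 (sst u) z w = sst (d1 u) z w := by
  have h1 := (hu.hasDerivAt1 hD (hDc w hw) (hDc z hz)).conj_conj
  rw [Complex.conj_conj] at h1
  exact h1.deriv

lemma d1_congr {D : Set ℂ} (hD : IsOpen D) {u v : ℂ → ℂ → ℂ}
    (h : ∀ z ∈ D, ∀ w ∈ D, u z w = v z w) {z w : ℂ} (hz : z ∈ D) (hw : w ∈ D) :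
    d1 u z w = d1 v z w := by
  refine Filter.EventuallyEq.deriv_eq ?_
  filter_upwards [hD.mem_nhds hz] with s hs
  exact h s hs w hw

lemma d2_congr {D : Set ℂ} (hD : IsOpen D) {u v : ℂ → ℂ → ℂ}
    (h : ∀ z ∈ D, ∀ w ∈ D, u z w = v z w) {z w : ℂ} (hz : z ∈ D) (hw : w ∈ D) :
    d2 u z w = d2 v z w := by
  refine Filter.EventuallyEq.deriv_eq ?_
  filter_upwards [hD.mem_nhds hw] with s hs
  exact h z hz s hs

lemma hasDerivAt_diag {D : Set ℂ} (hD : IsOpen D) {u : ℂ → ℂ → ℂ} (hu : SepHol D u) {z : ℂ}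
    (hz : z ∈ D) : HasDerivAt (fun s => u s s) (d1 u z z + d2 u z z) z := by
  have h1 := (hu.hasStrictFDerivAt hD (p := (z, z)) ⟨hz, hz⟩).hasFDerivAt
  have h2 : HasDerivAt (fun s : ℂ => (s, s)) ((1 : ℂ), (1 : ℂ)) z :=
    (hasDerivAt_id z).prodMk (hasDerivAt_id z)
  have h3 := HasFDerivAt.comp_hasDerivAt (f := fun s : ℂ => (s, s)) z h1 h2
  have h4 : HasDerivAt (fun s => u s s) _ z := h3
  exact h4.congr_deriv (by simp)

lemma Iop_d1 {c : ℂ} {r : ℝ} {g k : ℂ → ℂ → ℂ} (hg : SepHol (ball c r) g)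
    (hk : SepHol (ball c r) k)
    (h : ∀ z ∈ ball c r, ∀ w ∈ ball c r, d2 k z w = d1 g z w)
    (hdiag : ∀ z ∈ ball c r, k z z = - g z z) {z w : ℂ} (hz : z ∈ ball c r) (hw : w ∈ ball c r) :
    d1 (Iop g) z w = k z w := by
  have hI := hg.Iop
  have e2 : ∀ z ∈ ball c r, ∀ w ∈ ball c r, d2 (Iop g) z w = g z w := fun z hz w hw =>
    (Iop_hasDerivAt hg hz hw).deriv
  have key := eq_of_d2_zero (g := fun w => d1 (Iop g) z w - k z w) (c := c) (r := r) (fun s hs => by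
    have a1 := (hI.d1 isOpen_ball).hasDerivAt2 isOpen_ball hz hs
    have a2 := hk.hasDerivAt2 isOpen_ball hz hs
    have a3 := a1.sub a2
    rw [← hI.d1_d2 isOpen_ball hz hs, h z hz s hs, d1_congr isOpen_ball e2 hz hs, sub_self] at a3
    exact a3) hz hw
  have hd := hasDerivAt_diag isOpen_ball hI hz
  simp only [Iop_self] at hd
  have h0 := hd.unique (hasDerivAt_const z 0)
  rw [e2 z hz z hz] at h0
  simp only [hdiag z hz] at key
  linear_combination key + h0

structure Sol (x r : ℝ) (H : ℂ) (θ : ℂ → ℂ) (a b : ℂ → ℂ → ℂ) : Prop where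
  hH : conj H = H
  ha : SepHol (ball (x : ℂ) r) a
  hb : SepHol (ball (x : ℂ) r) b
  da : ∀ z ∈ ball (x : ℂ) r, ∀ w ∈ ball (x : ℂ) r, d2 a z w = -H * gA a b z w
  db : ∀ z ∈ ball (x : ℂ) r, ∀ w ∈ ball (x : ℂ) r, d2 b z w = H * gB a b z w
  adiag : ∀ z, a z z = Complex.cos (θ z / 2)
  bdiag : ∀ z, b z z = -I * Complex.sin (θ z / 2)
  hθ : DifferentiableOn ℂ θ (ball (x : ℂ) r)
  hθc : ∀ z ∈ ball (x : ℂ) r, θ (conj z) = conj (θ z)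

namespace Sol
variable {x r : ℝ} {H : ℂ} {θ : ℂ → ℂ} {a b : ℂ → ℂ → ℂ} (S : Sol x r H θ a b)
  {z w : ℂ} (hz : z ∈ ball (x : ℂ) r) (hw : w ∈ ball (x : ℂ) r)
include S

lemma ha' : SepHol (ball (x : ℂ) r) (sst a) := S.ha.sst isOpen_ball conj_ball
lemma hb' : SepHol (ball (x : ℂ) r) (sst b) := S.hb.sst isOpen_ball conj_ball

include hz

lemma adiag' : sst a z z = Complex.cos (θ z / 2) := by
  simp only [sst, S.adiag, ← Complex.cos_conj, map_div₀, S.hθc z hz, Complex.conj_conj,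
    Complex.conj_ofNat]

lemma bdiag' : sst b z z = I * Complex.sin (θ z / 2) := by
  simp only [sst, S.bdiag, ← Complex.sin_conj, map_mul, map_div₀, S.hθc z hz, Complex.conj_conj,
    Complex.conj_ofNat]
  simp

include hw
lemma d1a' : d1 (sst a) z w = -H * ((a z w * sst a z w + b z w * sst b z w) * b z w) := by
  rw [d1_sst isOpen_ball conj_ball S.ha hz hw]
  simp only [sst]
  rw [S.da _ (conj_ball w hw) _ (conj_ball z hz)]
  simp only [gA, sst, map_mul, map_add, map_neg, Complex.conj_conj, S.hH]
  ring

lemma d1b' : d1 (sst b) z w = H * ((a z w * sst a z w + b z w * sst b z w) * a z w) := by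
  rw [d1_sst isOpen_ball conj_ball S.hb hz hw]
  simp only [sst]
  rw [S.db _ (conj_ball w hw) _ (conj_ball z hz)]
  simp only [gB, sst, map_mul, map_add, Complex.conj_conj, S.hH]
  ring

lemma az : HasDerivAt (fun s => a s w) (d1 a z w) z := S.ha.hasDerivAt1 isOpen_ball hz hw
lemma bz : HasDerivAt (fun s => b s w) (d1 b z w) z := S.hb.hasDerivAt1 isOpen_ball hz hw
lemma a'z : HasDerivAt (fun s => sst a s w)
    (-H * ((a z w * sst a z w + b z w * sst b z w) * b z w)) z := by
  rw [← S.d1a' hz hw]; exact S.ha'.hasDerivAt1 isOpen_ball hz hw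
lemma b'z : HasDerivAt (fun s => sst b s w)
    (H * ((a z w * sst a z w + b z w * sst b z w) * a z w)) z := by
  rw [← S.d1b' hz hw]; exact S.hb'.hasDerivAt1 isOpen_ball hz hw
lemma aw : HasDerivAt (fun s => a z s)
    (-H * ((a z w * sst a z w + b z w * sst b z w) * sst b z w)) w := by
  convert S.ha.hasDerivAt2 isOpen_ball hz hw using 1
  rw [S.da z hz w hw, gA]; ring
lemma bw : HasDerivAt (fun s => b z s)
    (H * ((a z w * sst a z w + b z w * sst b z w) * sst a z w)) w := by
  convert S.hb.hasDerivAt2 isOpen_ball hz hw using 1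
  rw [S.db z hz w hw, gB]; ring

omit hw hz
lemma hg1 : SepHol (ball (x : ℂ) r) (fun z w => sst a z w * sst b z w) := S.ha'.mul S.hb'
lemma hg2 : SepHol (ball (x : ℂ) r) (fun z w => sst b z w * sst b z w) := S.hb'.mul S.hb'
lemma hg3 : SepHol (ball (x : ℂ) r) (fun z w => sst a z w * sst a z w) := S.ha'.mul S.ha'
include hz hw

lemma d1A1 : d1 (Iop (fun z w => sst a z w * sst b z w)) z w = a z w * b z w := by
  refine Iop_d1 S.hg1 (S.ha.mul S.hb) ?_ ?_ hz hw
  · intro z hz w hw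
    refine ((S.aw hz hw).mul (S.bw hz hw)).deriv.trans
      (Eq.trans ?_ ((S.a'z hz hw).mul (S.b'z hz hw)).deriv.symm)
    ring
  · intro z hz
    rw [S.adiag, S.bdiag, S.adiag' hz, S.bdiag' hz]; ring

lemma d1A2 : d1 (Iop (fun z w => sst b z w * sst b z w)) z w = 1 + (-1) * (a z w * a z w) := by
  refine Iop_d1 (k := fun z w => 1 + (-1) * (a z w * a z w)) S.hg2
    ((SepHol.const 1).add ((SepHol.const (-1)).mul (S.ha.mul S.ha))) ?_ ?_ hz hw
  · intro z hz w hw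
    refine ((((S.aw hz hw).mul (S.aw hz hw)).const_mul (-1)).const_add 1).deriv.trans
      (Eq.trans ?_ ((S.b'z hz hw).mul (S.b'z hz hw)).deriv.symm)
    ring
  · intro z hz
    rw [S.adiag, S.bdiag' hz]
    linear_combination (-Complex.sin_sq_add_cos_sq (θ z / 2))
      + Complex.sin (θ z / 2)^2 * Complex.I_sq

lemma d1A3 : d1 (Iop (fun z w => sst a z w * sst a z w)) z w = -1 + (-1) * (b z w * b z w) := by
  refine Iop_d1 (k := fun z w => -1 + (-1) * (b z w * b z w)) S.hg3
    ((SepHol.const (-1)).add ((SepHol.const (-1)).mul (S.hb.mul S.hb))) ?_ ?_ hz hw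
  · intro z hz w hw
    refine ((((S.bw hz hw).mul (S.bw hz hw)).const_mul (-1)).const_add (-1)).deriv.trans
      (Eq.trans ?_ ((S.a'z hz hw).mul (S.a'z hz hw)).deriv.symm)
    ring
  · intro z hz
    rw [S.bdiag, S.adiag' hz]
    linear_combination (Complex.sin_sq_add_cos_sq (θ z / 2))
      - Complex.sin (θ z / 2)^2 * Complex.I_sq

lemma real1 : sst (Iop (fun z w => sst a z w * sst b z w)) z w
    = Iop (fun z w => sst a z w * sst b z w) z w := by
  have hI := S.hg1.Iop
  have key := eq_of_d2_zero (g := fun w => sst (Iop (fun z w => sst a z w * sst b z w)) z w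
    - Iop (fun z w => sst a z w * sst b z w) z w) (c := x) (r := r) (fun s hs => by
    have a1 := (hI.sst isOpen_ball conj_ball).hasDerivAt2 isOpen_ball hz hs
    rw [d2_sst isOpen_ball conj_ball hI hz hs] at a1
    have a2 := a1.sub (Iop_hasDerivAt S.hg1 hz hs)
    refine a2.congr_deriv ?_
    have := S.d1A1 (conj_ball s hs) (conj_ball z hz)
    have e : sst (d1 (Iop (fun z w => sst a z w * sst b z w))) z s
      = conj (d1 (Iop (fun z w => sst a z w * sst b z w)) (conj s) (conj z)) := rfl
    rw [e, this]
    simp [sst]) hz hw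
  have e : sst (Iop (fun z w => sst a z w * sst b z w)) z z = 0 := by
    simp [sst, Iop_self]
  simp only [e, Iop_self, sub_zero] at key
  linear_combination key

lemma real2 : Iop (fun z w => sst b z w * sst b z w) z w
    + sst (Iop (fun z w => sst a z w * sst a z w)) z w = z - w := by
  have hI := S.hg3.Iop
  have key := eq_of_d2_zero (g := fun w => Iop (fun z w => sst b z w * sst b z w) z w
    + sst (Iop (fun z w => sst a z w * sst a z w)) z w + w) (c := x) (r := r) (fun s hs => by
    have a1 := (hI.sst isOpen_ball conj_ball).hasDerivAt2 isOpen_ball hz hs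
    rw [d2_sst isOpen_ball conj_ball hI hz hs] at a1
    have a2 := ((Iop_hasDerivAt S.hg2 hz hs).add a1).add (hasDerivAt_id s)
    refine a2.congr_deriv ?_
    have := S.d1A3 (conj_ball s hs) (conj_ball z hz)
    have e : sst (d1 (Iop (fun z w => sst a z w * sst a z w))) z s
      = conj (d1 (Iop (fun z w => sst a z w * sst a z w)) (conj s) (conj z)) := rfl
    rw [e, this]
    simp [sst]) hz hw
  have e : sst (Iop (fun z w => sst a z w * sst a z w)) z z = 0 := by
    simp [sst, Iop_self]
  simp only [e, Iop_self] at key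
  linear_combination key

lemma Wconst : a z w * d1 b z w - b z w * d1 a z w = -I * deriv θ z / 2 - H := by
  have key := eq_of_d2_zero (g := fun w => a z w * d1 b z w - b z w * d1 a z w)
    (c := x) (r := r) (fun s hs => by
    have a1 := (S.ha.d1 isOpen_ball).hasDerivAt2 isOpen_ball hz hs
    have b1 := (S.hb.d1 isOpen_ball).hasDerivAt2 isOpen_ball hz hs
    have rz := ((S.az hz hs).mul (S.a'z hz hs)).add ((S.bz hz hs).mul (S.b'z hz hs))
    have ea := by
      refine Eq.trans (d1_congr (u := d2 a) (v := fun z w => -H * ((a z w * sst a z w + b z w * sst b z w) * sst b z w))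
        isOpen_ball (fun z hz w hw => ?_) hz hs)
        ((rz.mul (S.b'z hz hs)).const_mul (-H)).deriv
      rw [S.da z hz w hw, gA]; ring
    have eb := by
      refine Eq.trans (d1_congr (u := d2 b) (v := fun z w => H * ((a z w * sst a z w + b z w * sst b z w) * sst a z w))
        isOpen_ball (fun z hz w hw => ?_) hz hs)
        ((rz.mul (S.a'z hz hs)).const_mul H).deriv
      rw [S.db z hz w hw, gB]; ring
    rw [← S.ha.d1_d2 isOpen_ball hz hs, ea] at a1
    rw [← S.hb.d1_d2 isOpen_ball hz hs, eb] at b1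
    refine (((S.aw hz hs).mul b1).sub ((S.bw hz hs).mul a1)).congr_deriv ?_
    simp only [Pi.mul_apply, Pi.add_apply]
    ring) hz hw
  have ht : HasDerivAt θ (deriv θ z) z :=
    (S.hθ.differentiableAt (isOpen_ball.mem_nhds hz)).hasDerivAt
  have h1 := hasDerivAt_diag isOpen_ball S.ha hz
  have h2 := hasDerivAt_diag isOpen_ball S.hb hz
  simp only [S.adiag] at h1
  simp only [S.bdiag] at h2
  have h3 := h1.unique (ht.div_const 2).ccos
  have h4 := h2.unique ((ht.div_const 2).csin.const_mul (-I))
  rw [S.da z hz z hz, gA, S.adiag, S.bdiag, S.adiag' hz, S.bdiag' hz] at h3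
  rw [S.db z hz z hz, gB, S.adiag, S.bdiag, S.adiag' hz, S.bdiag' hz] at h4
  have hsc := Complex.sin_sq_add_cos_sq (θ z / 2)
  refine key.trans ?_
  simp only [S.adiag, S.bdiag]
  rw [← eq_sub_iff_add_eq] at h3 h4
  rw [h3, h4]
  set s := Complex.sin (θ z / 2)
  set c := Complex.cos (θ z / 2)
  have hs : s^2 = 1 - c^2 := by linear_combination hsc
  ring_nf
  simp only [Complex.I_sq, Complex.I_pow_four, show s^4 = (s^2)^2 by ring, hs]
  ring
end Sol
end SolSection

section RepSection
open Set Filter Topology Metric ComplexConjugate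

def Lw (p q : ℂ) : ℂ →L[ℝ] ℂ :=
  p • (ContinuousLinearMap.id ℝ ℂ) + q • (Complex.conjCLE : ℂ →L[ℝ] ℂ)

lemma Lw_one (p q : ℂ) : Lw p q 1 = p + q := by simp [Lw]
lemma Lw_I (p q : ℂ) : Lw p q Complex.I = Complex.I * (p + (-1) * q) := by
  simp [Lw]; ring

lemma SepHol.hasFDerivAt_conj {D : Set ℂ} (hD : IsOpen D) (hDc : ∀ z ∈ D, conj z ∈ D)
    {u : ℂ → ℂ → ℂ} (hu : SepHol D u) {z : ℂ} (hz : z ∈ D) :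
    HasFDerivAt (fun s => u s (conj s)) (Lw (_root_.d1 u z (conj z)) (_root_.d2 u z (conj z))) z := by
  have h1 := ((hu.hasStrictFDerivAt hD (p := (z, conj z)) ⟨hz, hDc z hz⟩).hasFDerivAt).restrictScalars ℝ
  have h2 : HasFDerivAt (𝕜 := ℝ) (fun s : ℂ => (s, conj s))
    ((ContinuousLinearMap.id ℝ ℂ).prod (Complex.conjCLE : ℂ →L[ℝ] ℂ)) z :=
    (hasFDerivAt_id z).prodMk (Complex.conjCLE : ℂ →L[ℝ] ℂ).hasFDerivAt
  have h3 := HasFDerivAt.comp (f := fun s : ℂ => (s, conj s)) z h1 h2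
  have h4 : HasFDerivAt (fun s => u s (conj s)) _ z := h3
  refine h4.congr_fderiv ?_
  ext
  simp [Lw]

lemma SepHol.contDiffOn_conj {D : Set ℂ} (hD : IsOpen D) (hDc : ∀ z ∈ D, conj z ∈ D)
    {u : ℂ → ℂ → ℂ} (hu : SepHol D u) :
    ContDiffOn ℝ (⊤ : ℕ∞) (fun s => u s (conj s)) D := by
  have h1 := (hu.contDiffOn hD).restrict_scalars ℝ
  have h2 : ContDiff ℝ (⊤ : ℕ∞) (fun s : ℂ => (s, conj s)) :=
    contDiff_id.prodMk (Complex.conjCLE : ℂ →L[ℝ] ℂ).contDiff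
  exact h1.comp (f := fun s : ℂ => (s, conj s)) h2.contDiffOn (fun s hs => ⟨hs, hDc s hs⟩)

lemma mat_decomp (a b c d : ℂ) : (!![a, b; c, d] : M2) = a • (!![1, 0; 0, 0] : M2)
    + b • (!![0, 1; 0, 0] : M2) + c • (!![0, 0; 1, 0] : M2) + d • (!![0, 0; 0, 1] : M2) := by
  ext i j; fin_cases i <;> fin_cases j <;> simp

lemma mat_fderiv {u1 u2 u3 u4 : ℂ → ℂ} {L1 L2 L3 L4 : ℂ →L[ℝ] ℂ} {z : ℂ}
    (h1 : HasFDerivAt u1 L1 z) (h2 : HasFDerivAt u2 L2 z) (h3 : HasFDerivAt u3 L3 z)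
    (h4 : HasFDerivAt u4 L4 z) {f : ℂ → M2}
    (hf : ∀ᶠ s in 𝓝 z, f s = !![u1 s, u2 s; u3 s, u4 s]) (v : ℂ) :
    fderiv ℝ f z v = !![L1 v, L2 v; L3 v, L4 v] := by
  have e : (fun s => (!![u1 s, u2 s; u3 s, u4 s] : M2)) = fun s => u1 s • (!![1, 0; 0, 0] : M2)
    + u2 s • (!![0, 1; 0, 0] : M2) + u3 s • (!![0, 0; 1, 0] : M2)
    + u4 s • (!![0, 0; 0, 1] : M2) := funext fun s => mat_decomp _ _ _ _
  have h := (((h1.smul_const (!![1, 0; 0, 0] : M2)).add (h2.smul_const (!![0, 1; 0, 0] : M2))).add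
      (h3.smul_const (!![0, 0; 1, 0] : M2))).add (h4.smul_const (!![0, 0; 0, 1] : M2))
  have hf' : f =ᶠ[𝓝 z] (fun s => u1 s • (!![1, 0; 0, 0] : M2)
    + u2 s • (!![0, 1; 0, 0] : M2) + u3 s • (!![0, 0; 1, 0] : M2)
    + u4 s • (!![0, 0; 0, 1] : M2)) := by
    rw [← e]; exact hf
  refine (DFunLike.congr_fun (h.congr_of_eventuallyEq hf').fderiv v).trans ?_
  exact (mat_decomp (L1 v) (L2 v) (L3 v) (L4 v)).symm

lemma mat_contDiffOn {u1 u2 u3 u4 : ℂ → ℂ} {D : Set ℂ}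
    (h1 : ContDiffOn ℝ (⊤ : ℕ∞) u1 D) (h2 : ContDiffOn ℝ (⊤ : ℕ∞) u2 D)
    (h3 : ContDiffOn ℝ (⊤ : ℕ∞) u3 D) (h4 : ContDiffOn ℝ (⊤ : ℕ∞) u4 D) :
    ContDiffOn ℝ (⊤ : ℕ∞) (fun s => (!![u1 s, u2 s; u3 s, u4 s] : M2)) D := by
  have e : (fun s => (!![u1 s, u2 s; u3 s, u4 s] : M2)) = fun s => u1 s • (!![1, 0; 0, 0] : M2)
    + u2 s • (!![0, 1; 0, 0] : M2) + u3 s • (!![0, 0; 1, 0] : M2)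
    + u4 s • (!![0, 0; 0, 1] : M2) := funext fun s => mat_decomp _ _ _ _
  rw [e]
  exact (((h1.smul contDiffOn_const).add (h2.smul contDiffOn_const)).add
      (h3.smul contDiffOn_const)).add (h4.smul contDiffOn_const)

/-- `f` is the restriction to the anti-diagonal of a holomorphic matrix. -/
structure MRep (D : Set ℂ) (f : ℂ → M2) (u1 u2 u3 u4 : ℂ → ℂ → ℂ) : Prop where
  hD : IsOpen D
  hDc : ∀ z ∈ D, conj z ∈ D
  h1 : SepHol D u1
  h2 : SepHol D u2
  h3 : SepHol D u3
  h4 : SepHol D u4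
  hf : ∀ z ∈ D, f z = !![u1 z (conj z), u2 z (conj z); u3 z (conj z), u4 z (conj z)]

def dX (u : ℂ → ℂ → ℂ) (z w : ℂ) : ℂ := d1 u z w + d2 u z w
def dY (u : ℂ → ℂ → ℂ) (z w : ℂ) : ℂ := Complex.I * (d1 u z w + (-1) * d2 u z w)

lemma SepHol.dX {D : Set ℂ} (hD : IsOpen D) {u : ℂ → ℂ → ℂ} (h : SepHol D u) :
    SepHol D (dX u) := (h.d1 hD).add (h.d2 hD)
lemma SepHol.dY {D : Set ℂ} (hD : IsOpen D) {u : ℂ → ℂ → ℂ} (h : SepHol D u) :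
    SepHol D (dY u) := (SepHol.const _).mul ((h.d1 hD).add ((SepHol.const _).mul (h.d2 hD)))

lemma lap_scalar {D : Set ℂ} (hD : IsOpen D) {u : ℂ → ℂ → ℂ} (h : SepHol D u) {z w : ℂ}
    (hz : z ∈ D) (hw : w ∈ D) : dX (dX u) z w + dY (dY u) z w = 4 * d1 (d2 u) z w := by
  have a1 := (h.d1 hD).hasDerivAt1 hD hz hw
  have a2 := (h.d2 hD).hasDerivAt1 hD hz hw
  have b1 := (h.d1 hD).hasDerivAt2 hD hz hw
  have b2 := (h.d2 hD).hasDerivAt2 hD hz hw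
  have e1 : d1 (dX u) z w = _ := (a1.add a2).deriv
  have e2 : d2 (dX u) z w = _ := (b1.add b2).deriv
  have e3 : d1 (dY u) z w = _ := ((a1.add (a2.const_mul (-1))).const_mul Complex.I).deriv
  have e4 : d2 (dY u) z w = _ := ((b1.add (b2.const_mul (-1))).const_mul Complex.I).deriv
  have e5 := h.d1_d2 hD hz hw
  rw [dX, dY, e1, e2, e3, e4, ← e5]
  linear_combination (d1 (d1 u) z w - 2 * d1 (d2 u) z w + d2 (d2 u) z w) * Complex.I_sq

namespace MRep
variable {D : Set ℂ} {f : ℂ → M2} {u1 u2 u3 u4 : ℂ → ℂ → ℂ} (R : MRep D f u1 u2 u3 u4)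
include R

lemma fd {z : ℂ} (hz : z ∈ D) (v : ℂ) : fderiv ℝ f z v =
    !![Lw (d1 u1 z (conj z)) (d2 u1 z (conj z)) v, Lw (d1 u2 z (conj z)) (d2 u2 z (conj z)) v;
      Lw (d1 u3 z (conj z)) (d2 u3 z (conj z)) v, Lw (d1 u4 z (conj z)) (d2 u4 z (conj z)) v] :=
  mat_fderiv (R.h1.hasFDerivAt_conj R.hD R.hDc hz) (R.h2.hasFDerivAt_conj R.hD R.hDc hz)
    (R.h3.hasFDerivAt_conj R.hD R.hDc hz) (R.h4.hasFDerivAt_conj R.hD R.hDc hz)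
    (by filter_upwards [R.hD.mem_nhds hz] with s hs; exact R.hf s hs) v

lemma px : MRep D (px f) (dX u1) (dX u2) (dX u3) (dX u4) :=
  ⟨R.hD, R.hDc, R.h1.dX R.hD, R.h2.dX R.hD, R.h3.dX R.hD, R.h4.dX R.hD, fun z hz => by
    rw [_root_.px, R.fd hz]; simp only [Lw_one, dX]⟩

lemma py : MRep D (py f) (dY u1) (dY u2) (dY u3) (dY u4) :=
  ⟨R.hD, R.hDc, R.h1.dY R.hD, R.h2.dY R.hD, R.h3.dY R.hD, R.h4.dY R.hD, fun z hz => by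
    rw [_root_.py, R.fd hz]; simp only [Lw_I, dY]⟩

lemma dz : MRep D (dz f) (d1 u1) (d1 u2) (d1 u3) (d1 u4) :=
  ⟨R.hD, R.hDc, R.h1.d1 R.hD, R.h2.d1 R.hD, R.h3.d1 R.hD, R.h4.d1 R.hD, fun z hz => by
    have key : ∀ p q : ℂ, (2:ℂ)⁻¹ * (p + q - Complex.I * (Complex.I * (p + (-1) * q))) = p := by
      intro p q
      linear_combination (- (2:ℂ)⁻¹ * (p - q)) * Complex.I_sq
    rw [_root_.dz, R.px.hf z hz, R.py.hf z hz]
    ext i j; fin_cases i <;> fin_cases j <;> simp [dX, dY] <;>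
      simpa using key _ _⟩

lemma lap {z : ℂ} (hz : z ∈ D) : _root_.px (_root_.px f) z + _root_.py (_root_.py f) z =
    (4:ℂ) • (!![d1 (d2 u1) z (conj z), d1 (d2 u2) z (conj z);
      d1 (d2 u3) z (conj z), d1 (d2 u4) z (conj z)] : M2) := by
  rw [R.px.px.hf z hz, R.py.py.hf z hz]
  have := R.hDc z hz
  ext i j; fin_cases i <;> fin_cases j <;> simp
  · exact lap_scalar R.hD R.h1 hz this
  · exact lap_scalar R.hD R.h2 hz this
  · exact lap_scalar R.hD R.h3 hz this
  · exact lap_scalar R.hD R.h4 hz this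

lemma contDiffOn : ContDiffOn ℝ (⊤ : ℕ∞) f D :=
  (mat_contDiffOn (R.h1.contDiffOn_conj R.hD R.hDc) (R.h2.contDiffOn_conj R.hD R.hDc)
    (R.h3.contDiffOn_conj R.hD R.hDc) (R.h4.contDiffOn_conj R.hD R.hDc)).congr R.hf
end MRep
end RepSection

section AlgSection
open Set Filter Topology Metric ComplexConjugate

def frm (s a b : ℂ) : M2 := !![s * a, -(s * conj b); s * b, s * conj a]

variable {a b s ρ : ℂ}

lemma frm_unit (hs : conj s = s) (hρ : ρ = a * conj a + b * conj b) (h : s * s * ρ = 1) :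
    (frm s a b)ᴴ * frm s a b = 1 := by
  subst hρ
  ext i j; fin_cases i <;> fin_cases j <;>
    simp [frm, Matrix.mul_apply, Fin.sum_univ_two, hs] <;>
    first | ring1 | linear_combination h

lemma frm_det (hρ : ρ = a * conj a + b * conj b) (h : s * s * ρ = 1) :
    (frm s a b).det = 1 := by
  subst hρ
  simp [frm, Matrix.det_fin_two]; linear_combination h

lemma frm_inv (hs : conj s = s) (hρ : ρ = a * conj a + b * conj b) (h : s * s * ρ = 1) :
    (frm s a b)⁻¹ = !![s * conj a, s * conj b; -(s * b), s * a] := by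
  rw [Matrix.inv_eq_left_inv (frm_unit hs hρ h)]
  ext i j; fin_cases i <;> fin_cases j <;> simp [frm, hs]

variable {t : ℂ}

lemma frm_e1 (hs : conj s = s) (hρ : ρ = a * conj a + b * conj b) (h : s * s * ρ = 1)
    (ht : s * s = 2 * t) :
    frm s a b * e1 * (frm s a b)⁻¹ = t •
      !![2 * Complex.I * (a * b + conj a * conj b), 2 * Complex.I * (-(a * a) + conj b * conj b);
        2 * Complex.I * (b * b - conj a * conj a), -(2 * Complex.I * (a * b + conj a * conj b))] := by
  rw [frm_inv hs hρ h]
  ext i j; fin_cases i <;> fin_cases j <;>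
    simp [frm, e1, Matrix.mul_apply, Fin.sum_univ_two]
  · linear_combination (Complex.I * (a * b + conj a * conj b)) * ht
  · linear_combination (Complex.I * (-(a * a) + conj b * conj b)) * ht
  · linear_combination (Complex.I * (b * b - conj a * conj a)) * ht
  · linear_combination (-Complex.I * (a * b + conj a * conj b)) * ht

lemma frm_e2 (hs : conj s = s) (hρ : ρ = a * conj a + b * conj b) (h : s * s * ρ = 1)
    (ht : s * s = 2 * t) :
    frm s a b * e2 * (frm s a b)⁻¹ = t •
      !![2 * (-(a * b) + conj a * conj b), 2 * (a * a + conj b * conj b);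
        2 * (-(b * b) - conj a * conj a), 2 * (a * b - conj a * conj b)] := by
  rw [frm_inv hs hρ h]
  ext i j; fin_cases i <;> fin_cases j <;>
    simp [frm, e2, Matrix.mul_apply, Fin.sum_univ_two]
  · linear_combination ((-(a * b) + conj a * conj b)) * ht
  · linear_combination ((a * a + conj b * conj b)) * ht
  · linear_combination ((-(b * b) - conj a * conj a)) * ht
  · linear_combination ((a * b - conj a * conj b)) * ht

lemma frm_e3 (hs : conj s = s) (hρ : ρ = a * conj a + b * conj b) (h : s * s * ρ = 1) :
    frm s a b * e3 * (frm s a b)⁻¹ = (s * s * Complex.I) •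
      !![a * conj a - b * conj b, 2 * a * conj b;
        2 * b * conj a, b * conj b - a * conj a] := by
  rw [frm_inv hs hρ h]
  ext i j; fin_cases i <;> fin_cases j <;>
    simp [frm, e3, Matrix.mul_apply, Fin.sum_univ_two] <;> ring

lemma ip_xx (hρ : ρ = a * conj a + b * conj b) :
    ip !![2 * Complex.I * (a * b + conj a * conj b), 2 * Complex.I * (-(a * a) + conj b * conj b);
        2 * Complex.I * (b * b - conj a * conj a), -(2 * Complex.I * (a * b + conj a * conj b))]
      !![2 * Complex.I * (a * b + conj a * conj b), 2 * Complex.I * (-(a * a) + conj b * conj b);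
        2 * Complex.I * (b * b - conj a * conj a), -(2 * Complex.I * (a * b + conj a * conj b))]
      = 4 * (ρ * ρ) := by
  subst hρ
  simp [ip, Matrix.trace, Fin.sum_univ_two]
  ring_nf
  simp only [Complex.I_sq]
  ring

lemma ip_yy (hρ : ρ = a * conj a + b * conj b) :
    ip !![2 * (-(a * b) + conj a * conj b), 2 * (a * a + conj b * conj b);
        2 * (-(b * b) - conj a * conj a), 2 * (a * b - conj a * conj b)]
      !![2 * (-(a * b) + conj a * conj b), 2 * (a * a + conj b * conj b);
        2 * (-(b * b) - conj a * conj a), 2 * (a * b - conj a * conj b)]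
      = 4 * (ρ * ρ) := by
  subst hρ
  simp [ip, Matrix.trace, Fin.sum_univ_two]
  ring

lemma ip_xy :
    ip !![2 * Complex.I * (a * b + conj a * conj b), 2 * Complex.I * (-(a * a) + conj b * conj b);
        2 * Complex.I * (b * b - conj a * conj a), -(2 * Complex.I * (a * b + conj a * conj b))]
      !![2 * (-(a * b) + conj a * conj b), 2 * (a * a + conj b * conj b);
        2 * (-(b * b) - conj a * conj a), 2 * (a * b - conj a * conj b)]
      = 0 := by
  simp [ip, Matrix.trace, Fin.sum_univ_two]
  ring

lemma ip_lap (hρ : ρ = a * conj a + b * conj b) (h : s * s * ρ = 1) (H : ℂ) :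
    ip ((4 : ℂ) • !![2 * Complex.I * (H * ρ * (a * conj a - b * conj b)),
        4 * Complex.I * (H * ρ * (a * conj b));
        4 * Complex.I * (H * ρ * (b * conj a)),
        -(2 * Complex.I * (H * ρ * (a * conj a - b * conj b)))])
      ((s * s * Complex.I) • !![a * conj a - b * conj b, 2 * a * conj b;
        2 * b * conj a, b * conj b - a * conj a]) = 8 * (ρ * ρ) * H := by
  have : 8 * (ρ * ρ) * H = 8 * (ρ * ρ) * H * (s * s * ρ) := by rw [h, mul_one]
  rw [this]
  simp [ip, Matrix.trace, Fin.sum_univ_two]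
  rw [hρ]
  ring_nf
  simp only [Complex.I_sq]
  ring

lemma ip_hopf (hρ : ρ = a * conj a + b * conj b) (h : s * s * ρ = 1) (az bz : ℂ) :
    ip ((s * s * Complex.I) • !![a * conj a - b * conj b, 2 * a * conj b;
        2 * b * conj a, b * conj b - a * conj a])
      !![2 * Complex.I * (az * b + a * bz), -(4 * Complex.I * (a * az));
        4 * Complex.I * (b * bz), -(2 * Complex.I * (az * b + a * bz))]
      = 2 * (a * bz - b * az) := by
  have : 2 * (a * bz - b * az) = 2 * (a * bz - b * az) * (s * s * ρ) := by rw [h, mul_one]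
  rw [this]
  simp [ip, Matrix.trace, Fin.sum_univ_two]
  rw [hρ]
  ring_nf
  simp only [Complex.I_sq]
  ring
end AlgSection

section SurfSection
open Set Filter Topology Metric ComplexConjugate

def U1 (a b : ℂ → ℂ → ℂ) (z w : ℂ) : ℂ :=
  (2 * Complex.I) * Iop (fun z w => sst a z w * sst b z w) z w
def U2 (b : ℂ → ℂ → ℂ) (z w : ℂ) : ℂ :=
  (-2 * Complex.I) * z + (2 * Complex.I) * Iop (fun z w => sst b z w * sst b z w) z w
def U3 (a : ℂ → ℂ → ℂ) (z w : ℂ) : ℂ :=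
  (-2 * Complex.I) * z + (-2 * Complex.I) * Iop (fun z w => sst a z w * sst a z w) z w
def U4 (a b : ℂ → ℂ → ℂ) (z w : ℂ) : ℂ :=
  (-2 * Complex.I) * Iop (fun z w => sst a z w * sst b z w) z w

def surf (a b : ℂ → ℂ → ℂ) (z : ℂ) : M2 :=
  !![U1 a b z (conj z), U2 b z (conj z); U3 a z (conj z), U4 a b z (conj z)]

lemma sst_conj (a : ℂ → ℂ → ℂ) (z : ℂ) : sst a z (conj z) = conj (a z (conj z)) := by
  simp [sst]

namespace Sol
variable {x r : ℝ} {H : ℂ} {θ : ℂ → ℂ} {a b : ℂ → ℂ → ℂ} (S : Sol x r H θ a b)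
  {z w : ℂ} (hz : z ∈ ball (x : ℂ) r) (hw : w ∈ ball (x : ℂ) r)
include S

lemma hU1 : SepHol (ball (x : ℂ) r) (U1 a b) := (SepHol.const _).mul S.hg1.Iop
lemma hU4 : SepHol (ball (x : ℂ) r) (U4 a b) := (SepHol.const _).mul S.hg1.Iop
lemma hU2 : SepHol (ball (x : ℂ) r) (U2 b) :=
  ((SepHol.const _).mul (SepHol.of_fst differentiableOn_id)).add ((SepHol.const _).mul S.hg2.Iop)
lemma hU3 : SepHol (ball (x : ℂ) r) (U3 a) :=
  ((SepHol.const _).mul (SepHol.of_fst differentiableOn_id)).add ((SepHol.const _).mul S.hg3.Iop)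

lemma rep : MRep (ball (x : ℂ) r) (surf a b) (U1 a b) (U2 b) (U3 a) (U4 a b) :=
  ⟨isOpen_ball, conj_ball, S.hU1, S.hU2, S.hU3, S.hU4, fun _ _ => rfl⟩

include hz hw
lemma d1U1 : d1 (U1 a b) z w = (2 * Complex.I) * (a z w * b z w) := by
  rw [← S.d1A1 hz hw]
  exact ((S.hg1.Iop.hasDerivAt1 isOpen_ball hz hw).const_mul _).deriv
lemma d1U4 : d1 (U4 a b) z w = (-2 * Complex.I) * (a z w * b z w) := by
  rw [← S.d1A1 hz hw]
  exact ((S.hg1.Iop.hasDerivAt1 isOpen_ball hz hw).const_mul _).deriv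
lemma d1U2 : d1 (U2 b) z w = (-2 * Complex.I) * (a z w * a z w) := by
  have h := (S.hg2.Iop.hasDerivAt1 isOpen_ball hz hw)
  rw [S.d1A2 hz hw] at h
  refine (((hasDerivAt_id z).const_mul (-2 * Complex.I)).add
    (h.const_mul (2 * Complex.I))).deriv.trans ?_
  ring
lemma d1U3 : d1 (U3 a) z w = (2 * Complex.I) * (b z w * b z w) := by
  have h := (S.hg3.Iop.hasDerivAt1 isOpen_ball hz hw)
  rw [S.d1A3 hz hw] at h
  refine (((hasDerivAt_id z).const_mul (-2 * Complex.I)).add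
    (h.const_mul (-2 * Complex.I))).deriv.trans ?_
  ring
lemma d2U1 : d2 (U1 a b) z w = (2 * Complex.I) * (sst a z w * sst b z w) :=
  ((Iop_hasDerivAt S.hg1 hz hw).const_mul _).deriv
lemma d2U4 : d2 (U4 a b) z w = (-2 * Complex.I) * (sst a z w * sst b z w) :=
  ((Iop_hasDerivAt S.hg1 hz hw).const_mul _).deriv
lemma d2U2 : d2 (U2 b) z w = (2 * Complex.I) * (sst b z w * sst b z w) :=
  (((Iop_hasDerivAt S.hg2 hz hw).const_mul _).const_add _).deriv
lemma d2U3 : d2 (U3 a) z w = (-2 * Complex.I) * (sst a z w * sst a z w) :=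
  (((Iop_hasDerivAt S.hg3 hz hw).const_mul _).const_add _).deriv

lemma d11U1 : d1 (d1 (U1 a b)) z w =
    2 * Complex.I * (d1 a z w * b z w + a z w * d1 b z w) :=
  (d1_congr isOpen_ball (fun _ h _ h' => S.d1U1 h h') hz hw).trans
    (((S.az hz hw).mul (S.bz hz hw)).const_mul _).deriv
lemma d11U4 : d1 (d1 (U4 a b)) z w =
    -(2 * Complex.I * (d1 a z w * b z w + a z w * d1 b z w)) :=
  (d1_congr isOpen_ball (fun _ h _ h' => S.d1U4 h h') hz hw).trans
    ((((S.az hz hw).mul (S.bz hz hw)).const_mul _).deriv.trans (by ring))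
lemma d11U2 : d1 (d1 (U2 b)) z w = -(4 * Complex.I * (a z w * d1 a z w)) :=
  (d1_congr isOpen_ball (fun _ h _ h' => S.d1U2 h h') hz hw).trans
    ((((S.az hz hw).mul (S.az hz hw)).const_mul _).deriv.trans (by ring))
lemma d11U3 : d1 (d1 (U3 a)) z w = 4 * Complex.I * (b z w * d1 b z w) :=
  (d1_congr isOpen_ball (fun _ h _ h' => S.d1U3 h h') hz hw).trans
    ((((S.bz hz hw).mul (S.bz hz hw)).const_mul _).deriv.trans (by ring))
lemma d12U1 : d1 (d2 (U1 a b)) z w = 2 * Complex.I * (H *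
    (a z w * sst a z w + b z w * sst b z w) * (a z w * sst a z w - b z w * sst b z w)) :=
  (d1_congr isOpen_ball (fun _ h _ h' => S.d2U1 h h') hz hw).trans
    ((((S.a'z hz hw).mul (S.b'z hz hw)).const_mul _).deriv.trans (by ring))
lemma d12U4 : d1 (d2 (U4 a b)) z w = -(2 * Complex.I * (H *
    (a z w * sst a z w + b z w * sst b z w) * (a z w * sst a z w - b z w * sst b z w))) :=
  (d1_congr isOpen_ball (fun _ h _ h' => S.d2U4 h h') hz hw).trans
    ((((S.a'z hz hw).mul (S.b'z hz hw)).const_mul _).deriv.trans (by ring))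
lemma d12U2 : d1 (d2 (U2 b)) z w = 4 * Complex.I * (H *
    (a z w * sst a z w + b z w * sst b z w) * (a z w * sst b z w)) :=
  (d1_congr isOpen_ball (fun _ h _ h' => S.d2U2 h h') hz hw).trans
    ((((S.b'z hz hw).mul (S.b'z hz hw)).const_mul _).deriv.trans (by ring))
lemma d12U3 : d1 (d2 (U3 a)) z w = 4 * Complex.I * (H *
    (a z w * sst a z w + b z w * sst b z w) * (b z w * sst a z w)) :=
  (d1_congr isOpen_ball (fun _ h _ h' => S.d2U3 h h') hz hw).trans
    ((((S.a'z hz hw).mul (S.a'z hz hw)).const_mul _).deriv.trans (by ring))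

omit hw

lemma surf_px {A B : ℂ} (hA : a z (conj z) = A) (hB : b z (conj z) = B) : px (surf a b) z =
    !![2 * Complex.I * (A * B + conj A * conj B), 2 * Complex.I * (-(A * A) + conj B * conj B);
        2 * Complex.I * (B * B - conj A * conj A), -(2 * Complex.I * (A * B + conj A * conj B))] := by
  have hw := conj_ball z hz
  subst hA hB
  rw [S.rep.px.hf z hz]
  simp only [dX, S.d1U1 hz hw, S.d1U2 hz hw, S.d1U3 hz hw, S.d1U4 hz hw,
    S.d2U1 hz hw, S.d2U2 hz hw, S.d2U3 hz hw, S.d2U4 hz hw, sst_conj]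
  ext i j; fin_cases i <;> fin_cases j <;> simp <;> ring

lemma surf_py {A B : ℂ} (hA : a z (conj z) = A) (hB : b z (conj z) = B) : py (surf a b) z =
    !![2 * (-(A * B) + conj A * conj B), 2 * (A * A + conj B * conj B);
        2 * (-(B * B) - conj A * conj A), 2 * (A * B - conj A * conj B)] := by
  have hw := conj_ball z hz
  subst hA hB
  rw [S.rep.py.hf z hz]
  simp only [dY, S.d1U1 hz hw, S.d1U2 hz hw, S.d1U3 hz hw, S.d1U4 hz hw,
    S.d2U1 hz hw, S.d2U2 hz hw, S.d2U3 hz hw, S.d2U4 hz hw, sst_conj]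
  ext i j; fin_cases i <;> fin_cases j <;> simp <;> ring_nf <;> simp only [Complex.I_sq] <;> ring

lemma surf_lap {A B : ℂ} (hA : a z (conj z) = A) (hB : b z (conj z) = B) {ρ : ℂ}
    (hρ : ρ = A * conj A + B * conj B) :
    px (px (surf a b)) z + py (py (surf a b)) z =
    (4 : ℂ) • !![2 * Complex.I * (H * ρ * (A * conj A - B * conj B)),
        4 * Complex.I * (H * ρ * (A * conj B));
        4 * Complex.I * (H * ρ * (B * conj A)),
        -(2 * Complex.I * (H * ρ * (A * conj A - B * conj B)))] := by
  have hw := conj_ball z hz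
  subst hA hB
  rw [S.rep.lap hz, hρ]
  simp only [S.d12U1 hz hw, S.d12U2 hz hw, S.d12U3 hz hw, S.d12U4 hz hw, sst_conj]

lemma surf_zz {A B : ℂ} (hA : a z (conj z) = A) (hB : b z (conj z) = B) :
    dz (dz (surf a b)) z =
    !![2 * Complex.I * (d1 a z (conj z) * B + A * d1 b z (conj z)),
      -(4 * Complex.I * (A * d1 a z (conj z)));
        4 * Complex.I * (B * d1 b z (conj z)),
        -(2 * Complex.I * (d1 a z (conj z) * B + A * d1 b z (conj z)))] := by
  have hw := conj_ball z hz
  subst hA hB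
  rw [S.rep.dz.dz.hf z hz]
  simp only [S.d11U1 hz hw, S.d11U2 hz hw, S.d11U3 hz hw, S.d11U4 hz hw]

lemma surf_su : (surf a b z)ᴴ = -(surf a b z) ∧ (surf a b z).trace = 0 := by
  have hw := conj_ball z hz
  have r1 := S.real1 hz hw
  have r2 := S.real2 hz hw
  rw [sst_conj] at r1 r2
  have r3 := congrArg conj r2
  simp only [map_add, map_sub, Complex.conj_conj] at r3
  constructor
  · ext i j; fin_cases i <;> fin_cases j <;> simp [surf, U1, U2, U3, U4]
    · exact r1
    · linear_combination (2 * Complex.I) * r2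
    · linear_combination (-2 * Complex.I) * r3
    · exact r1
  · simp [surf, U1, U4, Matrix.trace, Fin.sum_univ_two]
end Sol

lemma sol_exists {J : Set ℝ} (hJ : IsOpen J) {θ₀ : ℝ → ℝ} (hθ : AnalyticOnNhd ℝ θ₀ J) (H : ℝ) :
    ∃ θ : ℂ → ℂ, ∃ a b : ℂ → ℂ → ℂ, (∀ t ∈ J, θ t = (θ₀ t : ℂ)) ∧ ∀ x ∈ J, ∃ r : ℝ, 0 < r ∧
      Sol x r (H : ℂ) θ a b := by
  obtain ⟨θ, h1, h2⟩ := theta_ext hJ hθ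
  refine ⟨θ, solA H (fun z => Complex.cos (θ z / 2)) (fun z => -Complex.I * Complex.sin (θ z / 2)),
    solB H (fun z => Complex.cos (θ z / 2)) (fun z => -Complex.I * Complex.sin (θ z / 2)),
    h1, fun x hx => ?_⟩
  obtain ⟨r, hr, hd, -, hc⟩ := h2 x hx
  obtain ⟨s, hs, hsr, hsH, hsb⟩ := theta_shrink hr hd (by rw [h1 x hx]; simp) H
  have hsub : ball (x : ℂ) s ⊆ ball (x : ℂ) r := ball_subset_ball hsr
  have hd' := hd.mono hsub
  have p := picard_local (x := x) (r := s) (h := H) (φ := fun z => Complex.cos (θ z / 2))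
    (ψ := fun z => -Complex.I * Complex.sin (θ z / 2)) (hd'.div_const 2).ccos
    ((hd'.div_const 2).csin.const_mul _) (by rw [Complex.norm_real]; exact hsH)
    (fun z hz => (hsb z hz).1) (fun z hz => by simpa using (hsb z hz).2)
  exact ⟨s, hs, Complex.conj_ofReal H, p.1, p.2.1, p.2.2.1, p.2.2.2, fun z => (sol_diag z).1,
    fun z => (sol_diag z).2, hd', fun z hz => hc z (hsub hz)⟩
end SurfSection

/-- CMC surfaces containing a line segment (existence): given a real
analytic function `θ₀` on an open interval `J` with `θ₀(x₀) = 0` and `H ≠ 0`, there is a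
conformal CMC `H` immersion mapping `(x,0) ↦ (2x,0,0)`, whose normalized `y`-tangent
along the segment is `cos θ₀ · e₂ + sin θ₀ · e₃`, and with Hopf differential
coefficient `Q = -i θ̌_x - 2H`. -/
theorem cmc_containing_line_existence
    (J : Set ℝ) (hJo : IsOpen J) (hJc : J.OrdConnected)
    (x₀ : ℝ) (hx₀ : x₀ ∈ J)
    (θ₀ : ℝ → ℝ) (hθ₀ : AnalyticOnNhd ℝ θ₀ J) (hθ₀0 : θ₀ x₀ = 0)
    (H : ℝ) (hH : H ≠ 0) :
    ∃ S : Set ℂ, IsOpen S ∧ (∀ x ∈ J, (x : ℂ) ∈ S) ∧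
      ∃ θx : ℂ → ℂ, DifferentiableOn ℂ θx S ∧
        (∀ x ∈ J, θx (x : ℂ) = ((deriv θ₀ x : ℝ) : ℂ)) ∧
        ∃ f : ℂ → M2, ∃ u : ℂ → ℝ, ∃ F : ℂ → M2,
          ContDiffOn ℝ (⊤ : ℕ∞) f S ∧
          ContDiffOn ℝ (⊤ : ℕ∞) u S ∧
          ContDiffOn ℝ (⊤ : ℕ∞) F S ∧
          (∀ z ∈ S, (f z)ᴴ = -(f z) ∧ (f z).trace = 0) ∧
          (∀ z ∈ S,
            ip (px f z) (px f z) = ((4 * Real.exp (2 * u z) : ℝ) : ℂ) ∧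
            ip (py f z) (py f z) = ((4 * Real.exp (2 * u z) : ℝ) : ℂ) ∧
            ip (px f z) (py f z) = 0) ∧
          (∀ z ∈ S, (F z)ᴴ * F z = 1 ∧ (F z).det = 1 ∧
            F z * e1 * (F z)⁻¹ = (((2 * Real.exp (u z))⁻¹ : ℝ) : ℂ) • px f z ∧
            F z * e2 * (F z)⁻¹ = (((2 * Real.exp (u z))⁻¹ : ℝ) : ℂ) • py f z ∧
            ip (px (px f) z + py (py f) z) (F z * e3 * (F z)⁻¹)
              = ((8 * Real.exp (2 * u z) * H : ℝ) : ℂ)) ∧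
          (∀ x ∈ J, f (x : ℂ) = ((2 * x : ℝ) : ℂ) • e1) ∧
          (∀ x ∈ J, ∃ c : ℝ, 0 < c ∧ py f (x : ℂ) =
            (c : ℂ) • (((Real.cos (θ₀ x) : ℝ) : ℂ) • e2 + ((Real.sin (θ₀ x) : ℝ) : ℂ) • e3)) ∧
          (∀ z ∈ S, ip (F z * e3 * (F z)⁻¹) (dz (dz f) z)
            = -Complex.I * θx z - 2 * (H : ℂ)) := by
  open Set Topology Metric ComplexConjugate in
  obtain ⟨θ, a, b, hθJ, hloc⟩ := sol_exists hJo hθ₀ H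
  choose! r hr hS using hloc
  let ρ : ℂ → ℝ := fun z => ‖a z (conj z)‖ ^ 2 + ‖b z (conj z)‖ ^ 2
  have hρc : ∀ z, ((ρ z : ℝ) : ℂ) = a z (conj z) * conj (a z (conj z))
      + b z (conj z) * conj (b z (conj z)) := by
    intro z; simp only [ρ, Complex.mul_conj']; push_cast; rfl
  have hca : ∀ x ∈ J, ContDiffOn ℝ (⊤ : ℕ∞) (fun z => a z (conj z)) (ball (x : ℂ) (r x)) :=
    fun x hx => (hS x hx).ha.contDiffOn_conj isOpen_ball conj_ball
  have hcb : ∀ x ∈ J, ContDiffOn ℝ (⊤ : ℕ∞) (fun z => b z (conj z)) (ball (x : ℂ) (r x)) :=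
    fun x hx => (hS x hx).hb.contDiffOn_conj isOpen_ball conj_ball
  have hcρ : ∀ x ∈ J, ContDiffOn ℝ (⊤ : ℕ∞) ρ (ball (x : ℂ) (r x)) :=
    fun x hx => ((hca x hx).norm_sq ℝ).add ((hcb x hx).norm_sq ℝ)
  let S : Set ℂ := ⋃ x ∈ J, ball (x : ℂ) (r x) ∩ ρ ⁻¹' {0}ᶜ
  have hSm : ∀ z ∈ S, ∃ x ∈ J, z ∈ ball (x : ℂ) (r x) ∧ 0 < ρ z := by
    intro z hz
    obtain ⟨x, hx, h1, h2⟩ := mem_iUnion₂.1 hz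
    exact ⟨x, hx, h1, lt_of_le_of_ne (by simp only [ρ]; positivity) (Ne.symm h2)⟩
  have hρJ : ∀ x ∈ J, ρ x = 1 := by
    intro x hx
    have h := hρc x
    rw [Complex.conj_ofReal, (hS x hx).adiag, (hS x hx).bdiag, hθJ x hx] at h
    simp only [map_mul, map_neg, Complex.conj_I, ← Complex.cos_conj, ← Complex.sin_conj, map_div₀,
      Complex.conj_ofReal, Complex.conj_ofNat] at h
    have h2 := Complex.sin_sq_add_cos_sq ((θ₀ x : ℂ) / 2)
    have : ((ρ x : ℝ) : ℂ) = ((1 : ℝ) : ℂ) := by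
      rw [h, Complex.ofReal_one]
      linear_combination h2 - Complex.sin ((θ₀ x : ℂ) / 2) ^ 2 * Complex.I_sq
    exact_mod_cast this
  have hJS : ∀ x ∈ J, (x : ℂ) ∈ S := by
    intro x hx
    refine mem_iUnion₂.2 ⟨x, hx, mem_ball_self (hr x hx), ?_⟩
    change ρ x ≠ 0
    rw [hρJ x hx]; exact one_ne_zero
  let s : ℂ → ℝ := fun z => (Real.sqrt (ρ z))⁻¹
  have hs : ∀ z, conj (s z : ℂ) = s z := fun z => Complex.conj_ofReal _
  have hsρ : ∀ z, 0 < ρ z → (s z : ℂ) * s z * ρ z = 1 := by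
    intro z hz
    have : s z * s z * ρ z = 1 := by
      simp only [s]
      rw [← mul_inv, Real.mul_self_sqrt hz.le, inv_mul_cancel₀ hz.ne']
    exact_mod_cast this
  have hcs : ∀ z ∈ S, ContDiffAt ℝ (⊤ : ℕ∞) s z := by
    intro z hz
    obtain ⟨x, hx, hzx, hp⟩ := hSm z hz
    have h1 := (hcρ x hx).contDiffAt (isOpen_ball.mem_nhds hzx)
    exact (h1.sqrt hp.ne').inv (Real.sqrt_pos.2 hp).ne'
  have hexp : ∀ z, 0 < ρ z → Real.exp (Real.log (ρ z)) = ρ z := fun z hz => Real.exp_log hz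
  have hexp2 : ∀ z, 0 < ρ z → Real.exp (2 * Real.log (ρ z)) = ρ z * ρ z := fun z hz => by
    rw [two_mul, Real.exp_add, hexp z hz]
  have ht : ∀ z, 0 < ρ z → (s z : ℂ) * s z = 2 * (((2 * ρ z)⁻¹ : ℝ) : ℂ) := by
    intro z hz
    have : s z * s z = 2 * (2 * ρ z)⁻¹ := by
      simp only [s]
      rw [← mul_inv, Real.mul_self_sqrt hz.le]
      field_simp
    exact_mod_cast this
  refine ⟨S, ?_, hJS, deriv θ, ?_, ?_, surf a b, fun z => Real.log (ρ z),
    fun z => frm (s z) (a z (conj z)) (b z (conj z)), ?_, ?_, ?_, ?_, ?_, ?_, ?_, ?_, ?_⟩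
  · exact isOpen_biUnion fun x hx =>
      (hcρ x hx).continuousOn.isOpen_inter_preimage isOpen_ball isOpen_compl_singleton
  · intro z hz
    obtain ⟨x, hx, hzx, hp⟩ := hSm z hz
    exact (((hS x hx).hθ.deriv isOpen_ball).differentiableAt
      (isOpen_ball.mem_nhds hzx)).differentiableWithinAt
  · intro x hx
    have h1 : HasDerivAt θ (deriv θ x) x := ((hS x hx).hθ.differentiableAt
      (isOpen_ball.mem_nhds (mem_ball_self (hr x hx)))).hasDerivAt
    have h2 := h1.comp_ofReal
    have h3 := ((hθ₀ x hx).differentiableAt.hasDerivAt).ofReal_comp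
    refine h2.unique (h3.congr_of_eventuallyEq ?_)
    filter_upwards [hJo.mem_nhds hx] with t ht
    exact hθJ t ht
  · intro z hz
    obtain ⟨x, hx, hzx, hp⟩ := hSm z hz
    exact ((hS x hx).rep.contDiffOn.contDiffAt (isOpen_ball.mem_nhds hzx)).contDiffWithinAt
  · intro z hz
    obtain ⟨x, hx, hzx, hp⟩ := hSm z hz
    exact (((hcρ x hx).contDiffAt (isOpen_ball.mem_nhds hzx)).log hp.ne').contDiffWithinAt
  · have c1 : ContDiffOn ℝ (⊤ : ℕ∞) (fun z => a z (conj z)) S := by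
      intro z hz
      obtain ⟨x, hx, hzx, hp⟩ := hSm z hz
      exact ((hca x hx).contDiffAt (isOpen_ball.mem_nhds hzx)).contDiffWithinAt
    have c2 : ContDiffOn ℝ (⊤ : ℕ∞) (fun z => b z (conj z)) S := by
      intro z hz
      obtain ⟨x, hx, hzx, hp⟩ := hSm z hz
      exact ((hcb x hx).contDiffAt (isOpen_ball.mem_nhds hzx)).contDiffWithinAt
    have c3 : ContDiffOn ℝ (⊤ : ℕ∞) (fun z => (s z : ℂ)) S :=
      Complex.ofRealCLM.contDiff.comp_contDiffOn (fun z hz => (hcs z hz).contDiffWithinAt)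
    have c4 : ContDiffOn ℝ (⊤ : ℕ∞) (fun z => conj (a z (conj z))) S :=
      (Complex.conjCLE : ℂ →L[ℝ] ℂ).contDiff.comp_contDiffOn c1
    have c5 : ContDiffOn ℝ (⊤ : ℕ∞) (fun z => conj (b z (conj z))) S :=
      (Complex.conjCLE : ℂ →L[ℝ] ℂ).contDiff.comp_contDiffOn c2
    exact mat_contDiffOn (c3.mul c1) (c3.mul c5).neg (c3.mul c2) (c3.mul c4)
  · intro z hz
    obtain ⟨x, hx, hzx, hp⟩ := hSm z hz
    exact (hS x hx).surf_su hzx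
  · intro z hz
    obtain ⟨x, hx, hzx, hp⟩ := hSm z hz
    rw [(hS x hx).surf_px hzx rfl rfl, (hS x hx).surf_py hzx rfl rfl, ip_xx (hρc z),
      ip_yy (hρc z), ip_xy, hexp2 z hp]
    push_cast
    exact ⟨rfl, rfl, rfl⟩
  · intro z hz
    obtain ⟨x, hx, hzx, hp⟩ := hSm z hz
    simp only []
    rw [(hS x hx).surf_lap hzx rfl rfl (hρc z), (hS x hx).surf_px hzx rfl rfl,
      (hS x hx).surf_py hzx rfl rfl, frm_e1 (hs z) (hρc z) (hsρ z hp) (ht z hp),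
      frm_e2 (hs z) (hρc z) (hsρ z hp) (ht z hp), frm_e3 (hs z) (hρc z) (hsρ z hp),
      ip_lap (hρc z) (hsρ z hp), hexp2 z hp, hexp z hp]
    refine ⟨frm_unit (hs z) (hρc z) (hsρ z hp), frm_det (hρc z) (hsρ z hp), rfl, rfl, ?_⟩
    push_cast; rfl
  · intro x hx
    simp only [surf, U1, U2, U3, U4, Complex.conj_ofReal, Iop_self]
    ext i j; fin_cases i <;> fin_cases j <;> simp [e1] <;> ring
  · intro x hx
    refine ⟨2, two_pos, ?_⟩
    have e1 : a (x : ℂ) (conj (x : ℂ)) = Complex.cos ((θ₀ x : ℂ) / 2) := by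
      rw [Complex.conj_ofReal, (hS x hx).adiag, hθJ x hx]
    have e2 : b (x : ℂ) (conj (x : ℂ)) = -Complex.I * Complex.sin ((θ₀ x : ℂ) / 2) := by
      rw [Complex.conj_ofReal, (hS x hx).bdiag, hθJ x hx]
    rw [(hS x hx).surf_py (mem_ball_self (hr x hx)) e1 e2]
    have k1 : Complex.cos (θ₀ x : ℂ) = 2 * Complex.cos ((θ₀ x : ℂ) / 2) ^ 2 - 1 := by
      rw [← Complex.cos_two_mul]; congr 1; ring
    have k2 : Complex.sin (θ₀ x : ℂ)
        = 2 * Complex.sin ((θ₀ x : ℂ) / 2) * Complex.cos ((θ₀ x : ℂ) / 2) := by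
      rw [← Complex.sin_two_mul]; congr 1; ring
    have h2 := Complex.sin_sq_add_cos_sq ((θ₀ x : ℂ) / 2)
    simp only [map_mul, map_neg, Complex.conj_I, ← Complex.cos_conj, ← Complex.sin_conj, map_div₀,
      Complex.conj_ofReal, Complex.conj_ofNat, Complex.ofReal_cos, Complex.ofReal_sin, k1, k2]
    set S := Complex.sin ((θ₀ x : ℂ) / 2)
    set C := Complex.cos ((θ₀ x : ℂ) / 2)
    have hI := Complex.I_sq
    ext i j; fin_cases i <;> fin_cases j <;> simp [_root_.e2, e3]
    · ring
    · linear_combination (-1) * h2 + S ^ 2 * hI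
    · linear_combination h2 - S ^ 2 * hI
    · ring
  · intro z hz
    obtain ⟨x, hx, hzx, hp⟩ := hSm z hz
    simp only []
    rw [(hS x hx).surf_zz hzx rfl rfl, frm_e3 (hs z) (hρc z) (hsρ z hp),
      ip_hopf (hρc z) (hsρ z hp), (hS x hx).Wconst hzx (conj_ball z hzx)]
    ring
end
end
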